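/- arXiv:1508.04227 — 3 statements merged into one kernel-verified Lean document; each statement's English description precedes it below -/
import Mathlib

section
/- The tilted information density satisfies E[ ȷ_XY(X,Y) ] = R(r1*,r2*|P_XY), where the expectation is over (X,Y) ∼ P_XY. -/
/-!
Consider the Lagrangian `L(K) = I(W ∧ X,Y) + λ₁ (H(X|W) - r₁) + λ₂ (H(Y|W) - r₂)` and its relaxation
`F(K, Q)`, in which the output law and the two conditional laws are replaced by arbitrary ones `Q`.
For fixed `Q`, the Gibbs variational principle says that the minimum of `F(K, Q)` over channels `K` is
`E[Λ(X,Y)]`, attained at the normalised tilted channel; for fixed `K`, the minimum over `Q` is `L(K)`,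
attained at the laws induced by `K`. Let `Q*` be the laws induced by the optimal channel `K*`.

* Upper bound (`tilted_le`): `E[Λ] ≤ F(K*, Q*) = L(K*) ≤ R`, as `K*` satisfies both constraints.
* Lower bound (`exists_le_tilted`): with `L'` the tilted channel, `E[Λ] = F(L', Q*) ≥ L(L')`, and
  `L(L') ≥ R` because `(-λ₁, -λ₂)` is a subgradient of `R` at `(r₁, r₂)` (`subgradient`).

The subgradient property follows from the partial derivatives once `R` is convex. Convexity is time
sharing (`Feas.mix`), which enlarges the output alphabet; `FeasN.reduce` brings it back to at most
`|𝒳||𝒴| + 2` letters. The three information quantities are linear in the weights of the channel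
columns (`colI_smul`, `colH_smul`). With more than `|𝒳||𝒴| + 2` columns there is a nonzero change of
weights preserving the channel condition and both conditional entropies, and moving along it in the
direction where the mutual information does not increase makes a weight vanish. As the mutual
information is optimised and not preserved, it costs no further letter.
-/

open Finset Filter MeasureTheory

attribute [local instance] Classical.propDecidable

namespace GW

noncomputable section

/-- Shannon entropy (base 2) of a distribution on a finite alphabet,
with the convention `0 * log 0 = 0`. -/
def ent {α : Type*} [Fintype α] (p : α → ℝ) : ℝ := -∑ a, p a * Real.logb 2 (p a)

/-- `p` is a probability distribution on a finite alphabet. -/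
def IsProb {α : Type*} [Fintype α] (p : α → ℝ) : Prop :=
  (∀ a, 0 ≤ p a) ∧ ∑ a, p a = 1

/-- `K` is a channel (a conditional probability distribution). -/
def IsChannel {α β : Type*} [Fintype α] [Fintype β] (K : α → β → ℝ) : Prop :=
  ∀ a, IsProb (K a)

variable {𝒳 𝒴 𝒲 : Type*} [Fintype 𝒳] [Fintype 𝒴] [Fintype 𝒲]

/-- Output distribution `P_W` on `𝒲` induced by the source `p` on `𝒳 × 𝒴`
and the test channel `K`. -/
def outW (p : 𝒳 × 𝒴 → ℝ) (K : 𝒳 × 𝒴 → 𝒲 → ℝ) (w : 𝒲) : ℝ := ∑ a, p a * K a w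

/-- Joint distribution of `(W, X, Y)`. -/
def jointW (p : 𝒳 × 𝒴 → ℝ) (K : 𝒳 × 𝒴 → 𝒲 → ℝ) : 𝒲 × 𝒳 × 𝒴 → ℝ :=
  fun z => p z.2 * K z.2 z.1

/-- Joint distribution of `(W, X)`. -/
def margWX (p : 𝒳 × 𝒴 → ℝ) (K : 𝒳 × 𝒴 → 𝒲 → ℝ) : 𝒲 × 𝒳 → ℝ :=
  fun z => ∑ y, p (z.2, y) * K (z.2, y) z.1

/-- Joint distribution of `(W, Y)`. -/
def margWY (p : 𝒳 × 𝒴 → ℝ) (K : 𝒳 × 𝒴 → 𝒲 → ℝ) : 𝒲 × 𝒴 → ℝ :=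
  fun z => ∑ x, p (x, z.2) * K (x, z.2) z.1

/-- Mutual information `I(W ∧ X,Y)` (base 2). -/
def mutInfoW (p : 𝒳 × 𝒴 → ℝ) (K : 𝒳 × 𝒴 → 𝒲 → ℝ) : ℝ :=
  ent (outW p K) + ent p - ent (jointW p K)

/-- Conditional entropy `H(X|W)`. -/
def condEntX (p : 𝒳 × 𝒴 → ℝ) (K : 𝒳 × 𝒴 → 𝒲 → ℝ) : ℝ :=
  ent (margWX p K) - ent (outW p K)

/-- Conditional entropy `H(Y|W)`. -/
def condEntY (p : 𝒳 × 𝒴 → ℝ) (K : 𝒳 × 𝒴 → 𝒲 → ℝ) : ℝ :=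
  ent (margWY p K) - ent (outW p K)

/-- Conditional distribution `P_{X|W}` induced by `p` and `K`. -/
def condXW (p : 𝒳 × 𝒴 → ℝ) (K : 𝒳 × 𝒴 → 𝒲 → ℝ) (w : 𝒲) (x : 𝒳) : ℝ :=
  margWX p K (w, x) / outW p K w

/-- Conditional distribution `P_{Y|W}` induced by `p` and `K`. -/
def condYW (p : 𝒳 × 𝒴 → ℝ) (K : 𝒳 × 𝒴 → 𝒲 → ℝ) (w : 𝒲) (y : 𝒴) : ℝ :=
  margWY p K (w, y) / outW p K w

/-- The Gray–Wyner first-order rate function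
`R(r1,r2|P) = min { I(W ∧ X,Y) : |𝒲| ≤ |𝒳||𝒴|+2, H(X|W) ≤ r1, H(Y|W) ≤ r2 }`. -/
def Rgw (p : 𝒳 × 𝒴 → ℝ) (r1 r2 : ℝ) : ℝ :=
  sInf { ρ : ℝ | ∃ k, k ≤ Fintype.card 𝒳 * Fintype.card 𝒴 + 2 ∧
    ∃ K : 𝒳 × 𝒴 → Fin k → ℝ, IsChannel K ∧
      condEntX p K ≤ r1 ∧ condEntY p K ≤ r2 ∧ ρ = mutInfoW p K }

/-- `K` is an optimal test channel achieving `R(r1,r2|p)`. -/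
def IsOptChannel (p : 𝒳 × 𝒴 → ℝ) (r1 r2 : ℝ) {k : ℕ} (K : 𝒳 × 𝒴 → Fin k → ℝ) : Prop :=
  k ≤ Fintype.card 𝒳 * Fintype.card 𝒴 + 2 ∧ IsChannel K ∧
    condEntX p K ≤ r1 ∧ condEntY p K ≤ r2 ∧ mutInfoW p K = Rgw p r1 r2

/-- The function `Λ(x,y|Q_W̄, Q_{X̂|Ŵ}, Q_{Ŷ|Ŵ}, λ1, λ2)`;
terms with a vanishing conditional probability are taken to be `0`. -/
def Lam (r1 r2 lam1 lam2 : ℝ) (QW : 𝒲 → ℝ) (QX : 𝒲 → 𝒳 → ℝ) (QY : 𝒲 → 𝒴 → ℝ)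
    (x : 𝒳) (y : 𝒴) : ℝ :=
  - Real.logb 2 (∑ w, QW w *
      (if QX w x = 0 ∨ QY w y = 0 then 0 else
        (2 : ℝ) ^ (lam1 * (r1 + Real.logb 2 (QX w x)) + lam2 * (r2 + Real.logb 2 (QY w y)))))

/-- The function
`F(P_{W|XY},P_W̄,P_{X̂|Ŵ},P_{Ŷ|Ŵ}) = D(P_{W|XY}‖P_W̄|P_XY) + λ1 E[log 1/P_{X̂|Ŵ}(X|W) - r1] + λ2 E[log 1/P_{Ŷ|Ŵ}(Y|W) - r2]`. -/
def Ffun (p : 𝒳 × 𝒴 → ℝ) (r1 r2 lam1 lam2 : ℝ) (K : 𝒳 × 𝒴 → 𝒲 → ℝ)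
    (QW : 𝒲 → ℝ) (QX : 𝒲 → 𝒳 → ℝ) (QY : 𝒲 → 𝒴 → ℝ) : ℝ :=
  (∑ a : 𝒳 × 𝒴, ∑ w, p a * K a w * Real.logb 2 (K a w / QW w))
    + lam1 * (∑ a : 𝒳 × 𝒴, ∑ w, p a * K a w * (-Real.logb 2 (QX w a.1) - r1))
    + lam2 * (∑ a : 𝒳 × 𝒴, ∑ w, p a * K a w * (-Real.logb 2 (QY w a.2) - r2))

/-- The tilted information density for the Gray–Wyner network, built from an
(optimal) test channel `K` via its induced output and conditional distributions. -/
def tiltedInfo (p : 𝒳 × 𝒴 → ℝ) (r1 r2 lam1 lam2 : ℝ) {k : ℕ}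
    (K : 𝒳 × 𝒴 → Fin k → ℝ) (x : 𝒳) (y : 𝒴) : ℝ :=
  Lam r1 r2 lam1 lam2 (outW p K) (condXW p K) (condYW p K) x y

/-- The explicit optimizing channel of Lemma 1. -/
def Kstar (r1 r2 lam1 lam2 : ℝ) (QW : 𝒲 → ℝ) (QX : 𝒲 → 𝒳 → ℝ) (QY : 𝒲 → 𝒴 → ℝ) :
    𝒳 × 𝒴 → 𝒲 → ℝ :=
  fun a w => if QX w a.1 = 0 ∨ QY w a.2 = 0 then 0 else
    QW w * (2 : ℝ) ^ (Lam r1 r2 lam1 lam2 QW QX QY a.1 a.2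
      + lam1 * (r1 + Real.logb 2 (QX w a.1)) + lam2 * (r2 + Real.logb 2 (QY w a.2)))

/-- A Gray–Wyner code of blocklength `n` with message sets of sizes `M0`, `M1`, `M2`. -/
structure GWCode (𝒳 𝒴 : Type*) (n M0 M1 M2 : ℕ) where
  enc0 : (Fin n → 𝒳 × 𝒴) → Fin M0
  enc1 : (Fin n → 𝒳 × 𝒴) → Fin M1
  enc2 : (Fin n → 𝒳 × 𝒴) → Fin M2
  dec1 : Fin M0 × Fin M1 → Fin n → 𝒳
  dec2 : Fin M0 × Fin M2 → Fin n → 𝒴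

/-- Correct decoding of the source word `f`. -/
def GWCode.correct {𝒳 𝒴 : Type*} {n M0 M1 M2 : ℕ} (C : GWCode 𝒳 𝒴 n M0 M1 M2)
    (f : Fin n → 𝒳 × 𝒴) : Prop :=
  ∀ i, C.dec1 (C.enc0 f, C.enc1 f) i = (f i).1 ∧ C.dec2 (C.enc0 f, C.enc2 f) i = (f i).2

/-- Error probability of a code under the source distribution `P` on words. -/
def PeGW {n M0 M1 M2 : ℕ} (C : GWCode 𝒳 𝒴 n M0 M1 M2) (P : (Fin n → 𝒳 × 𝒴) → ℝ) : ℝ :=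
  ∑ f ∈ Finset.univ.filter (fun f => ¬ C.correct f), P f

/-- Correct probability of a code. -/
def PcGW {n M0 M1 M2 : ℕ} (C : GWCode 𝒳 𝒴 n M0 M1 M2) (P : (Fin n → 𝒳 × 𝒴) → ℝ) : ℝ :=
  1 - PeGW C P

/-- The i.i.d. (product) distribution on length-`n` source words. -/
def prodDist (p : 𝒳 × 𝒴 → ℝ) (n : ℕ) : (Fin n → 𝒳 × 𝒴) → ℝ := fun f => ∏ i, p (f i)

/-- First-order achievability of a rate triple for the Gray–Wyner network. -/
def GWAchievable (p : 𝒳 × 𝒴 → ℝ) (r0 r1 r2 : ℝ) : Prop :=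
  ∃ (M0 M1 M2 : ℕ → ℕ) (C : (n : ℕ) → GWCode 𝒳 𝒴 n (M0 n) (M1 n) (M2 n)),
    limsup (fun n : ℕ => Real.logb 2 (M0 n) / n) atTop ≤ r0 ∧
    limsup (fun n : ℕ => Real.logb 2 (M1 n) / n) atTop ≤ r1 ∧
    limsup (fun n : ℕ => Real.logb 2 (M2 n) / n) atTop ≤ r2 ∧
    Tendsto (fun n : ℕ => PeGW (C n) (prodDist p n)) atTop (nhds 0)

/-- Second-order `(ε, r0*, r1*, r2*)`-achievability of `(L0, L1, L2)`. -/
def GWSecondAchievable (p : 𝒳 × 𝒴 → ℝ) (ε r0 r1 r2 L0 L1 L2 : ℝ) : Prop :=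
  ∃ (M0 M1 M2 : ℕ → ℕ) (C : (n : ℕ) → GWCode 𝒳 𝒴 n (M0 n) (M1 n) (M2 n)),
    limsup (fun n : ℕ => (Real.logb 2 (M0 n) - n * r0) / Real.sqrt n) atTop ≤ L0 ∧
    limsup (fun n : ℕ => (Real.logb 2 (M1 n) - n * r1) / Real.sqrt n) atTop ≤ L1 ∧
    limsup (fun n : ℕ => (Real.logb 2 (M2 n) - n * r2) / Real.sqrt n) atTop ≤ L2 ∧
    limsup (fun n : ℕ => PeGW (C n) (prodDist p n)) atTop ≤ ε

/-- Empirical distribution (type) of a sequence. -/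
def empDist {α : Type*} [Fintype α] {n : ℕ} (f : Fin n → α) (a : α) : ℝ :=
  ((Finset.univ.filter fun i => f i = a).card : ℝ) / n

/-- `p` is a type of length-`n` sequences. -/
def IsJointType {α : Type*} [Fintype α] (n : ℕ) (p : α → ℝ) : Prop :=
  ∃ f : Fin n → α, ∀ a, p a = empDist f a

/-- `V` is a conditional type (of length `n`) given the joint type `p`. -/
def IsCondType (n : ℕ) (p : 𝒳 × 𝒴 → ℝ) (V : 𝒳 × 𝒴 → 𝒲 → ℝ) : Prop :=
  IsChannel V ∧ ∀ a, 0 < p a → ∀ w, ∃ c : ℕ, V a w = c / (n * p a)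

/-- The uniform distribution on the type class of the joint type `p`. -/
def unifType (n : ℕ) (p : 𝒳 × 𝒴 → ℝ) : (Fin n → 𝒳 × 𝒴) → ℝ :=
  fun f => if ∀ a, empDist f a = p a then
    (1 : ℝ) / ((Finset.univ.filter fun g : Fin n → 𝒳 × 𝒴 => ∀ a, empDist g a = p a).card : ℝ)
  else 0

/-- The single-letter Gray–Wyner region `ℛ*_GW(P_XY)`. -/
def RegionGW (p : 𝒳 × 𝒴 → ℝ) : Set (ℝ × ℝ × ℝ) :=
  { r | ∃ k, k ≤ Fintype.card 𝒳 * Fintype.card 𝒴 + 2 ∧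
      ∃ K : 𝒳 × 𝒴 → Fin k → ℝ, IsChannel K ∧
        mutInfoW p K ≤ r.1 ∧ condEntX p K ≤ r.2.1 ∧ condEntY p K ≤ r.2.2 }

/-- `X - W - Y` forms a Markov chain (conditional independence given `W`). -/
def MarkovXWY {k : ℕ} (p : 𝒳 × 𝒴 → ℝ) (K : 𝒳 × 𝒴 → Fin k → ℝ) : Prop :=
  ∀ w x y, jointW p K (w, (x, y)) * outW p K w = margWX p K (w, x) * margWY p K (w, y)

/-- The part of the region lying on the Pangloss plane `r0 + r1 + r2 = H(X,Y)`. -/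
def PanglossSet (p : 𝒳 × 𝒴 → ℝ) : Set (ℝ × ℝ × ℝ) :=
  { r | r ∈ RegionGW p ∧ r.1 + r.2.1 + r.2.2 = ent p }

/-- The distribution corresponding to the parameter `θ`, with respect to the
labelling `e` of the support: `P_θ(e i) = θ i` for `i < m`, and the last mass
is `1 - ∑ θ`. -/
def paramDist {α : Type*} {m : ℕ} (e : Fin (m + 1) → α) (θ : Fin m → ℝ) (a : α) : ℝ :=
  (∑ i : Fin m, if e i.castSucc = a then θ i else 0) +
    (if e (Fin.last m) = a then 1 - ∑ i, θ i else 0)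

/-- Variance of `g` under the distribution `p`. -/
def varOf {α : Type*} [Fintype α] (p : α → ℝ) (g : α → ℝ) : ℝ :=
  ∑ a, p a * (g a - ∑ b, p b * g b) ^ 2

/-- The Gaussian upper-tail probability `Q(t)`. -/
def Qfun (t : ℝ) : ℝ :=
  ∫ u in Set.Ioi t, (1 / Real.sqrt (2 * Real.pi)) * Real.exp (-(u ^ 2) / 2)

end

end GW

open GW

namespace GWProof

/-! ### Information quantities as sums over channel columns -/

section Columns

variable {α ζ : Type*} [Fintype α]

/-- Mass that `p * u` puts on the fibre of `g` over `z`. -/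
noncomputable def fib (p : α → ℝ) (g : α → ζ) (u : α → ℝ) (z : ζ) : ℝ :=
  ∑ b, if g b = z then p b * u b else 0

/-- Contribution to `I(W ∧ X,Y)` of a single letter `w` with channel column `u = K · w`. -/
noncomputable def colI (p u : α → ℝ) : ℝ :=
  ∑ a, p a * u a * (Real.logb 2 (u a) - Real.logb 2 (∑ b, p b * u b))

/-- Contribution to the conditional entropy `H(g(X,Y)|W)` of a single letter `w` with channel
column `u = K · w`. -/
noncomputable def colH (p : α → ℝ) (g : α → ζ) (u : α → ℝ) : ℝ :=
  ∑ a, p a * u a * (Real.logb 2 (∑ b, p b * u b) - Real.logb 2 (fib p g u (g a)))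

lemma sum_fib [Fintype ζ] (p : α → ℝ) (g : α → ζ) (u : α → ℝ) (f : ζ → ℝ) :
    ∑ z, fib p g u z * f z = ∑ a, p a * u a * f (g a) := by
  simp only [fib, Finset.sum_mul]
  rw [Finset.sum_comm]
  simp

lemma fib_nonneg {p : α → ℝ} (hp : ∀ a, 0 ≤ p a) (g : α → ζ) {u : α → ℝ} (hu : ∀ a, 0 ≤ u a)
    (z : ζ) : 0 ≤ fib p g u z :=
  Finset.sum_nonneg fun b _ => by split_ifs <;> simp [mul_nonneg (hp b) (hu b)]

lemma fib_pos {p : α → ℝ} (hp : ∀ a, 0 ≤ p a) (g : α → ζ) {u : α → ℝ} (hu : ∀ a, 0 ≤ u a)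
    {a : α} (h : 0 < p a * u a) : 0 < fib p g u (g a) := by
  refine lt_of_lt_of_le h ?_
  have := Finset.single_le_sum (f := fun b => if g b = g a then p b * u b else 0)
    (fun b _ => by split_ifs <;> simp [mul_nonneg (hp b) (hu b)]) (Finset.mem_univ a)
  simpa [fib] using this

lemma sum_pos' {p : α → ℝ} (hp : ∀ a, 0 ≤ p a) {u : α → ℝ} (hu : ∀ a, 0 ≤ u a)
    {a : α} (h : 0 < p a * u a) : 0 < ∑ b, p b * u b :=
  lt_of_lt_of_le h (Finset.single_le_sum (f := fun b => p b * u b)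
    (fun b _ => mul_nonneg (hp b) (hu b)) (Finset.mem_univ a))

lemma colI_smul {p : α → ℝ} (hp : ∀ a, 0 ≤ p a) {u : α → ℝ} (hu : ∀ a, 0 ≤ u a) (c : ℝ) :
    colI p (fun a => c * u a) = c * colI p u := by
  rcases eq_or_ne c 0 with rfl | hc
  · simp [colI]
  have e : ∑ b, p b * (c * u b) = c * ∑ b, p b * u b := by
    rw [Finset.mul_sum]; exact Finset.sum_congr rfl fun b _ => by ring
  unfold colI
  rw [e]
  conv_rhs => rw [Finset.mul_sum]
  refine Finset.sum_congr rfl fun a _ => ?_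
  rcases (mul_nonneg (hp a) (hu a)).eq_or_lt with h | h
  · rw [show p a * (c * u a) = c * (p a * u a) by ring, ← h]; simp
  · have h1 : u a ≠ 0 := fun h0 => by simp [h0] at h
    rw [Real.logb_mul hc h1, Real.logb_mul hc (sum_pos' hp hu h).ne']
    ring

lemma colH_smul {p : α → ℝ} (hp : ∀ a, 0 ≤ p a) (g : α → ζ) {u : α → ℝ} (hu : ∀ a, 0 ≤ u a)
    (c : ℝ) : colH p g (fun a => c * u a) = c * colH p g u := by
  rcases eq_or_ne c 0 with rfl | hc
  · simp [colH]
  have e : ∑ b, p b * (c * u b) = c * ∑ b, p b * u b := by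
    rw [Finset.mul_sum]; exact Finset.sum_congr rfl fun b _ => by ring
  have e2 : ∀ z, fib p g (fun a => c * u a) z = c * fib p g u z := fun z => by
    unfold fib
    rw [Finset.mul_sum]
    refine Finset.sum_congr rfl fun b _ => ?_
    split_ifs <;> ring
  unfold colH
  rw [e]
  conv_rhs => rw [Finset.mul_sum]
  refine Finset.sum_congr rfl fun a _ => ?_
  rw [e2]
  rcases (mul_nonneg (hp a) (hu a)).eq_or_lt with h | h
  · rw [show p a * (c * u a) = c * (p a * u a) by ring, ← h]; simp
  · rw [Real.logb_mul hc (fib_pos hp g hu h).ne', Real.logb_mul hc (sum_pos' hp hu h).ne']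
    ring

/-- Jensen's inequality for `log`, in the form `E[log ρ] ≤ 0` when `E[ρ] ≤ 1`. -/
lemma sum_mul_logb_nonpos {β : Type*} [Fintype β] (J ρ : α → β → ℝ)
    (hJ : ∀ a b, 0 ≤ J a b) (hρ : ∀ a b, 0 < J a b → 0 < ρ a b)
    (h : ∑ a, ∑ b, J a b * ρ a b ≤ ∑ a, ∑ b, J a b) :
    ∑ a, ∑ b, J a b * Real.logb 2 (ρ a b) ≤ 0 := by
  have hl : 0 < Real.log 2 := Real.log_pos (by norm_num)
  have key : ∑ a, ∑ b, J a b * Real.logb 2 (ρ a b)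
      ≤ ∑ a, ∑ b, (J a b * ρ a b - J a b) / Real.log 2 := by
    refine Finset.sum_le_sum fun a _ => Finset.sum_le_sum fun b _ => ?_
    rcases (hJ a b).eq_or_lt with h0 | h0
    · simp [← h0]
    · rw [Real.logb, ← mul_div_assoc]
      have := Real.log_le_sub_one_of_pos (hρ a b h0)
      gcongr
      nlinarith
  refine key.trans ?_
  simp only [← Finset.sum_div, Finset.sum_sub_distrib]
  exact div_nonpos_of_nonpos_of_nonneg (by linarith) hl.le

end Columns

/-! ### Entropy, conditional entropy and mutual information -/

section Info

variable {𝒳 𝒴 𝒲 : Type*} [Fintype 𝒳] [Fintype 𝒴]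

lemma margWX_eq (p : 𝒳 × 𝒴 → ℝ) (K : 𝒳 × 𝒴 → 𝒲 → ℝ) (w : 𝒲) (x : 𝒳) :
    margWX p K (w, x) = fib p Prod.fst (fun a => K a w) x := by
  simp only [margWX, fib, Fintype.sum_prod_type]
  rw [Finset.sum_comm]
  simp

lemma margWY_eq (p : 𝒳 × 𝒴 → ℝ) (K : 𝒳 × 𝒴 → 𝒲 → ℝ) (w : 𝒲) (y : 𝒴) :
    margWY p K (w, y) = fib p Prod.snd (fun a => K a w) y := by
  simp only [margWY, fib, Fintype.sum_prod_type]
  simp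

variable [Fintype 𝒲]

lemma ent_outW (p : 𝒳 × 𝒴 → ℝ) (K : 𝒳 × 𝒴 → 𝒲 → ℝ) :
    ent (outW p K) = -∑ w, ∑ a, p a * K a w * Real.logb 2 (∑ b, p b * K b w) := by
  simp only [ent, outW, Finset.sum_mul]

lemma mutInfoW_eq {p : 𝒳 × 𝒴 → ℝ} {K : 𝒳 × 𝒴 → 𝒲 → ℝ} (hK : IsChannel K) :
    mutInfoW p K = ∑ w, colI p (fun a => K a w) := by
  have e1 : ent p = -∑ w, ∑ a, p a * K a w * Real.logb 2 (p a) := by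
    rw [ent, Finset.sum_comm]
    congr 1
    refine Finset.sum_congr rfl fun a _ => ?_
    rw [← Finset.sum_mul, ← Finset.mul_sum, (hK a).2, mul_one]
  have e2 : ent (jointW p K) = -∑ w, ∑ a, p a * K a w * Real.logb 2 (p a * K a w) := by
    rw [ent, Fintype.sum_prod_type]
    rfl
  rw [mutInfoW, e1, e2, ent_outW]
  simp only [colI, ← Finset.sum_neg_distrib, ← Finset.sum_add_distrib, ← Finset.sum_sub_distrib]
  refine Finset.sum_congr rfl fun w _ => Finset.sum_congr rfl fun a _ => ?_
  by_cases h1 : p a = 0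
  · simp [h1]
  by_cases h2 : K a w = 0
  · simp [h2]
  rw [Real.logb_mul h1 h2]
  ring

lemma condEntX_eq (p : 𝒳 × 𝒴 → ℝ) (K : 𝒳 × 𝒴 → 𝒲 → ℝ) :
    condEntX p K = ∑ w, colH p Prod.fst (fun a => K a w) := by
  rw [condEntX, ent_outW, ent, Fintype.sum_prod_type]
  simp only [margWX_eq]
  simp only [sum_fib p Prod.fst _ (fun x => Real.logb 2 (fib p Prod.fst _ x)), colH, mul_sub,
    Finset.sum_sub_distrib]
  ring

lemma condEntY_eq (p : 𝒳 × 𝒴 → ℝ) (K : 𝒳 × 𝒴 → 𝒲 → ℝ) :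
    condEntY p K = ∑ w, colH p Prod.snd (fun a => K a w) := by
  rw [condEntY, ent_outW, ent, Fintype.sum_prod_type]
  simp only [margWY_eq]
  simp only [sum_fib p Prod.snd _ (fun x => Real.logb 2 (fib p Prod.snd _ x)), colH, mul_sub,
    Finset.sum_sub_distrib]
  ring

lemma sum_joint {p : 𝒳 × 𝒴 → ℝ} (hp : IsProb p) {K : 𝒳 × 𝒴 → 𝒲 → ℝ} (hK : IsChannel K) :
    ∑ a, ∑ w, p a * K a w = 1 := by
  simp only [← Finset.mul_sum, (hK _).2, mul_one, hp.2]

lemma sum_outW {p : 𝒳 × 𝒴 → ℝ} (hp : IsProb p) {K : 𝒳 × 𝒴 → 𝒲 → ℝ} (hK : IsChannel K) :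
    ∑ w, outW p K w = 1 := by
  rw [← sum_joint hp hK, Finset.sum_comm]; rfl

lemma outW_nonneg {p : 𝒳 × 𝒴 → ℝ} (hp : IsProb p) {K : 𝒳 × 𝒴 → 𝒲 → ℝ} (hK : IsChannel K)
    (w : 𝒲) : 0 ≤ outW p K w :=
  Finset.sum_nonneg fun a _ => mul_nonneg (hp.1 a) ((hK a).1 w)

lemma outW_pos {p : 𝒳 × 𝒴 → ℝ} (hp : IsProb p) {K : 𝒳 × 𝒴 → 𝒲 → ℝ} (hK : IsChannel K)
    {a : 𝒳 × 𝒴} {w : 𝒲} (h : 0 < p a * K a w) : 0 < outW p K w :=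
  sum_pos' hp.1 (u := fun a => K a w) (fun a => (hK a).1 w) h

lemma mutInfoW_eq' {p : 𝒳 × 𝒴 → ℝ} {K : 𝒳 × 𝒴 → 𝒲 → ℝ} (hK : IsChannel K) :
    mutInfoW p K
      = ∑ a, ∑ w, p a * K a w * (Real.logb 2 (K a w) - Real.logb 2 (outW p K w)) := by
  rw [mutInfoW_eq hK, Finset.sum_comm]
  rfl

lemma mutInfoW_nonneg {p : 𝒳 × 𝒴 → ℝ} (hp : IsProb p) {K : 𝒳 × 𝒴 → 𝒲 → ℝ}
    (hK : IsChannel K) : 0 ≤ mutInfoW p K := by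
  have key := sum_mul_logb_nonpos (fun a w => p a * K a w) (fun a w => outW p K w / K a w)
    (fun a w => mul_nonneg (hp.1 a) ((hK a).1 w))
    (fun a w h => div_pos (outW_pos hp hK h) (pos_of_mul_pos_right h (hp.1 a))) (by
      rw [sum_joint hp hK]
      have : ∑ a, ∑ w, p a * outW p K w = 1 := by
        simp only [← Finset.mul_sum, sum_outW hp hK, mul_one, hp.2]
      rw [← this]
      refine Finset.sum_le_sum fun a _ => Finset.sum_le_sum fun w _ => ?_
      by_cases h : K a w = 0
      · simpa [h] using mul_nonneg (hp.1 a) (outW_nonneg hp hK w)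
      · apply le_of_eq; field_simp)
  rw [mutInfoW_eq' hK, ← neg_nonpos, ← Finset.sum_neg_distrib]
  refine le_trans (le_of_eq ?_) key
  refine Finset.sum_congr rfl fun a _ => ?_
  rw [← Finset.sum_neg_distrib]
  refine Finset.sum_congr rfl fun w _ => ?_
  rcases (mul_nonneg (hp.1 a) ((hK a).1 w)).eq_or_lt with h | h
  · simp [← h]
  · rw [Real.logb_div (outW_pos hp hK h).ne' (pos_of_mul_pos_right h (hp.1 a)).ne']
    ring

end Info

/-! ### Convexity and the subgradient of the rate function -/

section Rate

variable {𝒳 𝒴 : Type*} [Fintype 𝒳] [Fintype 𝒴]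

/-- `(r1, r2, ρ)` dominates `(H(X|W), H(Y|W), I(W ∧ X,Y))` for a test channel whose output alphabet
has `k` letters. -/
def FeasN (p : 𝒳 × 𝒴 → ℝ) (k : ℕ) (r1 r2 ρ : ℝ) : Prop :=
  ∃ K : 𝒳 × 𝒴 → Fin k → ℝ, IsChannel K ∧
    condEntX p K ≤ r1 ∧ condEntY p K ≤ r2 ∧ mutInfoW p K ≤ ρ

/-- As `FeasN`, with an output alphabet of arbitrary finite size. -/
def Feas (p : 𝒳 × 𝒴 → ℝ) (r1 r2 ρ : ℝ) : Prop := ∃ k, FeasN p k r1 r2 ρ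

/-- Time sharing. -/
lemma Feas.mix {p : 𝒳 × 𝒴 → ℝ} (hp : IsProb p) {r1 r2 ρ s1 s2 σ : ℝ} (h : Feas p r1 r2 ρ)
    (h' : Feas p s1 s2 σ) {c d : ℝ} (hc : 0 ≤ c) (hd : 0 ≤ d) (hcd : c + d = 1) :
    Feas p (c * r1 + d * s1) (c * r2 + d * s2) (c * ρ + d * σ) := by
  obtain ⟨k, K, hK, a1, a2, a3⟩ := h
  obtain ⟨l, L, hL, b1, b2, b3⟩ := h'
  set M : 𝒳 × 𝒴 → Fin (k + l) → ℝ :=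
    fun a => Fin.append (fun w => c * K a w) (fun w => d * L a w) with hM
  have hMc : IsChannel M := by
    refine fun a => ⟨fun w => ?_, ?_⟩
    · refine Fin.addCases (fun i => ?_) (fun i => ?_) w
      · simpa [hM] using mul_nonneg hc ((hK a).1 i)
      · simpa [hM] using mul_nonneg hd ((hL a).1 i)
    · simp [hM, Fin.sum_univ_add, ← Finset.mul_sum, (hK a).2, (hL a).2, hcd]
  have hKn : ∀ w a, 0 ≤ K a w := fun w a => (hK a).1 w
  have hLn : ∀ w a, 0 ≤ L a w := fun w a => (hL a).1 w
  refine ⟨k + l, M, hMc, ?_, ?_, ?_⟩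
  · rw [condEntX_eq] at *
    simp only [hM, Fin.sum_univ_add, Fin.append_left, Fin.append_right,
      colH_smul hp.1 _ (hKn _), colH_smul hp.1 _ (hLn _), ← Finset.mul_sum]
    gcongr
  · rw [condEntY_eq] at *
    simp only [hM, Fin.sum_univ_add, Fin.append_left, Fin.append_right,
      colH_smul hp.1 _ (hKn _), colH_smul hp.1 _ (hLn _), ← Finset.mul_sum]
    gcongr
  · rw [mutInfoW_eq hMc]
    rw [mutInfoW_eq hK] at a3
    rw [mutInfoW_eq hL] at b3
    simp only [hM, Fin.sum_univ_add, Fin.append_left, Fin.append_right,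
      colI_smul hp.1 (hKn _), colI_smul hp.1 (hLn _), ← Finset.mul_sum]
    gcongr

/-- Reweighting the columns by `c`, where the letter `w0` gets weight zero and is then dropped. -/
lemma FeasN.drop {p : 𝒳 × 𝒴 → ℝ} (hp : IsProb p) {k : ℕ} {K : 𝒳 × 𝒴 → Fin (k + 1) → ℝ}
    (hK : IsChannel K) (c : Fin (k + 1) → ℝ) (hc : ∀ w, 0 ≤ c w) (w0 : Fin (k + 1))
    (h0 : c w0 = 0) (h1 : ∀ a, ∑ w, c w * K a w = 1) :
    FeasN p k (∑ w, c w * colH p Prod.fst (fun a => K a w))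
      (∑ w, c w * colH p Prod.snd (fun a => K a w)) (∑ w, c w * colI p (fun a => K a w)) := by
  have hKn : ∀ w a, 0 ≤ K a w := fun w a => (hK a).1 w
  have hM : IsChannel (fun a (w : Fin k) => c (w0.succAbove w) * K a (w0.succAbove w)) := by
    refine fun a => ⟨fun w => mul_nonneg (hc _) (hKn _ _), ?_⟩
    have := h1 a
    rw [Fin.sum_univ_succAbove _ w0, h0] at this
    simpa using this
  refine ⟨_, hM, ?_, ?_, ?_⟩
  · rw [condEntX_eq, Fin.sum_univ_succAbove _ w0, h0]
    simp [colH_smul hp.1 _ (hKn _)]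
  · rw [condEntY_eq, Fin.sum_univ_succAbove _ w0, h0]
    simp [colH_smul hp.1 _ (hKn _)]
  · rw [mutInfoW_eq hM, Fin.sum_univ_succAbove _ w0, h0]
    simp [colI_smul hp.1 (hKn _)]

/-- Reduction of the alphabet by one letter: a linear relation between the columns that preserves
the channel and both conditional entropies gives a direction along which the mutual information,
which is linear in the column weights, does not increase; one moves until a weight vanishes. -/
lemma FeasN.pred {p : 𝒳 × 𝒴 → ℝ} (hp : IsProb p) {k : ℕ} {r1 r2 ρ : ℝ}
    (hk : Fintype.card 𝒳 * Fintype.card 𝒴 + 2 ≤ k) (h : FeasN p (k + 1) r1 r2 ρ) :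
    FeasN p k r1 r2 ρ := by
  obtain ⟨K, hK, a1, a2, a3⟩ := h
  rw [condEntX_eq] at a1
  rw [condEntY_eq] at a2
  rw [mutInfoW_eq hK] at a3
  have hKn : ∀ w a, 0 ≤ K a w := fun w a => (hK a).1 w
  suffices H : ∃ c : Fin (k + 1) → ℝ, (∀ w, 0 ≤ c w) ∧ (∃ w0, c w0 = 0) ∧
      (∀ a, ∑ w, c w * K a w = 1) ∧
      (∑ w, c w * colH p Prod.fst (fun a => K a w) ≤ r1) ∧
      (∑ w, c w * colH p Prod.snd (fun a => K a w) ≤ r2) ∧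
      (∑ w, c w * colI p (fun a => K a w) ≤ ρ) by
    obtain ⟨c, hc, ⟨w0, h0⟩, h1, h2, h3, h4⟩ := H
    obtain ⟨M, hM, b1, b2, b3⟩ := FeasN.drop hp hK c hc w0 h0 h1
    exact ⟨M, hM, b1.trans h2, b2.trans h3, b3.trans h4⟩
  by_cases hz : ∃ w0, ∀ a, K a w0 = 0
  · -- A letter that never occurs can be dropped right away.
    obtain ⟨w0, hw0⟩ := hz
    have aux : ∀ f : Fin (k + 1) → ℝ, f w0 = 0 →
        ∑ w, (if w = w0 then 0 else 1) * f w = ∑ w, f w := fun f hf =>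
      Finset.sum_congr rfl fun w _ => by
        split_ifs with h
        · rw [h, hf, mul_zero]
        · rw [one_mul]
    refine ⟨fun w => if w = w0 then 0 else 1, fun w => ?_, ⟨w0, by simp⟩, fun a => ?_, ?_, ?_, ?_⟩
    · dsimp only; split_ifs <;> norm_num
    · rw [aux _ (hw0 a), (hK a).2]
    · rwa [aux _ (by simp [colH, hw0])]
    · rwa [aux _ (by simp [colH, hw0])]
    · rwa [aux _ (by simp [colI, hw0])]
  push Not at hz
  let T : (Fin (k + 1) → ℝ) →ₗ[ℝ] ((𝒳 × 𝒴 → ℝ) × ℝ × ℝ) :=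
    { toFun := fun δ => (fun a => ∑ w, δ w * K a w,
        ∑ w, δ w * colH p Prod.fst (fun a => K a w), ∑ w, δ w * colH p Prod.snd (fun a => K a w))
      map_add' := fun x y => by
        ext <;> simp [add_mul, Finset.sum_add_distrib]
      map_smul' := fun m x => by
        ext <;> simp [mul_assoc, Finset.mul_sum] }
  have hker : LinearMap.ker T ≠ ⊥ := by
    apply LinearMap.ker_ne_bot_of_finrank_lt
    simp
    omega
  obtain ⟨δ0, hδ0, hne0⟩ := Submodule.exists_mem_ne_zero_of_ne_bot hker
  obtain ⟨δ, hδ, hne, hI⟩ : ∃ δ, T δ = 0 ∧ δ ≠ 0 ∧ ∑ w, δ w * colI p (fun a => K a w) ≤ 0 := by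
    rcases le_total (∑ w, δ0 w * colI p (fun a => K a w)) 0 with h | h
    · exact ⟨δ0, hδ0, hne0, h⟩
    · refine ⟨-δ0, by rw [map_neg, LinearMap.mem_ker.1 hδ0, neg_zero], neg_ne_zero.2 hne0, ?_⟩
      simpa using h
  have t1 : ∀ a, ∑ w, δ w * K a w = 0 := fun a => congrFun (congrArg Prod.fst hδ) a
  have t2 : ∑ w, δ w * colH p Prod.fst (fun a => K a w) = 0 :=
    congrArg (fun z => z.2.1) hδ
  have t3 : ∑ w, δ w * colH p Prod.snd (fun a => K a w) = 0 :=
    congrArg (fun z => z.2.2) hδ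
  obtain ⟨w0, hw0⟩ := Finite.exists_min δ
  have hneg : δ w0 < 0 := by
    by_contra hcon
    push Not at hcon
    refine hne (funext fun w => ?_)
    obtain ⟨a, ha⟩ := hz w
    have := (Finset.sum_eq_zero_iff_of_nonneg
      (fun w _ => mul_nonneg (hcon.trans (hw0 w)) (hKn w a))).1 (t1 a) w (Finset.mem_univ w)
    simpa [ha] using this
  set s := -(δ w0)⁻¹ with hs
  have hs0 : 0 < s := by rw [hs, neg_pos]; exact inv_lt_zero.2 hneg
  have hs1 : s * δ w0 = -1 := by rw [hs]; field_simp [hneg.ne]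
  have aux : ∀ f : Fin (k + 1) → ℝ,
      ∑ w, (1 + s * δ w) * f w = ∑ w, f w + s * ∑ w, δ w * f w := fun f => by
    rw [Finset.mul_sum, ← Finset.sum_add_distrib]
    exact Finset.sum_congr rfl fun w _ => by ring
  refine ⟨fun w => 1 + s * δ w, fun w => ?_, ⟨w0, by simp [hs1]⟩, fun a => ?_, ?_, ?_, ?_⟩
  · nlinarith [hw0 w]
  · rw [aux, t1, (hK a).2]; ring
  · rw [aux, t2]; linarith
  · rw [aux, t3]; linarith
  · rw [aux]; nlinarith

lemma FeasN.reduce {p : 𝒳 × 𝒴 → ℝ} (hp : IsProb p) {k : ℕ} {r1 r2 ρ : ℝ}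
    (h : FeasN p k r1 r2 ρ) :
    ∃ l, l ≤ Fintype.card 𝒳 * Fintype.card 𝒴 + 2 ∧ FeasN p l r1 r2 ρ := by
  induction k with
  | zero => exact ⟨0, Nat.zero_le _, h⟩
  | succ k ih =>
    by_cases hk : k + 1 ≤ Fintype.card 𝒳 * Fintype.card 𝒴 + 2
    · exact ⟨k + 1, hk, h⟩
    · exact ih (h.pred hp (by omega))

lemma Feas.Rgw_le {p : 𝒳 × 𝒴 → ℝ} (hp : IsProb p) {r1 r2 ρ : ℝ} (h : Feas p r1 r2 ρ) :
    Rgw p r1 r2 ≤ ρ := by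
  obtain ⟨k, h⟩ := h
  obtain ⟨l, hl, K, hK, h1, h2, h3⟩ := h.reduce hp
  refine le_trans ?_ h3
  apply csInf_le
  · refine ⟨0, ?_⟩
    rintro _ ⟨k, -, K, hK, -, -, rfl⟩
    exact mutInfoW_nonneg hp hK
  · exact ⟨l, hl, K, hK, h1, h2, rfl⟩

/-- Positivity of `Rgw` excludes the junk value `sInf ∅ = 0`, so that the infimum is approached. -/
lemma feas_of_Rgw_pos {p : 𝒳 × 𝒴 → ℝ} {r1 r2 : ℝ} (h : 0 < Rgw p r1 r2) {η : ℝ} (hη : 0 < η) :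
    Feas p r1 r2 (Rgw p r1 r2 + η) := by
  have hne : { ρ : ℝ | ∃ k, k ≤ Fintype.card 𝒳 * Fintype.card 𝒴 + 2 ∧
    ∃ K : 𝒳 × 𝒴 → Fin k → ℝ, IsChannel K ∧
      condEntX p K ≤ r1 ∧ condEntY p K ≤ r2 ∧ ρ = mutInfoW p K }.Nonempty := by
    rw [Set.nonempty_iff_ne_empty]
    intro he
    rw [Rgw, he, Real.sInf_empty] at h
    exact lt_irrefl _ h
  obtain ⟨ρ, ⟨k, -, K, hK, h1, h2, rfl⟩, hlt⟩ := Real.lt_sInf_add_pos hne hη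
  exact ⟨k, K, hK, h1, h2, hlt.le⟩

lemma deriv_nonneg_of_right {f : ℝ → ℝ} {f' : ℝ} (hf : HasDerivAt f f' 0) (h0 : f 0 = 0)
    (h : ∀ᶠ t in nhdsWithin 0 (Set.Ioi 0), 0 ≤ f t) : 0 ≤ f' := by
  have h1 := (hasDerivWithinAt_iff_tendsto_slope' (s := Set.Ioi (0 : ℝ)) (by simp)).1
    hf.hasDerivWithinAt
  refine ge_of_tendsto h1 ?_
  filter_upwards [h, self_mem_nhdsWithin] with t ht ht0
  rw [slope_def_field, h0]
  exact div_nonneg (by linarith) (by simpa using (Set.mem_Ioi.1 ht0).le)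

/-- The partial derivatives of `Rgw` form a subgradient. With `d = (s1, s2) - (r1, r2)`, convexity is
used at the midpoint `(r1 + t * d1 / 2, r2)` of `(r1, r2) + t * d` and `(r1, r2 - t * d2)`, so that
only the partial derivatives enter as `t` decreases to zero. -/
lemma subgradient {p : 𝒳 × 𝒴 → ℝ} (hp : IsProb p) {r1 r2 lam1 lam2 : ℝ}
    (hR : 0 < Rgw p r1 r2)
    (hd1 : HasDerivAt (fun r => Rgw p r r2) (-lam1) r1)
    (hd2 : HasDerivAt (fun r => Rgw p r1 r) (-lam2) r2)
    (h0 : Feas p r1 r2 (Rgw p r1 r2)) {s1 s2 σ : ℝ} (hs : Feas p s1 s2 σ) :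
    Rgw p r1 r2 ≤ σ + lam1 * (s1 - r1) + lam2 * (s2 - r2) := by
  set R := Rgw p r1 r2 with hRdef
  set f : ℝ → ℝ := fun t => ((1 - t) * R + t * σ + Rgw p r1 (r2 - t * (s2 - r2))) / 2
    - Rgw p (r1 + t * ((s1 - r1) / 2)) r2 with hf
  have l1 : HasDerivAt (fun t : ℝ => r1 + t * ((s1 - r1) / 2)) ((s1 - r1) / 2) 0 := by
    simpa using ((hasDerivAt_id (0 : ℝ)).mul_const ((s1 - r1) / 2)).const_add r1
  have l2 : HasDerivAt (fun t : ℝ => r2 - t * (s2 - r2)) (-(s2 - r2)) 0 := by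
    simpa using ((hasDerivAt_id (0 : ℝ)).mul_const (s2 - r2)).const_sub r2
  have c1 : HasDerivAt (fun t : ℝ => Rgw p (r1 + t * ((s1 - r1) / 2)) r2)
      (-lam1 * ((s1 - r1) / 2)) 0 :=
    HasDerivAt.comp (h₂ := fun r => Rgw p r r2) (0 : ℝ) (by simpa using hd1) l1
  have c2 : HasDerivAt (fun t : ℝ => Rgw p r1 (r2 - t * (s2 - r2)))
      (-lam2 * (-(s2 - r2))) 0 :=
    HasDerivAt.comp (h₂ := fun r => Rgw p r1 r) (0 : ℝ) (by simpa using hd2) l2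
  have c3 : HasDerivAt (fun t : ℝ => (1 - t) * R + t * σ) (-R + σ) 0 :=
    ((((hasDerivAt_id (0 : ℝ)).const_sub 1).mul_const R).add
      ((hasDerivAt_id (0 : ℝ)).mul_const σ)).congr_deriv (by simp)
  have hfd : HasDerivAt f
      (((-R + σ) + -lam2 * (-(s2 - r2))) / 2 - -lam1 * ((s1 - r1) / 2)) 0 :=
    ((c3.add c2).div_const 2).sub c1
  have hf0 : f 0 = 0 := by simp [hf, ← hRdef]
  have hev : ∀ᶠ t in nhdsWithin (0 : ℝ) (Set.Ioi 0), 0 ≤ f t := by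
    have e1 : ∀ᶠ t in nhds (0 : ℝ), 0 < Rgw p r1 (r2 - t * (s2 - r2)) :=
      c2.continuousAt.eventually (lt_mem_nhds (by simpa using hR))
    have e2 : ∀ᶠ t in nhds (0 : ℝ), t < 1 := gt_mem_nhds one_pos
    filter_upwards [nhdsWithin_le_nhds e1, nhdsWithin_le_nhds e2, self_mem_nhdsWithin]
      with t ht1 ht2 ht0
    have ht0' : (0 : ℝ) < t := ht0
    suffices H : Rgw p (r1 + t * ((s1 - r1) / 2)) r2
        ≤ ((1 - t) * R + t * σ + Rgw p r1 (r2 - t * (s2 - r2))) / 2 by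
      simp only [hf]; linarith
    refine le_of_forall_pos_le_add fun η hη => ?_
    have m1 := Feas.mix hp h0 hs (c := 1 - t) (d := t) (by linarith) ht0'.le (by ring)
    have m2 := Feas.mix hp m1 (feas_of_Rgw_pos ht1 hη) (c := 1 / 2) (d := 1 / 2) (by norm_num)
      (by norm_num) (by norm_num)
    have m3 := m2.Rgw_le hp
    have q1 : 1 / 2 * ((1 - t) * r1 + t * s1) + 1 / 2 * r1 = r1 + t * ((s1 - r1) / 2) := by ring
    have q2 : 1 / 2 * ((1 - t) * r2 + t * s2) + 1 / 2 * (r2 - t * (s2 - r2)) = r2 := by ring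
    rw [q1, q2] at m3
    linarith
  have := deriv_nonneg_of_right hfd hf0 hev
  linarith

end Rate

/-! ### The tilted channel and the two bounds -/

section Tilted

variable {𝒳 𝒴 𝒲 ζ : Type*} [Fintype 𝒳] [Fintype 𝒴] [Fintype 𝒲] [Fintype ζ]

lemma condXW_pos {p : 𝒳 × 𝒴 → ℝ} (hp : IsProb p) {K : 𝒳 × 𝒴 → 𝒲 → ℝ} (hK : IsChannel K)
    {a : 𝒳 × 𝒴} {w : 𝒲} (h : 0 < p a * K a w) : 0 < condXW p K w a.1 := by
  rw [condXW, margWX_eq]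
  exact div_pos (fib_pos hp.1 Prod.fst (u := fun a => K a w) (fun a => (hK a).1 w) h)
    (outW_pos hp hK h)

lemma condYW_pos {p : 𝒳 × 𝒴 → ℝ} (hp : IsProb p) {K : 𝒳 × 𝒴 → 𝒲 → ℝ} (hK : IsChannel K)
    {a : 𝒳 × 𝒴} {w : 𝒲} (h : 0 < p a * K a w) : 0 < condYW p K w a.2 := by
  rw [condYW, margWY_eq]
  exact div_pos (fib_pos hp.1 Prod.snd (u := fun a => K a w) (fun a => (hK a).1 w) h)
    (outW_pos hp hK h)

lemma condXW_nonneg {p : 𝒳 × 𝒴 → ℝ} (hp : IsProb p) {K : 𝒳 × 𝒴 → 𝒲 → ℝ} (hK : IsChannel K)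
    (w : 𝒲) (x : 𝒳) : 0 ≤ condXW p K w x := by
  rw [condXW, margWX_eq]
  exact div_nonneg (fib_nonneg hp.1 _ (fun a => (hK a).1 w) x) (outW_nonneg hp hK w)

lemma condYW_nonneg {p : 𝒳 × 𝒴 → ℝ} (hp : IsProb p) {K : 𝒳 × 𝒴 → 𝒲 → ℝ} (hK : IsChannel K)
    (w : 𝒲) (y : 𝒴) : 0 ≤ condYW p K w y := by
  rw [condYW, margWY_eq]
  exact div_nonneg (fib_nonneg hp.1 _ (fun a => (hK a).1 w) y) (outW_nonneg hp hK w)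

lemma sum_condXW_le (p : 𝒳 × 𝒴 → ℝ) (K : 𝒳 × 𝒴 → 𝒲 → ℝ) (w : 𝒲) :
    ∑ x, condXW p K w x ≤ 1 := by
  have h := sum_fib p Prod.fst (fun a => K a w) (fun _ : 𝒳 => (1 : ℝ))
  simp only [mul_one] at h
  simp only [condXW, margWX_eq, ← Finset.sum_div, h]
  exact div_self_le_one _

lemma sum_condYW_le (p : 𝒳 × 𝒴 → ℝ) (K : 𝒳 × 𝒴 → 𝒲 → ℝ) (w : 𝒲) :
    ∑ y, condYW p K w y ≤ 1 := by
  have h := sum_fib p Prod.snd (fun a => K a w) (fun _ : 𝒴 => (1 : ℝ))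
  simp only [mul_one] at h
  simp only [condYW, margWY_eq, ← Finset.sum_div, h]
  exact div_self_le_one _

lemma condEntX_eq' {p : 𝒳 × 𝒴 → ℝ} (hp : IsProb p) {K : 𝒳 × 𝒴 → 𝒲 → ℝ} (hK : IsChannel K) :
    condEntX p K = ∑ a, ∑ w, p a * K a w * -Real.logb 2 (condXW p K w a.1) := by
  rw [condEntX_eq, Finset.sum_comm]
  refine Finset.sum_congr rfl fun w _ => Finset.sum_congr rfl fun a _ => ?_
  rcases (mul_nonneg (hp.1 a) ((hK a).1 w)).eq_or_lt with h | h
  · simp [← h]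
  · have h1 := fib_pos hp.1 Prod.fst (u := fun a => K a w) (fun a => (hK a).1 w) h
    rw [condXW, margWX_eq, Real.logb_div h1.ne' (outW_pos hp hK h).ne', neg_sub]
    rfl

lemma condEntY_eq' {p : 𝒳 × 𝒴 → ℝ} (hp : IsProb p) {K : 𝒳 × 𝒴 → 𝒲 → ℝ} (hK : IsChannel K) :
    condEntY p K = ∑ a, ∑ w, p a * K a w * -Real.logb 2 (condYW p K w a.2) := by
  rw [condEntY_eq, Finset.sum_comm]
  refine Finset.sum_congr rfl fun w _ => Finset.sum_congr rfl fun a _ => ?_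
  rcases (mul_nonneg (hp.1 a) ((hK a).1 w)).eq_or_lt with h | h
  · simp [← h]
  · have h1 := fib_pos hp.1 Prod.snd (u := fun a => K a w) (fun a => (hK a).1 w) h
    rw [condYW, margWY_eq, Real.logb_div h1.ne' (outW_pos hp hK h).ne', neg_sub]
    rfl

/-- Among all output laws `q`, the induced one minimises the divergence term. -/
lemma mutInfoW_le {p : 𝒳 × 𝒴 → ℝ} (hp : IsProb p) {K : 𝒳 × 𝒴 → 𝒲 → ℝ} (hK : IsChannel K)
    (q : 𝒲 → ℝ) (hq : ∀ w, 0 ≤ q w) (hq1 : ∑ w, q w ≤ 1)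
    (hs : ∀ a w, 0 < p a * K a w → 0 < q w) :
    mutInfoW p K ≤ ∑ a, ∑ w, p a * K a w * (Real.logb 2 (K a w) - Real.logb 2 (q w)) := by
  have key := sum_mul_logb_nonpos (fun a w => p a * K a w) (fun a w => q w / outW p K w)
    (fun a w => mul_nonneg (hp.1 a) ((hK a).1 w))
    (fun a w h => div_pos (hs a w h) (outW_pos hp hK h)) (by
      rw [sum_joint hp hK, Finset.sum_comm]
      refine le_trans (Finset.sum_le_sum fun w _ => ?_) hq1
      rw [← Finset.sum_mul]
      change outW p K w * (q w / outW p K w) ≤ q w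
      by_cases h : outW p K w = 0
      · simp [h, hq w]
      · rw [mul_div_cancel₀ _ h])
  rw [mutInfoW_eq' hK, ← sub_nonpos]
  refine le_trans (le_of_eq ?_) key
  simp only [← Finset.sum_sub_distrib]
  refine Finset.sum_congr rfl fun a _ => Finset.sum_congr rfl fun w _ => ?_
  rcases (mul_nonneg (hp.1 a) ((hK a).1 w)).eq_or_lt with h | h
  · simp [← h]
  · rw [Real.logb_div (hs a w h).ne' (outW_pos hp hK h).ne']
    ring

/-- Cross entropy dominates conditional entropy: among all conditional laws `q` of `g(X,Y)` given
`W`, the induced one minimises the expected log-loss. -/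
lemma condEnt_le {p : 𝒳 × 𝒴 → ℝ} (hp : IsProb p) {K : 𝒳 × 𝒴 → 𝒲 → ℝ} (hK : IsChannel K)
    (g : 𝒳 × 𝒴 → ζ) (q : 𝒲 → ζ → ℝ) (hq : ∀ w z, 0 ≤ q w z) (hq1 : ∀ w, ∑ z, q w z ≤ 1)
    (hs : ∀ a w, 0 < p a * K a w → 0 < q w (g a)) :
    ∑ w, colH p g (fun a => K a w) ≤ ∑ a, ∑ w, p a * K a w * -Real.logb 2 (q w (g a)) := by
  have hfib : ∀ a w, 0 < p a * K a w → 0 < fib p g (fun a => K a w) (g a) := fun a w h =>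
    fib_pos hp.1 g (u := fun a => K a w) (fun a => (hK a).1 w) h
  have key := sum_mul_logb_nonpos (fun a w => p a * K a w)
    (fun a w => q w (g a) * outW p K w / fib p g (fun a => K a w) (g a))
    (fun a w => mul_nonneg (hp.1 a) ((hK a).1 w))
    (fun a w h => div_pos (mul_pos (hs a w h) (outW_pos hp hK h)) (hfib a w h)) (by
      rw [sum_joint hp hK, ← sum_outW hp hK, Finset.sum_comm]
      refine Finset.sum_le_sum fun w _ => ?_
      rw [← sum_fib p g (fun a => K a w)
        (fun z => q w z * outW p K w / fib p g (fun a => K a w) z)]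
      calc _ ≤ ∑ z, q w z * outW p K w := by
            refine Finset.sum_le_sum fun z _ => ?_
            by_cases h : fib p g (fun a => K a w) z = 0
            · simp [h, mul_nonneg (hq w z) (outW_nonneg hp hK w)]
            · rw [mul_div_cancel₀ _ h]
        _ ≤ _ := by
            rw [← Finset.sum_mul]
            exact mul_le_of_le_one_left (outW_nonneg hp hK w) (hq1 w))
  rw [← sub_nonpos]
  refine le_trans (le_of_eq ?_) key
  simp only [colH]
  rw [Finset.sum_comm]
  simp only [← Finset.sum_sub_distrib]
  refine Finset.sum_congr rfl fun a _ => Finset.sum_congr rfl fun w _ => ?_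
  rcases (mul_nonneg (hp.1 a) ((hK a).1 w)).eq_or_lt with h | h
  · simp [← h]
  · rw [Real.logb_div (mul_pos (hs a w h) (outW_pos hp hK h)).ne' (hfib a w h).ne',
      Real.logb_mul (hs a w h).ne' (outW_pos hp hK h).ne']
    simp only [outW]
    ring

/-- The exponent in the definition of `Lam`, built from the conditional laws induced by `K`. -/
noncomputable def expo (p : 𝒳 × 𝒴 → ℝ) (r1 r2 lam1 lam2 : ℝ) (K : 𝒳 × 𝒴 → 𝒲 → ℝ)
    (a : 𝒳 × 𝒴) (w : 𝒲) : ℝ :=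
  lam1 * (r1 + Real.logb 2 (condXW p K w a.1)) + lam2 * (r2 + Real.logb 2 (condYW p K w a.2))

/-- The unnormalised tilted channel: `Lam` is minus the logarithm of its row sums. -/
noncomputable def tilt (p : 𝒳 × 𝒴 → ℝ) (r1 r2 lam1 lam2 : ℝ) (K : 𝒳 × 𝒴 → 𝒲 → ℝ)
    (a : 𝒳 × 𝒴) (w : 𝒲) : ℝ :=
  outW p K w * (if condXW p K w a.1 = 0 ∨ condYW p K w a.2 = 0 then 0 else
    (2 : ℝ) ^ expo p r1 r2 lam1 lam2 K a w)

lemma tilt_nonneg {p : 𝒳 × 𝒴 → ℝ} (hp : IsProb p) {K : 𝒳 × 𝒴 → 𝒲 → ℝ} (hK : IsChannel K)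
    (r1 r2 lam1 lam2 : ℝ) (a : 𝒳 × 𝒴) (w : 𝒲) : 0 ≤ tilt p r1 r2 lam1 lam2 K a w := by
  refine mul_nonneg (outW_nonneg hp hK w) ?_
  split_ifs
  · exact le_rfl
  · positivity

lemma tilt_pos {p : 𝒳 × 𝒴 → ℝ} (hp : IsProb p) {K : 𝒳 × 𝒴 → 𝒲 → ℝ} (hK : IsChannel K)
    (r1 r2 lam1 lam2 : ℝ) {a : 𝒳 × 𝒴} {w : 𝒲} (h : 0 < p a * K a w) :
    0 < tilt p r1 r2 lam1 lam2 K a w := by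
  unfold tilt
  rw [if_neg (not_or.2 ⟨(condXW_pos hp hK h).ne', (condYW_pos hp hK h).ne'⟩)]
  exact mul_pos (outW_pos hp hK h) (by positivity)

lemma of_tilt_pos {p : 𝒳 × 𝒴 → ℝ} (hp : IsProb p) {K : 𝒳 × 𝒴 → 𝒲 → ℝ} (hK : IsChannel K)
    (r1 r2 lam1 lam2 : ℝ) {a : 𝒳 × 𝒴} {w : 𝒲} (h : 0 < tilt p r1 r2 lam1 lam2 K a w) :
    0 < outW p K w ∧ 0 < condXW p K w a.1 ∧ 0 < condYW p K w a.2 ∧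
      Real.logb 2 (tilt p r1 r2 lam1 lam2 K a w)
        = Real.logb 2 (outW p K w) + expo p r1 r2 lam1 lam2 K a w := by
  unfold tilt at h ⊢
  split_ifs at h ⊢ with hc
  · simp at h
  · rw [not_or] at hc
    have h2 : (0 : ℝ) < 2 ^ expo p r1 r2 lam1 lam2 K a w := by positivity
    have h1 : 0 < outW p K w := pos_of_mul_pos_left h h2.le
    refine ⟨h1, (condXW_nonneg hp hK w a.1).lt_of_ne' hc.1,
      (condYW_nonneg hp hK w a.2).lt_of_ne' hc.2, ?_⟩
    rw [Real.logb_mul h1.ne' h2.ne', Real.logb_rpow (by norm_num) (by norm_num)]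

lemma sum_tilt_pos {p : 𝒳 × 𝒴 → ℝ} (hp : IsProb p) {K : 𝒳 × 𝒴 → 𝒲 → ℝ} (hK : IsChannel K)
    (r1 r2 lam1 lam2 : ℝ) {a : 𝒳 × 𝒴} (ha : 0 < p a) : 0 < ∑ w, tilt p r1 r2 lam1 lam2 K a w := by
  obtain ⟨w, hw⟩ : ∃ w, 0 < K a w := by
    by_contra! hcon
    have h0 : ∑ w, K a w ≤ 0 := Finset.sum_nonpos fun w _ => hcon w
    rw [(hK a).2] at h0
    linarith
  exact Finset.sum_pos' (fun w _ => tilt_nonneg hp hK r1 r2 lam1 lam2 a w)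
    ⟨w, Finset.mem_univ w, tilt_pos hp hK r1 r2 lam1 lam2 (mul_pos ha hw)⟩

/-- Averaging, under a channel `L`, the divergence term minus the exponent splits into the divergence
term and the two penalty terms. -/
lemma sum_expo {p : 𝒳 × 𝒴 → ℝ} (hp : IsProb p) (K : 𝒳 × 𝒴 → 𝒲 → ℝ) (r1 r2 lam1 lam2 : ℝ)
    {L : 𝒳 × 𝒴 → 𝒲 → ℝ} (hL : IsChannel L) :
    ∑ a, ∑ w, p a * L a w * (Real.logb 2 (L a w) - Real.logb 2 (outW p K w)
        - expo p r1 r2 lam1 lam2 K a w)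
      = (∑ a, ∑ w, p a * L a w * (Real.logb 2 (L a w) - Real.logb 2 (outW p K w)))
        + lam1 * ((∑ a, ∑ w, p a * L a w * -Real.logb 2 (condXW p K w a.1)) - r1)
        + lam2 * ((∑ a, ∑ w, p a * L a w * -Real.logb 2 (condYW p K w a.2)) - r2) := by
  have e : ∀ r : ℝ, r = ∑ a, ∑ w, p a * L a w * r := fun r => by
    simp only [← Finset.sum_mul, sum_joint hp hL, one_mul]
  conv_rhs => rw [e r1, e r2]
  simp only [← Finset.sum_sub_distrib, Finset.mul_sum, ← Finset.sum_add_distrib]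
  refine Finset.sum_congr rfl fun a _ => Finset.sum_congr rfl fun w _ => ?_
  rw [expo]
  ring

/-- Upper bound: by Jensen's inequality the expectation of `Lam` is at most the Lagrangian at `K`. -/
lemma tilted_le {p : 𝒳 × 𝒴 → ℝ} (hp : IsProb p) {K : 𝒳 × 𝒴 → 𝒲 → ℝ} (hK : IsChannel K)
    (r1 r2 lam1 lam2 : ℝ) :
    ∑ a, p a * -Real.logb 2 (∑ w, tilt p r1 r2 lam1 lam2 K a w)
      ≤ mutInfoW p K + lam1 * (condEntX p K - r1) + lam2 * (condEntY p K - r2) := by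
  rw [mutInfoW_eq' hK, condEntX_eq' hp hK, condEntY_eq' hp hK, ← sum_expo hp K r1 r2 lam1 lam2 hK]
  set Z : 𝒳 × 𝒴 → ℝ := fun a => ∑ w, tilt p r1 r2 lam1 lam2 K a w with hZ
  have key := sum_mul_logb_nonpos (fun a w => p a * K a w)
    (fun a w => tilt p r1 r2 lam1 lam2 K a w / (K a w * Z a))
    (fun a w => mul_nonneg (hp.1 a) ((hK a).1 w))
    (fun a w h => div_pos (tilt_pos hp hK _ _ _ _ h)
      (mul_pos (pos_of_mul_pos_right h (hp.1 a))
        (sum_tilt_pos hp hK _ _ _ _ (pos_of_mul_pos_left h ((hK a).1 w))))) (by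
      rw [sum_joint hp hK, ← hp.2]
      refine Finset.sum_le_sum fun a _ => ?_
      rcases (hp.1 a).eq_or_lt with h | h
      · simp [← h]
      have hz : 0 < Z a := sum_tilt_pos hp hK _ _ _ _ h
      calc _ ≤ ∑ w, p a * (tilt p r1 r2 lam1 lam2 K a w / Z a) := by
            refine Finset.sum_le_sum fun w _ => ?_
            by_cases h0 : K a w = 0
            · simpa [h0] using mul_nonneg h.le
                (div_nonneg (tilt_nonneg hp hK r1 r2 lam1 lam2 a w) hz.le)
            · apply le_of_eq; field_simp
        _ = p a := by
            rw [← Finset.mul_sum, ← Finset.sum_div, div_self hz.ne', mul_one])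
  rw [← sub_nonpos]
  refine le_trans (le_of_eq ?_) key
  rw [← Finset.sum_sub_distrib]
  refine Finset.sum_congr rfl fun a _ => ?_
  have e : p a * -Real.logb 2 (Z a) = ∑ w, p a * K a w * -Real.logb 2 (Z a) := by
    rw [← Finset.sum_mul, ← Finset.mul_sum, (hK a).2, mul_one]
  rw [e, ← Finset.sum_sub_distrib]
  refine Finset.sum_congr rfl fun w _ => ?_
  rcases (mul_nonneg (hp.1 a) ((hK a).1 w)).eq_or_lt with h | h
  · simp [← h]
  · have hk := pos_of_mul_pos_right h (hp.1 a)
    have hz : 0 < Z a := sum_tilt_pos hp hK _ _ _ _ (pos_of_mul_pos_left h ((hK a).1 w))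
    have ht := tilt_pos hp hK r1 r2 lam1 lam2 h
    rw [Real.logb_div ht.ne' (mul_pos hk hz).ne', Real.logb_mul hk.ne' hz.ne',
      (of_tilt_pos hp hK _ _ _ _ ht).2.2.2]
    ring

/-- Lower bound: the expectation of `Lam` is attained at the normalised tilted channel, and
replacing the laws induced by `K` with those induced by that channel only decreases the
Lagrangian. -/
lemma exists_le_tilted {p : 𝒳 × 𝒴 → ℝ} (hp : IsProb p) {K : 𝒳 × 𝒴 → 𝒲 → ℝ} (hK : IsChannel K)
    (r1 r2 lam1 lam2 : ℝ) (hl1 : 0 ≤ lam1) (hl2 : 0 ≤ lam2) :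
    ∃ L : 𝒳 × 𝒴 → 𝒲 → ℝ, IsChannel L ∧
      mutInfoW p L + lam1 * (condEntX p L - r1) + lam2 * (condEntY p L - r2)
        ≤ ∑ a, p a * -Real.logb 2 (∑ w, tilt p r1 r2 lam1 lam2 K a w) := by
  set Z : 𝒳 × 𝒴 → ℝ := fun a => ∑ w, tilt p r1 r2 lam1 lam2 K a w with hZ
  -- Rows outside the support of `p` may have `Z a = 0`, so they are taken from `K`.
  set L : 𝒳 × 𝒴 → 𝒲 → ℝ := fun a w =>
    if 0 < p a then tilt p r1 r2 lam1 lam2 K a w / Z a else K a w with hLdef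
  have hZpos : ∀ a, 0 < p a → 0 < Z a := fun a h => sum_tilt_pos hp hK _ _ _ _ h
  have hL : IsChannel L := by
    intro a
    by_cases h : 0 < p a
    · simp only [hLdef, h, if_true]
      refine ⟨fun w => div_nonneg (tilt_nonneg hp hK r1 r2 lam1 lam2 a w) (hZpos a h).le, ?_⟩
      rw [← Finset.sum_div, div_self (hZpos a h).ne']
    · simp only [hLdef, h, if_false]
      exact hK a
  have hpos : ∀ a w, 0 < p a * L a w → 0 < p a ∧ 0 < tilt p r1 r2 lam1 lam2 K a w ∧
      L a w = tilt p r1 r2 lam1 lam2 K a w / Z a := by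
    intro a w h
    have ha : 0 < p a := pos_of_mul_pos_left h ((hL a).1 w)
    have hl : 0 < L a w := pos_of_mul_pos_right h (hp.1 a)
    have e : L a w = tilt p r1 r2 lam1 lam2 K a w / Z a := by simp only [hLdef, ha, if_true]
    refine ⟨ha, ?_, e⟩
    rw [e] at hl
    exact (div_pos_iff_of_pos_right (hZpos a ha)).1 hl
  refine ⟨L, hL, ?_⟩
  have hsum : ∑ a, p a * -Real.logb 2 (Z a)
      = ∑ a, ∑ w, p a * L a w * (Real.logb 2 (L a w) - Real.logb 2 (outW p K w)
        - expo p r1 r2 lam1 lam2 K a w) := by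
    refine Finset.sum_congr rfl fun a _ => ?_
    have e : p a * -Real.logb 2 (Z a) = ∑ w, p a * L a w * -Real.logb 2 (Z a) := by
      rw [← Finset.sum_mul, ← Finset.mul_sum, (hL a).2, mul_one]
    rw [e]
    refine Finset.sum_congr rfl fun w _ => ?_
    rcases (mul_nonneg (hp.1 a) ((hL a).1 w)).eq_or_lt with h | h
    · simp [← h]
    · obtain ⟨ha, ht, e⟩ := hpos a w h
      congr 1
      rw [e, Real.logb_div ht.ne' (hZpos a ha).ne', (of_tilt_pos hp hK _ _ _ _ ht).2.2.2]
      ring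
  rw [hsum, sum_expo hp K r1 r2 lam1 lam2 hL]
  have b1 := mutInfoW_le hp hL (outW p K) (outW_nonneg hp hK) (sum_outW hp hK).le
    fun a w h => (of_tilt_pos hp hK _ _ _ _ (hpos a w h).2.1).1
  have b2 := condEnt_le hp hL Prod.fst (condXW p K) (condXW_nonneg hp hK) (sum_condXW_le p K)
    fun a w h => (of_tilt_pos hp hK _ _ _ _ (hpos a w h).2.1).2.1
  have b3 := condEnt_le hp hL Prod.snd (condYW p K) (condYW_nonneg hp hK) (sum_condYW_le p K)
    fun a w h => (of_tilt_pos hp hK _ _ _ _ (hpos a w h).2.1).2.2.1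
  rw [← condEntX_eq] at b2
  rw [← condEntY_eq] at b3
  gcongr

end Tilted

end GWProof

/-- the tilted information density satisfies
`E[ȷ_XY(X,Y)] = R(r1*,r2*|P_XY)`. -/
theorem expected_tilted_info_eq_R
    {𝒳 𝒴 : Type*} [Fintype 𝒳] [Fintype 𝒴]
    (p : 𝒳 × 𝒴 → ℝ) (hp : IsProb p)
    (r1s r2s : ℝ) (hr1 : 0 < r1s) (hr2 : 0 < r2s)
    (hR : 0 < Rgw p r1s r2s)
    (lam1 lam2 : ℝ)
    (hd1 : HasDerivAt (fun r => Rgw p r r2s) (-lam1) r1s)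
    (hd2 : HasDerivAt (fun r => Rgw p r1s r) (-lam2) r2s)
    (hl1 : 0 < lam1) (hl2 : 0 < lam2)
    {k : ℕ} (K : 𝒳 × 𝒴 → Fin k → ℝ) (hK : IsOptChannel p r1s r2s K) :
    ∑ a : 𝒳 × 𝒴, p a * tiltedInfo p r1s r2s lam1 lam2 K a.1 a.2 = Rgw p r1s r2s := by
  obtain ⟨-, hKc, hX, hY, hI⟩ := hK
  have e : ∑ a : 𝒳 × 𝒴, p a * tiltedInfo p r1s r2s lam1 lam2 K a.1 a.2
      = ∑ a, p a * -Real.logb 2 (∑ w, GWProof.tilt p r1s r2s lam1 lam2 K a w) := rfl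
  rw [e]
  apply le_antisymm
  · have h := GWProof.tilted_le hp hKc r1s r2s lam1 lam2
    nlinarith
  · obtain ⟨L, hL, h⟩ := GWProof.exists_le_tilted hp hKc r1s r2s lam1 lam2 hl1.le hl2.le
    have := GWProof.subgradient hp hR hd1 hd2 ⟨k, K, hKc, hX, hY, hI.le⟩
      ⟨k, L, hL, le_rfl, le_rfl, le_rfl⟩
    linarith
end

section
/- Let m = |supp(P_XY)| with the support elements labelled 1,…,m, and parametrize distributions P supported on supp(P_XY) by θ(P) = (P(1),…,P(m−1)) ∈ ℝ^{m−1}; let ξ = θ(P_XY) and write P_θ for the distribution with parameter θ. Suppose that on a neighborhood 𝒩(ξ) of ξ there is a family θ ↦ P*_{W|X_θY_θ} of optimal test channels achieving R(r1*,r2*| P_θ) that is differentiable in θ, that supp(P*_{W|X_ξY_ξ}(·|x,y)) ⊆ supp(P*_{W|X_θY_θ}(·|x,y)) for all (x,y) and θ ∈ 𝒩(ξ), that the optimal test channels meet the constraints with equality (H(X_ξ|W_ξ*) = r1*, H(Y_ξ|W_ξ*) = r2*), and that λ_{i,θ}* := −∂R(r1,r2|P_θ)/∂r_i at (r1*,r2*)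 exist, are positive, and are differentiable in θ. Then for each i = 1,…,m−1, ∂R(r1*,r2*|P_θ)/∂θ_i evaluated at θ = ξ equals ȷ_XY(i) − ȷ_XY(m). -/
/-!
The derivative is computed by an envelope argument in which the source and the test channel
trade places.

*Supporting plane.* Time sharing, combined with a Carathéodory reduction of the auxiliary alphabet
(`exists_feas_le`), gives a convexity inequality for `R(·,·|P)` in the rates (`time_sharing`).
Hence the partial derivatives `-λ₁, -λ₂` at `(r₁, r₂)` are the slopes of a supporting plane:
for every test channel, whatever its rates,
`R(r₁, r₂|P) ≤ I(W ∧ X,Y) + λ₁ (H(X|W) - r₁) + λ₂ (H(Y|W) - r₂)` (`dual_bound`).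

*Relaxation.* By Gibbs' inequality the right-hand side is at most
`∑ a, P(a) J(a)`, where the letter-wise cost `J` (`Jf`) is built from the channel and arbitrary
auxiliary distributions in place of `P_W`, `P_{X|W}`, `P_{Y|W}` (`lagrangian_le`), with equality
for the induced ones (`lagrangian_eq`). For fixed auxiliary distributions this bound is linear in
the source.

*Squeeze.* Write `P_t` for the source whose `i`-th parameter is `t`. Using the optimal channel at
`ξ` as a competitor for `P_t`, and the optimal channel at `P_t` as a competitor for `P_XY`, each
with its own induced distributions, bounds `R(P_t) - R(P_XY)` from above and from below by
`(t - ξ i)` times a difference of values of `J` at the letters `i` and `m`. Both slopes converge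
to the same limit: `λ` is continuous in the parameter for the upper one, and for the lower one `J`
is continuous in the source and the channel, also where entries of the channel vanish
(`tendsto_Jf`). So `hasDerivAt_of_squeeze` applies, and only continuity of the family of channels
enters.

*Tilted density.* An optimal channel also minimizes the relaxed Lagrangian with its own induced
distributions held fixed, and the minimal value of that problem at a letter of the support is the
tilted information density, so `J = ȷ_XY` there (`Jf_eq_Lam`).
-/

open Finset Filter MeasureTheory

attribute [local instance] Classical.propDecidable

open GW

namespace GWAux

/-! ### Real-analysis and linear-programming tools -/

open Real in
/-- Gibbs' inequality in base 2. -/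
lemma gibbs {ι : Type*} [Fintype ι] (u v : ι → ℝ) (hu : ∀ i, 0 ≤ u i) (hv : ∀ i, 0 ≤ v i)
    (huv : ∀ i, 0 < u i → 0 < v i) (hs : ∑ i, v i ≤ ∑ i, u i) :
    0 ≤ ∑ i, u i * (logb 2 (u i) - logb 2 (v i)) := by
  have h2 : 0 < log 2 := log_pos (by norm_num)
  have key : ∀ i, (u i - v i) / log 2 ≤ u i * (logb 2 (u i) - logb 2 (v i)) := by
    intro i
    rcases (hu i).eq_or_lt with h0 | h0
    · rw [← h0]
      simp only [zero_sub, zero_mul]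
      exact div_nonpos_of_nonpos_of_nonneg (by linarith [hv i]) h2.le
    · have hvi := huv i h0
      have h1 : log (v i / u i) ≤ v i / u i - 1 := log_le_sub_one_of_pos (div_pos hvi h0)
      rw [log_div hvi.ne' h0.ne'] at h1
      have h3 : u i * (log (v i) - log (u i)) ≤ v i - u i := by
        calc u i * (log (v i) - log (u i)) ≤ u i * (v i / u i - 1) :=
              mul_le_mul_of_nonneg_left h1 h0.le
          _ = v i - u i := by field_simp
      unfold logb
      rw [← sub_div, ← mul_div_assoc]
      exact div_le_div_of_nonneg_right (by linarith) h2.le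
  calc (0 : ℝ) ≤ (∑ i, u i - ∑ i, v i) / log 2 := div_nonneg (by linarith) h2.le
    _ = ∑ i, (u i - v i) / log 2 := by rw [← Finset.sum_sub_distrib, Finset.sum_div]
    _ ≤ _ := Finset.sum_le_sum fun i _ => key i

/-- A one-sided minimum has nonnegative derivative. -/
lemma deriv_nonneg_of_right_min {φ : ℝ → ℝ} {D : ℝ} (hφ : HasDerivAt φ D 0)
    (h0 : φ 0 = 0) (h : ∀ᶠ δ in nhdsWithin (0 : ℝ) (Set.Ioi 0), 0 ≤ φ δ) : 0 ≤ D := by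
  have h1 := hφ.tendsto_slope.mono_left
    (nhdsWithin_mono (0 : ℝ) (fun x (hx : x ∈ Set.Ioi (0 : ℝ)) => (ne_of_gt hx : x ≠ 0)))
  refine ge_of_tendsto h1 ?_
  filter_upwards [h, self_mem_nhdsWithin] with δ hδ hpos
  rw [slope_def_field, h0]
  exact div_nonneg (by linarith) (by have : (0 : ℝ) < δ := hpos; linarith)

/-- Squeeze criterion for differentiability: the increment of `f` lies between two
linear terms whose slopes have a common limit. -/
lemma hasDerivAt_of_squeeze {f A B : ℝ → ℝ} {x c : ℝ}
    (hA : Tendsto A (nhds x) (nhds c)) (hB : Tendsto B (nhds x) (nhds c))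
    (hu : ∀ᶠ t in nhds x, f t - f x ≤ (t - x) * A t)
    (hl : ∀ᶠ t in nhds x, (t - x) * B t ≤ f t - f x) : HasDerivAt f c x := by
  rw [hasDerivAt_iff_isLittleO, Asymptotics.isLittleO_iff]
  intro ε hε
  have hA' := hA (Metric.ball_mem_nhds c hε)
  have hB' := hB (Metric.ball_mem_nhds c hε)
  filter_upwards [hu, hl, hA', hB'] with t h1 h2 h3 h4
  simp only [Set.mem_preimage, Metric.mem_ball, Real.dist_eq] at h3 h4
  simp only [smul_eq_mul, Real.norm_eq_abs]
  have e1 : (t - x) * (A t - c) ≤ ε * |t - x| := by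
    calc (t - x) * (A t - c) ≤ |(t - x) * (A t - c)| := le_abs_self _
      _ = |A t - c| * |t - x| := by rw [abs_mul, mul_comm]
      _ ≤ _ := mul_le_mul_of_nonneg_right h3.le (abs_nonneg _)
  have e2 : -(ε * |t - x|) ≤ (t - x) * (B t - c) := by
    have : |(t - x) * (B t - c)| ≤ ε * |t - x| := by
      rw [abs_mul, mul_comm]
      exact mul_le_mul_of_nonneg_right h4.le (abs_nonneg _)
    exact (abs_le.1 this).1
  rw [abs_le]
  constructor <;> nlinarith

open Real in
/-- `u log Z` passes to the limit even where `u → 0`, provided `Z` does not vanish faster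
than a constant multiple of `u`. -/
lemma tendsto_mul_logb {u Z : ℝ → ℝ} {u0 Z0 x c : ℝ} (hc : 0 < c)
    (hu : Tendsto u (nhds x) (nhds u0)) (hZ : 0 < u0 → 0 < Z0 ∧ Tendsto Z (nhds x) (nhds Z0))
    (hu0 : 0 ≤ u0)
    (hb : ∀ᶠ t in nhds x, 0 ≤ u t ∧ (0 < u t → c * u t ≤ Z t ∧ Z t ≤ 1)) :
    Tendsto (fun t => u t * logb 2 (Z t)) (nhds x) (nhds (u0 * logb 2 Z0)) := by
  rcases hu0.eq_or_lt with h0 | h0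
  · subst h0
    rw [zero_mul]
    have hlim : Tendsto (fun t => u t * logb 2 c + u t * log (u t) / log 2) (nhds x) (nhds 0) := by
      have h1 : Tendsto (fun t => u t * log (u t)) (nhds x) (nhds 0) := by
        have := (continuous_mul_log.tendsto 0).comp hu
        simpa [Function.comp_def] using this
      have := (hu.mul_const (logb 2 c)).add (h1.div_const (log 2))
      simpa using this
    refine squeeze_zero_norm' (a := fun t => -(u t * logb 2 c + u t * log (u t) / log 2)) ?_
      (by simpa using hlim.neg)
    filter_upwards [hb] with t ht
    rcases ht.1.eq_or_lt with h | h
    · rw [← h]; simp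
    · obtain ⟨h1, h2⟩ := ht.2 h
      have hcu : 0 < c * u t := mul_pos hc h
      have hZp : 0 < Z t := lt_of_lt_of_le hcu h1
      have h3 : logb 2 (c * u t) ≤ logb 2 (Z t) := logb_le_logb_of_le (by norm_num) hcu h1
      have h4 : logb 2 (Z t) ≤ 0 := logb_nonpos (by norm_num) hZp.le h2
      rw [logb_mul hc.ne' h.ne'] at h3
      rw [norm_mul, Real.norm_eq_abs, Real.norm_eq_abs, abs_of_pos h, abs_of_nonpos h4]
      have : u t * log (u t) / log 2 = u t * logb 2 (u t) := by unfold logb; ring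
      rw [this]
      nlinarith
  · obtain ⟨hZp, hZt⟩ := hZ h0
    refine hu.mul ?_
    have := (hZt.log hZp.ne').div_const (log 2)
    simpa [logb] using this

/-- Carathéodory reduction for linear programs: a nonnegative combination of the vectors
`V i` can be rewritten with at most `finrank E` nonzero weights without increasing a linear
objective `g`. The hypothesis `hb` says that the objective is constant along the recession
directions of the feasible polyhedron. -/
lemma lp_reduce {ι E : Type*} [Fintype ι] [AddCommGroup E] [Module ℝ E]
    [FiniteDimensional ℝ E] (V : ι → E) (g : ι → ℝ)
    (hb : ∀ d : ι → ℝ, (∀ i, 0 ≤ d i) → ∑ i, d i • V i = 0 → ∑ i, d i * g i = 0) :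
    ∀ (n : ℕ) (c : ι → ℝ), (∀ i, 0 ≤ c i) → (univ.filter fun i => c i ≠ 0).card ≤ n →
      ∃ c' : ι → ℝ, (∀ i, 0 ≤ c' i) ∧ ∑ i, c' i • V i = ∑ i, c i • V i ∧
        ∑ i, c' i * g i ≤ ∑ i, c i * g i ∧
        (univ.filter fun i => c' i ≠ 0).card ≤ Module.finrank ℝ E := by
  intro n
  induction n with
  | zero => exact fun c hc h => ⟨c, hc, rfl, le_rfl, h.trans (Nat.zero_le _)⟩
  | succ n ih =>
    intro c hc hcard
    by_cases hle : (univ.filter fun i => c i ≠ 0).card ≤ Module.finrank ℝ E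
    · exact ⟨c, hc, rfl, le_rfl, hle⟩
    have hlin : ¬ LinearIndependent ℝ (fun i : {i // c i ≠ 0} => V i) := by
      intro hli
      have := hli.fintype_card_le_finrank
      rw [Fintype.card_subtype] at this
      exact hle this
    obtain ⟨d0, hd0, ⟨j0, hj0⟩, hne⟩ := Fintype.not_linearIndependent_iff.1 hlin
    -- A kernel direction supported on the support of `c`, extended by zero.
    obtain ⟨d, hdV, hdsupp, j, hj⟩ : ∃ d : ι → ℝ, ∑ i, d i • V i = 0 ∧
        (∀ i, c i = 0 → d i = 0) ∧ ∃ j, d j ≠ 0 := by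
      refine ⟨fun i => if h : c i ≠ 0 then d0 ⟨i, h⟩ else 0, ?_, ?_, j0, ?_⟩
      · rw [← hd0]
        symm
        rw [← Finset.sum_subset (Finset.subset_univ (univ.filter fun i => c i ≠ 0))]
        · rw [Finset.sum_subtype (univ.filter fun i => c i ≠ 0) (p := fun i => c i ≠ 0) (by simp)]
          exact Finset.sum_congr rfl fun i _ => by simp [i.2]
        · intro i _ hi
          simp only [mem_filter, mem_univ, true_and] at hi
          simp [hi]
      · intro i hi; simp [hi]
      · simpa [hj0] using hne
    -- A sign for which the objective does not increase and some weight decreases.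
    obtain ⟨d, hdV, hdsupp, hdg, j, hj⟩ : ∃ d : ι → ℝ, ∑ i, d i • V i = 0 ∧
        (∀ i, c i = 0 → d i = 0) ∧ ∑ i, d i * g i ≤ 0 ∧ ∃ j, d j < 0 := by
      have hnegV : ∑ i, (-d) i • V i = 0 := by simp [Finset.sum_neg_distrib, hdV]
      have hnegg : ∑ i, (-d) i * g i = - ∑ i, d i * g i := by simp [Finset.sum_neg_distrib]
      by_cases h1 : ∀ i, 0 ≤ d i
      · refine ⟨-d, hnegV, fun i hi => by simp [hdsupp i hi], ?_, j, ?_⟩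
        · rw [hnegg, hb d h1 hdV]; simp
        · have := lt_of_le_of_ne (h1 j) (Ne.symm hj)
          simpa using this
      · by_cases h2 : ∀ i, 0 ≤ (-d) i
        · refine ⟨d, hdV, hdsupp, ?_, ?_⟩
          · have := hb (-d) h2 hnegV
            rw [hnegg] at this; linarith
          · push Not at h1; exact h1
        · push Not at h1 h2
          rcases le_total (∑ i, d i * g i) 0 with h | h
          · exact ⟨d, hdV, hdsupp, h, h1⟩
          · exact ⟨-d, hnegV, fun i hi => by simp [hdsupp i hi], by rw [hnegg]; linarith, h2⟩
    obtain ⟨s, hs, hmin⟩ := Finset.exists_min_image (univ.filter fun i => d i < 0)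
      (fun i => c i / (-d i)) ⟨j, by simpa using hj⟩
    simp only [mem_filter, mem_univ, true_and] at hs hmin
    have hcs : c s ≠ 0 := fun h => hs.ne (hdsupp s h)
    set τ := c s / (-d s) with hτ
    have hτ0 : 0 ≤ τ := div_nonneg (hc s) (by linarith)
    have hc1 : ∀ i, 0 ≤ c i + τ * d i := by
      intro i
      by_cases hi : d i < 0
      · have := hmin i hi
        rw [le_div_iff₀ (by linarith)] at this
        linarith
      · push Not at hi
        exact add_nonneg (hc i) (mul_nonneg hτ0 hi)
    have hsz : c s + τ * d s = 0 := by
      have hs0 := hs.ne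
      rw [hτ]; field_simp; simp
    obtain ⟨c', h1, h2, h3, h4⟩ := ih (fun i => c i + τ * d i) hc1 (by
      have : (univ.filter fun i => c i + τ * d i ≠ 0).card <
          (univ.filter fun i => c i ≠ 0).card := by
        apply Finset.card_lt_card
        rw [Finset.ssubset_iff_of_subset]
        · exact ⟨s, by simpa using hcs, by simpa using hsz⟩
        · intro i hi
          simp only [mem_filter, mem_univ, true_and] at hi ⊢
          intro h
          apply hi
          simp [h, hdsupp i h]
      omega)
    refine ⟨c', h1, ?_, ?_, h4⟩
    · rw [h2]
      simp only [add_smul, Finset.sum_add_distrib, mul_smul]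
      rw [← Finset.smul_sum, hdV]; simp
    · refine h3.trans ?_
      simp only [add_mul, Finset.sum_add_distrib, mul_assoc]
      rw [← Finset.mul_sum]
      nlinarith

/-! ### Column functionals of a test channel -/

section columns

open Real

/-- Unnormalised entropy `-∑ m log (m / ∑ m)` of a nonnegative vector. -/
noncomputable def rowH {ι : Type*} [Fintype ι] (m : ι → ℝ) : ℝ :=
  -∑ x, m x * (logb 2 (m x) - logb 2 (∑ x, m x))

lemma rowH_smul {ι : Type*} [Fintype ι] (c : ℝ) (m : ι → ℝ) (hm : ∀ x, 0 ≤ m x) :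
    rowH (fun x => c * m x) = c * rowH m := by
  unfold rowH
  have e : ∑ x, c * m x = c * ∑ x, m x := (Finset.mul_sum _ _ _).symm
  have hpos : ∀ x, 0 < m x → 0 < ∑ x, m x := fun x h1 => lt_of_lt_of_le h1
    (Finset.single_le_sum (f := m) (fun i _ => hm i) (Finset.mem_univ x))
  rw [e]
  generalize ∑ x, m x = S at hpos
  rw [mul_neg, Finset.mul_sum]
  congr 1
  refine Finset.sum_congr rfl fun x _ => ?_
  rcases eq_or_ne c 0 with h | h
  · simp [h]
  rcases (hm x).eq_or_lt with h1 | h1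
  · simp [← h1]
  rw [logb_mul h h1.ne', logb_mul h (hpos x h1).ne']
  ring

/-- Conditional entropy as a sum of column entropies. -/
lemma ent_sub_ent {ι 𝒲 : Type*} [Fintype ι] [Fintype 𝒲] (m : 𝒲 × ι → ℝ) (o : 𝒲 → ℝ)
    (ho : ∀ w, o w = ∑ x, m (w, x)) :
    ent m - ent o = ∑ w, rowH (fun x => m (w, x)) := by
  unfold ent rowH
  rw [Fintype.sum_prod_type, sub_neg_eq_add, neg_add_eq_sub, ← Finset.sum_sub_distrib]
  refine Finset.sum_congr rfl fun w _ => ?_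
  simp only [mul_sub, Finset.sum_sub_distrib]
  rw [← ho, ← Finset.sum_mul, ← ho]
  ring

/-- Gibbs' inequality for column entropies. -/
lemma rowH_le {ι : Type*} [Fintype ι] (m Q : ι → ℝ) (hm : ∀ x, 0 ≤ m x) (hQ : ∀ x, 0 ≤ Q x)
    (hQ1 : ∑ x, Q x ≤ 1) (hpos : ∀ x, 0 < m x → 0 < Q x) :
    rowH m ≤ -∑ x, m x * logb 2 (Q x) := by
  have hs : 0 ≤ ∑ x, m x := Finset.sum_nonneg fun x _ => hm x
  have hsp : ∀ x, 0 < m x → 0 < ∑ x, m x := fun x h1 => lt_of_lt_of_le h1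
    (Finset.single_le_sum (f := m) (fun i _ => hm i) (Finset.mem_univ x))
  have := gibbs m (fun x => (∑ x, m x) * Q x) hm (fun x => mul_nonneg hs (hQ x))
    (fun x h => mul_pos (hsp x h) (hpos x h)) (by
      rw [← Finset.mul_sum]
      exact mul_le_of_le_one_right hs hQ1)
  have e : ∑ x, m x * (logb 2 (m x) - logb 2 ((∑ x, m x) * Q x)) =
      -rowH m - ∑ x, m x * logb 2 (Q x) := by
    unfold rowH
    rw [neg_neg, ← Finset.sum_sub_distrib]
    refine Finset.sum_congr rfl fun x _ => ?_
    rcases (hm x).eq_or_lt with h1 | h1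
    · simp [← h1]
    rw [logb_mul (hsp x h1).ne' (hpos x h1).ne']
    ring
  linarith

variable {𝒳 𝒴 𝒲 : Type*} [Fintype 𝒳] [Fintype 𝒴] [Fintype 𝒲]

/-- Mass `P_W(w)` of an output symbol whose channel column is `q`. -/
def colO (p : 𝒳 × 𝒴 → ℝ) (q : 𝒳 × 𝒴 → ℝ) : ℝ := ∑ a, p a * q a

/-- Contribution to `H(X|W)` of an output symbol with channel column `q`. -/
noncomputable def colHX (p : 𝒳 × 𝒴 → ℝ) (q : 𝒳 × 𝒴 → ℝ) : ℝ :=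
  rowH (fun x => ∑ y, p (x, y) * q (x, y))

/-- Contribution to `H(Y|W)` of an output symbol with channel column `q`. -/
noncomputable def colHY (p : 𝒳 × 𝒴 → ℝ) (q : 𝒳 × 𝒴 → ℝ) : ℝ :=
  rowH (fun y => ∑ x, p (x, y) * q (x, y))

/-- Contribution to `I(W ∧ X,Y)` of an output symbol with channel column `q`. -/
noncomputable def colI (p : 𝒳 × 𝒴 → ℝ) (q : 𝒳 × 𝒴 → ℝ) : ℝ :=
  ∑ a, p a * q a * (logb 2 (q a) - logb 2 (colO p q))

lemma condEntX_eq (p : 𝒳 × 𝒴 → ℝ) (K : 𝒳 × 𝒴 → 𝒲 → ℝ) :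
    condEntX p K = ∑ w, colHX p (fun a => K a w) :=
  ent_sub_ent (margWX p K) (outW p K) fun w => by
    simp only [outW, margWX, Fintype.sum_prod_type]

lemma condEntY_eq (p : 𝒳 × 𝒴 → ℝ) (K : 𝒳 × 𝒴 → 𝒲 → ℝ) :
    condEntY p K = ∑ w, colHY p (fun a => K a w) :=
  ent_sub_ent (margWY p K) (outW p K) fun w => by
    simp only [outW, margWY, Fintype.sum_prod_type_right]

lemma mutInfoW_eq (p : 𝒳 × 𝒴 → ℝ) (K : 𝒳 × 𝒴 → 𝒲 → ℝ) (hK : IsChannel K) :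
    mutInfoW p K = ∑ w, colI p (fun a => K a w) := by
  have e1 : ent p = -∑ w, ∑ a, p a * K a w * logb 2 (p a) := by
    unfold ent
    rw [Finset.sum_comm]
    congr 1
    refine Finset.sum_congr rfl fun a _ => ?_
    rw [← Finset.sum_mul, ← Finset.mul_sum, (hK a).2, mul_one]
  have e2 : ent (jointW p K) =
      -∑ w, ∑ a, (p a * K a w * logb 2 (p a) + p a * K a w * logb 2 (K a w)) := by
    unfold ent jointW
    rw [Fintype.sum_prod_type]
    congr 1
    refine Finset.sum_congr rfl fun w _ => Finset.sum_congr rfl fun a _ => ?_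
    show p a * K a w * logb 2 (p a * K a w) = _
    rcases eq_or_ne (p a) 0 with h | h
    · simp [h]
    rcases eq_or_ne (K a w) 0 with h' | h'
    · simp [h']
    rw [logb_mul h h']; ring
  have e3 : ent (outW p K) = -∑ w, ∑ a, p a * K a w * logb 2 (colO p fun a => K a w) := by
    unfold ent
    congr 1
    refine Finset.sum_congr rfl fun w _ => ?_
    rw [← Finset.sum_mul]; rfl
  unfold mutInfoW colI
  rw [e1, e2, e3]
  simp only [Finset.sum_add_distrib, mul_sub, Finset.sum_sub_distrib]
  ring

lemma colO_nonneg {p q : 𝒳 × 𝒴 → ℝ} (hp : ∀ a, 0 ≤ p a) (hq : ∀ a, 0 ≤ q a) :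
    0 ≤ colO p q := Finset.sum_nonneg fun a _ => mul_nonneg (hp a) (hq a)

lemma le_colO {p q : 𝒳 × 𝒴 → ℝ} (hp : ∀ a, 0 ≤ p a) (hq : ∀ a, 0 ≤ q a) (a : 𝒳 × 𝒴) :
    p a * q a ≤ colO p q :=
  Finset.single_le_sum (f := fun a => p a * q a) (fun a _ => mul_nonneg (hp a) (hq a))
    (Finset.mem_univ a)

lemma colHX_smul {p q : 𝒳 × 𝒴 → ℝ} (hp : ∀ a, 0 ≤ p a) (hq : ∀ a, 0 ≤ q a) (c : ℝ) :
    colHX p (fun a => c * q a) = c * colHX p q := by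
  unfold colHX
  rw [← rowH_smul c _ fun x => Finset.sum_nonneg fun y _ => mul_nonneg (hp _) (hq _)]
  congr 1; ext x; rw [Finset.mul_sum]
  exact Finset.sum_congr rfl fun y _ => by ring

lemma colHY_smul {p q : 𝒳 × 𝒴 → ℝ} (hp : ∀ a, 0 ≤ p a) (hq : ∀ a, 0 ≤ q a) (c : ℝ) :
    colHY p (fun a => c * q a) = c * colHY p q := by
  unfold colHY
  rw [← rowH_smul c _ fun x => Finset.sum_nonneg fun y _ => mul_nonneg (hp _) (hq _)]
  congr 1; ext x; rw [Finset.mul_sum]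
  exact Finset.sum_congr rfl fun y _ => by ring

lemma colI_smul {p q : 𝒳 × 𝒴 → ℝ} (hp : ∀ a, 0 ≤ p a) (hq : ∀ a, 0 ≤ q a) (c : ℝ) :
    colI p (fun a => c * q a) = c * colI p q := by
  have e : colO p (fun a => c * q a) = c * colO p q := by
    unfold colO; rw [Finset.mul_sum]; exact Finset.sum_congr rfl fun a _ => by ring
  unfold colI
  rw [e, Finset.mul_sum]
  refine Finset.sum_congr rfl fun a _ => ?_
  rcases eq_or_ne c 0 with h | h
  · simp [h]
  rcases (hp a).eq_or_lt with h1 | h1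
  · simp [← h1]
  rcases (hq a).eq_or_lt with h2 | h2
  · simp [← h2]
  have h3 : 0 < colO p q := lt_of_lt_of_le (mul_pos h1 h2) (le_colO hp hq a)
  rw [logb_mul h h2.ne', logb_mul h h3.ne']
  ring

lemma colHX_zero (p : 𝒳 × 𝒴 → ℝ) : colHX p (fun _ => 0) = 0 := by simp [colHX, rowH]
lemma colHY_zero (p : 𝒳 × 𝒴 → ℝ) : colHY p (fun _ => 0) = 0 := by simp [colHY, rowH]
lemma colI_zero (p : 𝒳 × 𝒴 → ℝ) : colI p (fun _ => 0) = 0 := by simp [colI]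

/-! ### Cardinality reduction and the dual bound -/

/-- The set of values over which the infimum defining `Rgw` is taken. -/
def feas (p : 𝒳 × 𝒴 → ℝ) (r1 r2 : ℝ) : Set ℝ :=
  { ρ : ℝ | ∃ k, k ≤ Fintype.card 𝒳 * Fintype.card 𝒴 + 2 ∧
    ∃ K : 𝒳 × 𝒴 → Fin k → ℝ, IsChannel K ∧
      condEntX p K ≤ r1 ∧ condEntY p K ≤ r2 ∧ ρ = mutInfoW p K }

lemma mutInfoW_nonneg {p : 𝒳 × 𝒴 → ℝ} (hp : IsProb p) {K : 𝒳 × 𝒴 → 𝒲 → ℝ}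
    (hK : IsChannel K) : 0 ≤ mutInfoW p K := by
  rw [mutInfoW_eq p K hK]
  refine Finset.sum_nonneg fun w _ => ?_
  have hq : ∀ a, 0 ≤ K a w := fun a => (hK a).1 w
  have hO := colO_nonneg hp.1 hq
  have := gibbs (fun a => p a * K a w) (fun a => p a * colO p (fun a => K a w))
    (fun a => mul_nonneg (hp.1 a) (hq a)) (fun a => mul_nonneg (hp.1 a) hO)
    (fun a h => by
      have h0 : p a ≠ 0 := left_ne_zero_of_mul h.ne'
      exact mul_pos (lt_of_le_of_ne (hp.1 a) h0.symm) (lt_of_lt_of_le h (le_colO hp.1 hq a)))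
    (by rw [← Finset.sum_mul, hp.2, one_mul]; rfl)
  refine this.trans_eq (Finset.sum_congr rfl fun a _ => ?_)
  rcases (hp.1 a).eq_or_lt with h1 | h1
  · simp [← h1]
  rcases (hq a).eq_or_lt with h2 | h2
  · simp [← h2]
  have h3 := lt_of_lt_of_le (mul_pos h1 h2) (le_colO hp.1 hq a)
  rw [logb_mul h1.ne' h2.ne', logb_mul h1.ne' h3.ne']
  ring

lemma feas_bddBelow {p : 𝒳 × 𝒴 → ℝ} (hp : IsProb p) (r1 r2 : ℝ) : BddBelow (feas p r1 r2) := by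
  refine ⟨0, ?_⟩
  rintro ρ ⟨k, _, K, hK, _, _, rfl⟩
  exact mutInfoW_nonneg hp hK

/-- The bound `|𝒲| ≤ |𝒳||𝒴| + 2` is no restriction: any finite family of channel columns can
be reweighted to one obeying it, with the same conditional entropies and no larger mutual
information. -/
lemma exists_feas_le {p : 𝒳 × 𝒴 → ℝ} (hp : IsProb p) (q : 𝒲 → 𝒳 × 𝒴 → ℝ)
    (hq : ∀ w a, 0 ≤ q w a) (hq1 : ∀ a, ∑ w, q w a = 1) {r1 r2 : ℝ}
    (h1 : ∑ w, colHX p (q w) ≤ r1) (h2 : ∑ w, colHY p (q w) ≤ r2) :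
    ∃ ρ ∈ feas p r1 r2, ρ ≤ ∑ w, colI p (q w) := by
  obtain ⟨c, hc, hcV, hcg, hcard⟩ := lp_reduce
    (E := (𝒳 × 𝒴 → ℝ) × ℝ × ℝ) (fun w => (q w, colHX p (q w), colHY p (q w)))
    (fun w => colI p (q w)) (by
      intro d hd hdV
      have hz := congrArg Prod.fst hdV
      simp only [Prod.fst_sum, Prod.smul_fst, Prod.fst_zero] at hz
      refine Finset.sum_eq_zero fun w _ => ?_
      rcases eq_or_ne (d w) 0 with h | h
      · simp [h]
      have : q w = fun _ => 0 := by
        ext a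
        have ha := congrFun hz a
        simp only [Finset.sum_apply, Pi.smul_apply, smul_eq_mul, Pi.zero_apply] at ha
        have := (Finset.sum_eq_zero_iff_of_nonneg
          (fun w _ => mul_nonneg (hd w) (hq w a))).1 ha w (Finset.mem_univ w)
        exact (mul_eq_zero.1 this).resolve_left h
      rw [this, colI_zero, mul_zero])
    _ (fun _ => 1) (fun _ => zero_le_one) le_rfl
  simp only [one_smul, one_mul] at hcV hcg
  have hV1 := congrArg Prod.fst hcV
  have hV2 := congrArg (fun z => z.2.1) hcV
  have hV3 := congrArg (fun z => z.2.2) hcV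
  simp only [Prod.fst_sum, Prod.snd_sum, Prod.smul_fst, Prod.smul_snd, smul_eq_mul] at hV1 hV2 hV3
  let ε := (Fintype.equivFin {w // c w ≠ 0})
  -- Sums over the retained symbols agree with sums over all symbols.
  have hsum : ∀ f : 𝒲 → ℝ, (∀ w, c w = 0 → f w = 0) →
      ∑ i, f (ε.symm i).1 = ∑ w, f w := by
    intro f hf
    rw [Equiv.sum_comp ε.symm (fun w => f w.1),
      ← Finset.sum_subset (Finset.subset_univ (univ.filter fun w => c w ≠ 0)),
      Finset.sum_subtype (univ.filter fun w => c w ≠ 0) (p := fun w => c w ≠ 0) (by simp)]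
    intro w _ hw
    simp only [mem_filter, mem_univ, true_and, not_not] at hw
    exact hf w hw
  refine ⟨_, ⟨Fintype.card {w // c w ≠ 0}, ?_, fun a i => c (ε.symm i).1 * q (ε.symm i).1 a,
    ?_, ?_, ?_, rfl⟩, ?_⟩
  · rw [Fintype.card_subtype]
    refine hcard.trans ?_
    simp [Module.finrank_prod]
  · refine fun a => ⟨fun i => mul_nonneg (hc _) (hq _ _), ?_⟩
    rw [hsum (fun w => c w * q w a) (fun w hw => by simp [hw]), ← hq1 a]
    have := congrFun hV1 a
    simpa [Finset.sum_apply] using this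
  · rw [condEntX_eq]
    simp only [colHX_smul hp.1 (hq _)]
    rw [hsum (fun w => c w * colHX p (q w)) (fun w hw => by simp [hw]), hV2]
    exact h1
  · rw [condEntY_eq]
    simp only [colHY_smul hp.1 (hq _)]
    rw [hsum (fun w => c w * colHY p (q w)) (fun w hw => by simp [hw]), hV3]
    exact h2
  · rw [mutInfoW_eq]
    · simp only [colI_smul hp.1 (hq _)]
      rw [hsum (fun w => c w * colI p (q w)) (fun w hw => by simp [hw])]
      exact hcg
    · refine fun a => ⟨fun i => mul_nonneg (hc _) (hq _ _), ?_⟩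
      rw [hsum (fun w => c w * q w a) (fun w hw => by simp [hw]), ← hq1 a]
      have := congrFun hV1 a
      simpa [Finset.sum_apply] using this

lemma rowH_single {ι : Type*} [Fintype ι] (m : ι → ℝ) (x0 : ι) (h : ∀ x, x ≠ x0 → m x = 0) :
    rowH m = 0 := by
  unfold rowH
  rw [neg_eq_zero]
  refine Finset.sum_eq_zero fun x _ => ?_
  rcases eq_or_ne x x0 with hx | hx
  · subst hx
    rw [Fintype.sum_eq_single x h, sub_self, mul_zero]
  · rw [h x hx, zero_mul]

/-- `W = (X,Y)` is always feasible. -/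
lemma feas_nonempty {p : 𝒳 × 𝒴 → ℝ} (hp : IsProb p) {r1 r2 : ℝ} (h1 : 0 ≤ r1) (h2 : 0 ≤ r2) :
    (feas p r1 r2).Nonempty := by
  obtain ⟨ρ, hρ, -⟩ := exists_feas_le hp (r1 := r1) (r2 := r2)
    (fun (w a : 𝒳 × 𝒴) => if a = w then (1 : ℝ) else 0)
    (fun w a => by split_ifs <;> simp) (fun a => by simp)
    (by
      rw [Finset.sum_eq_zero]
      · exact h1
      · intro w _
        refine rowH_single _ w.1 fun x hx => Finset.sum_eq_zero fun y _ => ?_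
        have : (x, y) ≠ w := fun h => hx (by rw [← h])
        simp [this])
    (by
      rw [Finset.sum_eq_zero]
      · exact h2
      · intro w _
        refine rowH_single _ w.2 fun y hy => Finset.sum_eq_zero fun x _ => ?_
        have : (x, y) ≠ w := fun h => hy (by rw [← h])
        simp [this])
  exact ⟨ρ, hρ⟩

/-- Time sharing between a channel `K` and near-optimal channels at two points displaced
along the coordinate axes, with weights proportional to `δ, 1, 1` so that the average rates
are exactly `(r1, r2)`. -/
lemma time_sharing {p : 𝒳 × 𝒴 → ℝ} (hp : IsProb p) {K : 𝒳 × 𝒴 → 𝒲 → ℝ} (hK : IsChannel K)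
    {r1 r2 δ : ℝ} (hr1 : 0 ≤ r1) (hr2 : 0 ≤ r2) (hδ : 0 < δ)
    (h1 : 0 ≤ r1 - δ * (condEntX p K - r1)) (h2 : 0 ≤ r2 - δ * (condEntY p K - r2)) :
    (2 + δ) * Rgw p r1 r2 ≤ δ * mutInfoW p K + Rgw p (r1 - δ * (condEntX p K - r1)) r2
      + Rgw p r1 (r2 - δ * (condEntY p K - r2)) := by
  refine le_of_forall_pos_le_add fun ε hε => ?_
  obtain ⟨ρ1, ⟨k1, _, K1, hK1, hX1, hY1, rfl⟩, hlt1⟩ :=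
    exists_lt_of_csInf_lt (feas_nonempty hp h1 hr2)
      (show sInf (feas p (r1 - δ * (condEntX p K - r1)) r2) <
        Rgw p (r1 - δ * (condEntX p K - r1)) r2 + ε / 2 from lt_add_of_pos_right _ (by linarith))
  obtain ⟨ρ2, ⟨k2, _, K2, hK2, hX2, hY2, rfl⟩, hlt2⟩ :=
    exists_lt_of_csInf_lt (feas_nonempty hp hr1 h2)
      (show sInf (feas p r1 (r2 - δ * (condEntY p K - r2))) <
        Rgw p r1 (r2 - δ * (condEntY p K - r2)) + ε / 2 from lt_add_of_pos_right _ (by linarith))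
  have hD : 0 < 2 + δ := by linarith
  have ha : 0 ≤ δ / (2 + δ) := by positivity
  have hb : 0 ≤ 1 / (2 + δ) := by positivity
  obtain ⟨ρ, hρ, hle⟩ := exists_feas_le hp (r1 := r1) (r2 := r2)
    (Sum.elim (fun w a => δ / (2 + δ) * K a w) (Sum.elim (fun w a => 1 / (2 + δ) * K1 a w)
      (fun w a => 1 / (2 + δ) * K2 a w)))
    (by
      rintro (w | w | w) a
      · exact mul_nonneg ha ((hK a).1 w)
      · exact mul_nonneg hb ((hK1 a).1 w)
      · exact mul_nonneg hb ((hK2 a).1 w))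
    (by
      intro a
      simp only [Fintype.sum_sum_type, Sum.elim_inl, Sum.elim_inr, ← Finset.mul_sum,
        (hK a).2, (hK1 a).2, (hK2 a).2]
      field_simp; ring)
    (by
      simp only [Fintype.sum_sum_type, Sum.elim_inl, Sum.elim_inr]
      simp only [colHX_smul hp.1 (fun a => (hK a).1 _), colHX_smul hp.1 (fun a => (hK1 a).1 _),
        colHX_smul hp.1 (fun a => (hK2 a).1 _), ← Finset.mul_sum, ← condEntX_eq]
      rw [div_mul_eq_mul_div, div_mul_eq_mul_div, div_mul_eq_mul_div, ← add_div, ← add_div,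
        div_le_iff₀ hD]
      nlinarith)
    (by
      simp only [Fintype.sum_sum_type, Sum.elim_inl, Sum.elim_inr]
      simp only [colHY_smul hp.1 (fun a => (hK a).1 _), colHY_smul hp.1 (fun a => (hK1 a).1 _),
        colHY_smul hp.1 (fun a => (hK2 a).1 _), ← Finset.mul_sum, ← condEntY_eq]
      rw [div_mul_eq_mul_div, div_mul_eq_mul_div, div_mul_eq_mul_div, ← add_div, ← add_div,
        div_le_iff₀ hD]
      nlinarith)
  simp only [Fintype.sum_sum_type, Sum.elim_inl, Sum.elim_inr] at hle
  simp only [colI_smul hp.1 (fun a => (hK a).1 _), colI_smul hp.1 (fun a => (hK1 a).1 _),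
    colI_smul hp.1 (fun a => (hK2 a).1 _), ← Finset.mul_sum, ← mutInfoW_eq p _ hK,
    ← mutInfoW_eq p _ hK1, ← mutInfoW_eq p _ hK2] at hle
  rw [div_mul_eq_mul_div, div_mul_eq_mul_div, div_mul_eq_mul_div, ← add_div, ← add_div,
        le_div_iff₀ hD] at hle
  have hR : Rgw p r1 r2 ≤ ρ := csInf_le (feas_bddBelow hp r1 r2) hρ
  nlinarith

/-- Lagrangian lower bound: since `R` is convex in the rates, its partial derivatives at
`(r1, r2)` are the slopes of a supporting plane. -/
lemma dual_bound {p : 𝒳 × 𝒴 → ℝ} (hp : IsProb p) {K : 𝒳 × 𝒴 → 𝒲 → ℝ} (hK : IsChannel K)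
    {r1 r2 l1 l2 : ℝ} (hr1 : 0 < r1) (hr2 : 0 < r2)
    (hd1 : HasDerivAt (fun r => Rgw p r r2) (-l1) r1)
    (hd2 : HasDerivAt (fun r => Rgw p r1 r) (-l2) r2) :
    Rgw p r1 r2 ≤ mutInfoW p K + l1 * (condEntX p K - r1) + l2 * (condEntY p K - r2) := by
  set u1 := condEntX p K - r1 with hu1
  set u2 := condEntY p K - r2 with hu2
  have a1 : HasDerivAt (fun δ : ℝ => r1 - δ * u1) (-u1) 0 := by
    simpa using ((hasDerivAt_id (0 : ℝ)).mul_const u1).const_sub r1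
  have a2 : HasDerivAt (fun δ : ℝ => r2 - δ * u2) (-u2) 0 := by
    simpa using ((hasDerivAt_id (0 : ℝ)).mul_const u2).const_sub r2
  have b1 : HasDerivAt (fun δ : ℝ => Rgw p (r1 - δ * u1) r2) (-l1 * -u1) 0 :=
    HasDerivAt.comp (h₂ := fun r => Rgw p r r2) (h := fun δ : ℝ => r1 - δ * u1) 0
      (by simpa using hd1) a1
  have b2 : HasDerivAt (fun δ : ℝ => Rgw p r1 (r2 - δ * u2)) (-l2 * -u2) 0 :=
    HasDerivAt.comp (h₂ := fun r => Rgw p r1 r) (h := fun δ : ℝ => r2 - δ * u2) 0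
      (by simpa using hd2) a2
  have b3 : HasDerivAt (fun δ : ℝ => δ * mutInfoW p K - (2 + δ) * Rgw p r1 r2)
      (mutInfoW p K - Rgw p r1 r2) 0 := by
    have := ((hasDerivAt_id (0 : ℝ)).mul_const (mutInfoW p K)).fun_sub
      (((hasDerivAt_id (0 : ℝ)).const_add 2).mul_const (Rgw p r1 r2))
    simpa using this
  have := deriv_nonneg_of_right_min ((b3.add b1).add b2)
    (by simp; ring) (by
      have c1 : ∀ᶠ δ in nhds (0 : ℝ), 0 < r1 - δ * u1 :=
        a1.continuousAt.eventually (lt_mem_nhds (by simpa using hr1))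
      have c2 : ∀ᶠ δ in nhds (0 : ℝ), 0 < r2 - δ * u2 :=
        a2.continuousAt.eventually (lt_mem_nhds (by simpa using hr2))
      filter_upwards [nhdsWithin_le_nhds c1, nhdsWithin_le_nhds c2, self_mem_nhdsWithin]
        with δ h1 h2 hδ
      have := time_sharing hp hK hr1.le hr2.le hδ h1.le h2.le
      simp only [Pi.add_apply]
      linarith)
  linarith

end columns

/-! ### The relaxed Lagrangian -/

section lagrangian

open Real

variable {𝒳 𝒴 𝒲 : Type*} [Fintype 𝒳] [Fintype 𝒴] [Fintype 𝒲]

/-- The contribution of the source letter `a` to the relaxed Lagrangian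
`D(K ‖ QW | p) + λ₁ (E[-log QX] - r₁) + λ₂ (E[-log QY] - r₂)`, per unit of mass `p a`. -/
noncomputable def Jf (r1 r2 l1 l2 : ℝ) (K : 𝒳 × 𝒴 → 𝒲 → ℝ) (QW : 𝒲 → ℝ) (QX : 𝒲 → 𝒳 → ℝ)
    (QY : 𝒲 → 𝒴 → ℝ) (a : 𝒳 × 𝒴) : ℝ :=
  ∑ w, K a w * (logb 2 (K a w) - logb 2 (QW w) - l1 * (r1 + logb 2 (QX w a.1))
    - l2 * (r2 + logb 2 (QY w a.2)))

/-- Auxiliary (sub)distributions that are positive wherever the joint law of `(X,Y,W)` is. -/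
structure Admissible (p : 𝒳 × 𝒴 → ℝ) (K : 𝒳 × 𝒴 → 𝒲 → ℝ) (QW : 𝒲 → ℝ) (QX : 𝒲 → 𝒳 → ℝ)
    (QY : 𝒲 → 𝒴 → ℝ) : Prop where
  W0 : ∀ w, 0 ≤ QW w
  W1 : ∑ w, QW w ≤ 1
  X0 : ∀ w x, 0 ≤ QX w x
  X1 : ∀ w, ∑ x, QX w x ≤ 1
  Y0 : ∀ w y, 0 ≤ QY w y
  Y1 : ∀ w, ∑ y, QY w y ≤ 1
  pos : ∀ a w, 0 < p a → 0 < K a w → 0 < QW w ∧ 0 < QX w a.1 ∧ 0 < QY w a.2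

lemma exists_pos_of_sum_pos {ι : Type*} [Fintype ι] {f : ι → ℝ} (hf : 0 < ∑ i, f i) :
    ∃ i, 0 < f i := by
  by_contra hcon
  push Not at hcon
  exact absurd hf (not_lt.2 (Finset.sum_nonpos fun i _ => hcon i))

lemma sum_outW {p : 𝒳 × 𝒴 → ℝ} (hp : IsProb p) {K : 𝒳 × 𝒴 → 𝒲 → ℝ} (hK : IsChannel K) :
    ∑ w, outW p K w = 1 := by
  unfold outW
  rw [Finset.sum_comm]
  simp only [← Finset.mul_sum, (hK _).2, mul_one, hp.2]

/-- Expectation of `Jf`: the divergence term and the two cross-entropy terms. -/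
lemma sum_Jf {p : 𝒳 × 𝒴 → ℝ} (hp : IsProb p) {K : 𝒳 × 𝒴 → 𝒲 → ℝ} (hK : IsChannel K)
    (r1 r2 l1 l2 : ℝ) (QW : 𝒲 → ℝ) (QX : 𝒲 → 𝒳 → ℝ) (QY : 𝒲 → 𝒴 → ℝ) :
    ∑ a, p a * Jf r1 r2 l1 l2 K QW QX QY a =
      (∑ w, ∑ a, p a * K a w * (logb 2 (K a w) - logb 2 (QW w)))
      + l1 * ((∑ w, -∑ x, margWX p K (w, x) * logb 2 (QX w x)) - r1)
      + l2 * ((∑ w, -∑ y, margWY p K (w, y) * logb 2 (QY w y)) - r2) := by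
  have eX : ∀ w, ∑ x, margWX p K (w, x) * logb 2 (QX w x) =
      ∑ a : 𝒳 × 𝒴, p a * K a w * logb 2 (QX w a.1) := fun w => by
    simp only [margWX, Fintype.sum_prod_type, Finset.sum_mul]
  have eY : ∀ w, ∑ y, margWY p K (w, y) * logb 2 (QY w y) =
      ∑ a : 𝒳 × 𝒴, p a * K a w * logb 2 (QY w a.2) := fun w => by
    simp only [margWY, Fintype.sum_prod_type_right, Finset.sum_mul]
  have e1 : ∑ w, ∑ a, p a * K a w = 1 := sum_outW hp hK
  have e2 : ∀ w a, p a * K a w * (logb 2 (K a w) - logb 2 (QW w) - l1 * (r1 + logb 2 (QX w a.1))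
      - l2 * (r2 + logb 2 (QY w a.2))) =
      p a * K a w * (logb 2 (K a w) - logb 2 (QW w))
      - l1 * (p a * K a w * logb 2 (QX w a.1)) - l2 * (p a * K a w * logb 2 (QY w a.2))
      - (l1 * r1 + l2 * r2) * (p a * K a w) := fun w a => by ring
  have e3 : ∑ a, p a * Jf r1 r2 l1 l2 K QW QX QY a = ∑ w, ∑ a, p a * K a w *
      (logb 2 (K a w) - logb 2 (QW w) - l1 * (r1 + logb 2 (QX w a.1))
      - l2 * (r2 + logb 2 (QY w a.2))) := by
    unfold Jf
    rw [Finset.sum_comm]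
    refine Finset.sum_congr rfl fun a _ => ?_
    rw [Finset.mul_sum]
    exact Finset.sum_congr rfl fun w _ => by ring
  rw [e3]
  simp only [e2, Finset.sum_sub_distrib, ← Finset.mul_sum, e1, eX, eY, Finset.sum_neg_distrib]
  ring

lemma margWX_nonneg {p : 𝒳 × 𝒴 → ℝ} (hp : IsProb p) {K : 𝒳 × 𝒴 → 𝒲 → ℝ} (hK : IsChannel K)
    (z : 𝒲 × 𝒳) : 0 ≤ margWX p K z :=
  Finset.sum_nonneg fun _ _ => mul_nonneg (hp.1 _) ((hK _).1 _)

lemma margWY_nonneg {p : 𝒳 × 𝒴 → ℝ} (hp : IsProb p) {K : 𝒳 × 𝒴 → 𝒲 → ℝ} (hK : IsChannel K)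
    (z : 𝒲 × 𝒴) : 0 ≤ margWY p K z :=
  Finset.sum_nonneg fun _ _ => mul_nonneg (hp.1 _) ((hK _).1 _)

lemma outW_nonneg {p : 𝒳 × 𝒴 → ℝ} (hp : IsProb p) {K : 𝒳 × 𝒴 → 𝒲 → ℝ} (hK : IsChannel K)
    (w : 𝒲) : 0 ≤ outW p K w :=
  Finset.sum_nonneg fun _ _ => mul_nonneg (hp.1 _) ((hK _).1 _)

lemma le_margWX {p : 𝒳 × 𝒴 → ℝ} (hp : IsProb p) {K : 𝒳 × 𝒴 → 𝒲 → ℝ} (hK : IsChannel K)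
    (a : 𝒳 × 𝒴) (w : 𝒲) : p a * K a w ≤ margWX p K (w, a.1) :=
  Finset.single_le_sum (f := fun y => p (a.1, y) * K (a.1, y) w)
    (fun _ _ => mul_nonneg (hp.1 _) ((hK _).1 _)) (Finset.mem_univ a.2)

lemma le_margWY {p : 𝒳 × 𝒴 → ℝ} (hp : IsProb p) {K : 𝒳 × 𝒴 → 𝒲 → ℝ} (hK : IsChannel K)
    (a : 𝒳 × 𝒴) (w : 𝒲) : p a * K a w ≤ margWY p K (w, a.2) :=
  Finset.single_le_sum (f := fun x => p (x, a.2) * K (x, a.2) w)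
    (fun _ _ => mul_nonneg (hp.1 _) ((hK _).1 _)) (Finset.mem_univ a.1)

lemma outW_eq_sum_margWX {𝒲 : Type*} (p : 𝒳 × 𝒴 → ℝ) (K : 𝒳 × 𝒴 → 𝒲 → ℝ) (w : 𝒲) :
    outW p K w = ∑ x, margWX p K (w, x) := by
  simp only [outW, margWX, Fintype.sum_prod_type]

lemma outW_eq_sum_margWY {𝒲 : Type*} (p : 𝒳 × 𝒴 → ℝ) (K : 𝒳 × 𝒴 → 𝒲 → ℝ) (w : 𝒲) :
    outW p K w = ∑ x, margWY p K (w, x) := by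
  simp only [outW, margWY, Fintype.sum_prod_type_right]

lemma margWX_le_outW {p : 𝒳 × 𝒴 → ℝ} (hp : IsProb p) {K : 𝒳 × 𝒴 → 𝒲 → ℝ} (hK : IsChannel K)
    (w : 𝒲) (x : 𝒳) : margWX p K (w, x) ≤ outW p K w := by
  rw [outW_eq_sum_margWX]
  exact Finset.single_le_sum (f := fun x => margWX p K (w, x))
    (fun x _ => margWX_nonneg hp hK _) (Finset.mem_univ x)

lemma margWY_le_outW {p : 𝒳 × 𝒴 → ℝ} (hp : IsProb p) {K : 𝒳 × 𝒴 → 𝒲 → ℝ} (hK : IsChannel K)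
    (w : 𝒲) (y : 𝒴) : margWY p K (w, y) ≤ outW p K w := by
  rw [outW_eq_sum_margWY]
  exact Finset.single_le_sum (f := fun x => margWY p K (w, x))
    (fun x _ => margWY_nonneg hp hK _) (Finset.mem_univ y)

lemma outW_le_one {p : 𝒳 × 𝒴 → ℝ} (hp : IsProb p) {K : 𝒳 × 𝒴 → 𝒲 → ℝ} (hK : IsChannel K)
    (w : 𝒲) : outW p K w ≤ 1 := by
  rw [← sum_outW hp hK]
  exact Finset.single_le_sum (f := fun w => outW p K w)
    (fun x _ => outW_nonneg hp hK _) (Finset.mem_univ w)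

/-- The distributions induced by one source are admissible for any other source with no
larger support. -/
lemma admissible_own {p p' : 𝒳 × 𝒴 → ℝ} (hp' : IsProb p')
    (hpp : ∀ a, 0 < p a → 0 < p' a) {K : 𝒳 × 𝒴 → 𝒲 → ℝ} (hK : IsChannel K) :
    Admissible p K (outW p' K) (condXW p' K) (condYW p' K) where
  W0 := outW_nonneg hp' hK
  W1 := (sum_outW hp' hK).le
  X0 w x := div_nonneg (margWX_nonneg hp' hK _) (outW_nonneg hp' hK _)
  X1 w := by
    unfold condXW
    rw [← Finset.sum_div, ← outW_eq_sum_margWX]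
    exact div_self_le_one _
  Y0 w x := div_nonneg (margWY_nonneg hp' hK _) (outW_nonneg hp' hK _)
  Y1 w := by
    unfold condYW
    rw [← Finset.sum_div, ← outW_eq_sum_margWY]
    exact div_self_le_one _
  pos a w ha hKa := by
    have h := mul_pos (hpp a ha) hKa
    have hX := h.trans_le (le_margWX hp' hK a w)
    have hY := h.trans_le (le_margWY hp' hK a w)
    have hW := hX.trans_le (margWX_le_outW hp' hK _ _)
    exact ⟨hW, div_pos hX hW, div_pos hY hW⟩

/-- The relaxation bounds the Lagrangian from above, by Gibbs' inequality. -/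
lemma lagrangian_le {p : 𝒳 × 𝒴 → ℝ} (hp : IsProb p) {K : 𝒳 × 𝒴 → 𝒲 → ℝ} (hK : IsChannel K)
    {r1 r2 l1 l2 : ℝ} (hl1 : 0 ≤ l1) (hl2 : 0 ≤ l2) {QW : 𝒲 → ℝ} {QX : 𝒲 → 𝒳 → ℝ}
    {QY : 𝒲 → 𝒴 → ℝ} (hQ : Admissible p K QW QX QY) :
    mutInfoW p K + l1 * (condEntX p K - r1) + l2 * (condEntY p K - r2) ≤
      ∑ a, p a * Jf r1 r2 l1 l2 K QW QX QY a := by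
  have hsplit : ∀ a w, 0 < p a * K a w → 0 < p a ∧ 0 < K a w := fun a w h =>
    ⟨lt_of_le_of_ne (hp.1 a) (left_ne_zero_of_mul h.ne').symm,
      lt_of_le_of_ne ((hK a).1 w) (right_ne_zero_of_mul h.ne').symm⟩
  rw [sum_Jf hp hK]
  have hX : condEntX p K ≤ ∑ w, -∑ x, margWX p K (w, x) * logb 2 (QX w x) := by
    rw [condEntX_eq]
    refine Finset.sum_le_sum fun w _ => rowH_le _ _ (fun x => margWX_nonneg hp hK (w, x))
      (hQ.X0 w) (hQ.X1 w) fun x hx => ?_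
    obtain ⟨y, hy⟩ := exists_pos_of_sum_pos hx
    obtain ⟨h1, h2⟩ := hsplit _ _ hy
    exact (hQ.pos _ _ h1 h2).2.1
  have hY : condEntY p K ≤ ∑ w, -∑ y, margWY p K (w, y) * logb 2 (QY w y) := by
    rw [condEntY_eq]
    refine Finset.sum_le_sum fun w _ => rowH_le _ _ (fun x => margWY_nonneg hp hK (w, x))
      (hQ.Y0 w) (hQ.Y1 w) fun x hx => ?_
    obtain ⟨y, hy⟩ := exists_pos_of_sum_pos hx
    obtain ⟨h1, h2⟩ := hsplit _ _ hy
    exact (hQ.pos _ _ h1 h2).2.2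
  have hI : mutInfoW p K ≤ ∑ w, ∑ a, p a * K a w * (logb 2 (K a w) - logb 2 (QW w)) := by
    rw [mutInfoW_eq p K hK]
    have hg := gibbs (outW p K) QW (outW_nonneg hp hK) hQ.W0 (fun w hw => by
      obtain ⟨a, ha⟩ := exists_pos_of_sum_pos (show 0 < ∑ a, p a * K a w from hw)
      obtain ⟨h1, h2⟩ := hsplit _ _ ha
      exact (hQ.pos _ _ h1 h2).1) (by rw [sum_outW hp hK]; exact hQ.W1)
    rw [← sub_nonneg, ← Finset.sum_sub_distrib]
    refine hg.trans_eq (Finset.sum_congr rfl fun w _ => ?_)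
    unfold colI
    rw [← Finset.sum_sub_distrib]
    simp only [← mul_sub]
    have : ∀ A B C : ℝ, A - B - (A - C) = C - B := fun A B C => by ring
    simp only [this]
    rw [← Finset.sum_mul]
    rfl
  have := mul_le_mul_of_nonneg_left (sub_le_sub_right hX r1) hl1
  have := mul_le_mul_of_nonneg_left (sub_le_sub_right hY r2) hl2
  linarith

/-- The relaxation is tight at the distributions induced by `p` and `K`. -/
lemma lagrangian_eq {p : 𝒳 × 𝒴 → ℝ} (hp : IsProb p) {K : 𝒳 × 𝒴 → 𝒲 → ℝ} (hK : IsChannel K)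
    (r1 r2 l1 l2 : ℝ) :
    ∑ a, p a * Jf r1 r2 l1 l2 K (outW p K) (condXW p K) (condYW p K) a =
      mutInfoW p K + l1 * (condEntX p K - r1) + l2 * (condEntY p K - r2) := by
  rw [sum_Jf hp hK, mutInfoW_eq p K hK, condEntX_eq, condEntY_eq]
  have hX : ∀ w, -∑ x, margWX p K (w, x) * logb 2 (condXW p K w x) =
      colHX p (fun a => K a w) := by
    intro w
    unfold colHX rowH
    congr 1
    refine Finset.sum_congr rfl fun x _ => ?_
    show _ = margWX p K (w, x) * (logb 2 (margWX p K (w, x)) - logb 2 (∑ x, margWX p K (w, x)))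
    rw [← outW_eq_sum_margWX]
    rcases (margWX_nonneg hp hK (w, x)).eq_or_lt with h | h
    · simp [← h]
    · unfold condXW
      rw [logb_div h.ne' (h.trans_le (margWX_le_outW hp hK _ _)).ne']
  have hY : ∀ w, -∑ x, margWY p K (w, x) * logb 2 (condYW p K w x) =
      colHY p (fun a => K a w) := by
    intro w
    unfold colHY rowH
    congr 1
    refine Finset.sum_congr rfl fun x _ => ?_
    show _ = margWY p K (w, x) * (logb 2 (margWY p K (w, x)) - logb 2 (∑ x, margWY p K (w, x)))
    rw [← outW_eq_sum_margWY]
    rcases (margWY_nonneg hp hK (w, x)).eq_or_lt with h | h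
    · simp [← h]
    · unfold condYW
      rw [logb_div h.ne' (h.trans_le (margWY_le_outW hp hK _ _)).ne']
  simp only [hX, hY]
  rfl

/-- At an optimal channel `Jf` coincides with the tilted information density on the support
of the source: `Λ` is the minimum of `Jf` over the channel for fixed `QW, QX, QY`, so `Jf ≥ Λ`
letterwise, and the averages agree since the minimising channel cannot beat the optimum. -/
lemma Jf_eq_Lam {p : 𝒳 × 𝒴 → ℝ} (hp : IsProb p) {K : 𝒳 × 𝒴 → 𝒲 → ℝ} (hK : IsChannel K)
    {r1 r2 l1 l2 : ℝ} (hr1 : 0 < r1) (hr2 : 0 < r2) (hl1 : 0 ≤ l1) (hl2 : 0 ≤ l2)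
    (hd1 : HasDerivAt (fun r => Rgw p r r2) (-l1) r1)
    (hd2 : HasDerivAt (fun r => Rgw p r1 r) (-l2) r2)
    (hX : condEntX p K ≤ r1) (hY : condEntY p K ≤ r2) (hopt : mutInfoW p K = Rgw p r1 r2)
    (a : 𝒳 × 𝒴) (ha : 0 < p a) :
    Jf r1 r2 l1 l2 K (outW p K) (condXW p K) (condYW p K) a =
      Lam r1 r2 l1 l2 (outW p K) (condXW p K) (condYW p K) a.1 a.2 := by
  have hQ := admissible_own (p := p) hp (fun a h => h) hK
  have hsum := lagrangian_eq hp hK r1 r2 l1 l2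
  generalize outW p K = QW at *
  generalize condXW p K = QX at *
  generalize condYW p K = QY at *
  -- The unnormalised tilted weights and their total mass.
  set T : 𝒳 × 𝒴 → 𝒲 → ℝ := fun a w => QW w * (if QX w a.1 = 0 ∨ QY w a.2 = 0 then 0 else
        (2 : ℝ) ^ (l1 * (r1 + logb 2 (QX w a.1)) + l2 * (r2 + logb 2 (QY w a.2)))) with hT
  set S : 𝒳 × 𝒴 → ℝ := fun a => ∑ w, T a w with hS
  have hLam : ∀ a : 𝒳 × 𝒴, Lam r1 r2 l1 l2 QW QX QY a.1 a.2 = -logb 2 (S a) := fun a => rfl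
  have hT0 : ∀ a w, 0 ≤ T a w := fun a w => mul_nonneg (hQ.W0 w) (by
    split_ifs
    · exact le_rfl
    · positivity)
  have hTpos : ∀ a w, 0 < T a w ↔ 0 < QW w ∧ QX w a.1 ≠ 0 ∧ QY w a.2 ≠ 0 := by
    intro a w
    constructor
    · intro h
      simp only [hT] at h
      by_cases hc : QX w a.1 = 0 ∨ QY w a.2 = 0
      · simp [hc] at h
      · push Not at hc
        exact ⟨lt_of_le_of_ne (hQ.W0 w) (left_ne_zero_of_mul h.ne').symm, hc⟩
    · rintro ⟨h1, h2, h3⟩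
      simp only [hT, h2, h3, or_self, if_false]
      positivity
  have hTlog : ∀ a w, 0 < T a w → logb 2 (T a w) = logb 2 (QW w) +
      (l1 * (r1 + logb 2 (QX w a.1)) + l2 * (r2 + logb 2 (QY w a.2))) := by
    intro a w h
    obtain ⟨h1, h2, h3⟩ := (hTpos a w).1 h
    simp only [hT, h2, h3, or_self, if_false]
    rw [logb_mul h1.ne' (by positivity), logb_rpow (by norm_num) (by norm_num)]
  have hKT : ∀ a w, 0 < p a → 0 < K a w → 0 < T a w := fun a w h1 h2 => by
    obtain ⟨h3, h4, h5⟩ := hQ.pos a w h1 h2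
    exact (hTpos a w).2 ⟨h3, h4.ne', h5.ne'⟩
  have hSpos : ∀ a, 0 < p a → 0 < S a := by
    intro a h
    obtain ⟨w, -, hw⟩ : ∃ w ∈ Finset.univ, 0 < K a w :=
      Finset.exists_lt_of_sum_lt (s := Finset.univ) (f := fun _ => (0 : ℝ)) (by simp [(hK a).2])
    exact (hKT a w h hw).trans_le
      (Finset.single_le_sum (fun w _ => hT0 a w) (Finset.mem_univ w))
  -- The minimising channel, with `K` retained off the support.
  set Ks : 𝒳 × 𝒴 → 𝒲 → ℝ := fun a w => if 0 < p a then T a w / S a else K a w with hKs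
  have hKs1 : IsChannel Ks := by
    intro a
    by_cases h : 0 < p a
    · simp only [hKs, h, if_true]
      refine ⟨fun w => div_nonneg (hT0 a w) (hSpos a h).le, ?_⟩
      rw [← Finset.sum_div]
      exact div_self (hSpos a h).ne'
    · simp only [hKs, h, if_false]
      exact hK a
  have hQs : Admissible p Ks QW QX QY :=
    { hQ with
      pos := fun a w h1 h2 => by
        simp only [hKs, h1, if_true] at h2
        have h3 : 0 < T a w := by
          have := mul_pos h2 (hSpos a h1)
          rwa [div_mul_cancel₀ _ (hSpos a h1).ne'] at this
        obtain ⟨h4, h5, h6⟩ := (hTpos a w).1 h3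
        exact ⟨h4, lt_of_le_of_ne (hQ.X0 _ _) h5.symm, lt_of_le_of_ne (hQ.Y0 _ _) h6.symm⟩ }
  have hJs : ∀ a, 0 < p a → Jf r1 r2 l1 l2 Ks QW QX QY a = Lam r1 r2 l1 l2 QW QX QY a.1 a.2 := by
    intro a h
    have hterm : ∀ w, Ks a w * (logb 2 (Ks a w) - logb 2 (QW w) - l1 * (r1 + logb 2 (QX w a.1))
        - l2 * (r2 + logb 2 (QY w a.2))) = Ks a w * -logb 2 (S a) := by
      intro w
      have e : Ks a w = T a w / S a := by simp only [hKs, h, if_true]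
      rcases (hT0 a w).eq_or_lt with h0 | h0
      · rw [e, ← h0]; simp
      · rw [e, logb_div h0.ne' (hSpos a h).ne', hTlog a w h0]
        ring
    unfold Jf
    rw [Finset.sum_congr rfl fun w _ => hterm w, ← Finset.sum_mul, (hKs1 a).2, one_mul, hLam]
  have hJge : ∀ a, 0 < p a → Lam r1 r2 l1 l2 QW QX QY a.1 a.2 ≤ Jf r1 r2 l1 l2 K QW QX QY a := by
    intro a h
    have hg := gibbs (K a) (fun w => T a w / S a) (hK a).1
      (fun w => div_nonneg (hT0 a w) (hSpos a h).le)
      (fun w hw => div_pos (hKT a w h hw) (hSpos a h))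
      (by
        rw [← Finset.sum_div, (hK a).2]
        exact (div_self (hSpos a h).ne').le)
    have hterm : ∀ w, K a w * (logb 2 (K a w) - logb 2 (T a w / S a)) =
        K a w * (logb 2 (K a w) - logb 2 (QW w) - l1 * (r1 + logb 2 (QX w a.1))
        - l2 * (r2 + logb 2 (QY w a.2))) + K a w * logb 2 (S a) := by
      intro w
      rcases ((hK a).1 w).eq_or_lt with h0 | h0
      · rw [← h0]; simp
      · have h1 := hKT a w h h0
        rw [logb_div h1.ne' (hSpos a h).ne', hTlog a w h1]
        ring
    rw [Finset.sum_congr rfl fun w _ => hterm w, Finset.sum_add_distrib, ← Finset.sum_mul,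
      (hK a).2, one_mul] at hg
    rw [hLam]
    unfold Jf
    linarith
  have hle : ∑ a, p a * Jf r1 r2 l1 l2 K QW QX QY a ≤
      ∑ a, p a * Jf r1 r2 l1 l2 Ks QW QX QY a := by
    have h1 := dual_bound hp hKs1 hr1 hr2 hd1 hd2
    have h2 := lagrangian_le hp hKs1 (r1 := r1) (r2 := r2) hl1 hl2 hQs
    have h3 := mul_nonneg hl1 (sub_nonneg.2 hX)
    have h4 := mul_nonneg hl2 (sub_nonneg.2 hY)
    nlinarith
  have hmono : ∀ b ∈ Finset.univ, p b * Jf r1 r2 l1 l2 Ks QW QX QY b ≤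
      p b * Jf r1 r2 l1 l2 K QW QX QY b := by
    intro b _
    rcases (hp.1 b).eq_or_lt with h | h
    · simp [← h]
    · rw [hJs b h]
      exact mul_le_mul_of_nonneg_left (hJge b h) h.le
  have := (Finset.sum_eq_sum_iff_of_le hmono).1 (le_antisymm (Finset.sum_le_sum hmono) hle) a
    (Finset.mem_univ a)
  rw [← hJs a ha]
  exact (mul_left_cancel₀ ha.ne' this).symm

/-- `Jf` at the induced distributions depends continuously on the source and the channel. -/
lemma tendsto_Jf {P : ℝ → 𝒳 × 𝒴 → ℝ} {K : ℝ → 𝒳 × 𝒴 → 𝒲 → ℝ} {x : ℝ}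
    (hP : ∀ a, Tendsto (fun t => P t a) (nhds x) (nhds (P x a)))
    (hK : ∀ a w, Tendsto (fun t => K t a w) (nhds x) (nhds (K x a w)))
    (hprob : ∀ᶠ t in nhds x, IsProb (P t)) (hch : ∀ᶠ t in nhds x, IsChannel (K t))
    (r1 r2 l1 l2 : ℝ) (a : 𝒳 × 𝒴) (ha : 0 < P x a) :
    Tendsto (fun t => Jf r1 r2 l1 l2 (K t) (outW (P t) (K t)) (condXW (P t) (K t))
      (condYW (P t) (K t)) a) (nhds x)
      (nhds (Jf r1 r2 l1 l2 (K x) (outW (P x) (K x)) (condXW (P x) (K x))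
      (condYW (P x) (K x)) a)) := by
  have hpx := hprob.self_of_nhds
  have hkx := hch.self_of_nhds
  have hc : 0 < P x a / 2 := by linarith
  have hlow : ∀ᶠ t in nhds x, P x a / 2 < P t a := (hP a).eventually (lt_mem_nhds (by linarith))
  have hW : ∀ w, Tendsto (fun t => outW (P t) (K t) w) (nhds x) (nhds (outW (P x) (K x) w)) :=
    fun w => tendsto_finsetSum _ fun b _ => (hP b).mul (hK b w)
  have hMX : ∀ z, Tendsto (fun t => margWX (P t) (K t) z) (nhds x)
      (nhds (margWX (P x) (K x) z)) :=
    fun z => tendsto_finsetSum _ fun b _ => (hP _).mul (hK _ _)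
  have hMY : ∀ z, Tendsto (fun t => margWY (P t) (K t) z) (nhds x)
      (nhds (margWY (P x) (K x) z)) :=
    fun z => tendsto_finsetSum _ fun b _ => (hP _).mul (hK _ _)
  have hpos := (admissible_own (p := P x) hpx (fun _ h => h) hkx).pos a
  refine tendsto_finsetSum _ fun w _ => ?_
  have k0 : 0 ≤ K x a w := (hkx a).1 w
  have tK : Tendsto (fun t => K t a w * logb 2 (K t a w)) (nhds x)
      (nhds (K x a w * logb 2 (K x a w))) := by
    refine tendsto_mul_logb (c := 1) one_pos (hK a w) (fun h => ⟨h, hK a w⟩) k0 ?_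
    filter_upwards [hch] with t ht
    refine ⟨(ht a).1 w, fun _ => ⟨by rw [one_mul], ?_⟩⟩
    rw [← (ht a).2]
    exact Finset.single_le_sum (f := fun w => K t a w) (fun w _ => (ht a).1 w)
      (Finset.mem_univ w)
  have tW : Tendsto (fun t => K t a w * logb 2 (outW (P t) (K t) w)) (nhds x)
      (nhds (K x a w * logb 2 (outW (P x) (K x) w))) := by
    refine tendsto_mul_logb hc (hK a w) (fun h => ⟨(hpos w ha h).1, hW w⟩) k0 ?_
    filter_upwards [hch, hprob, hlow] with t ht hpt hl
    refine ⟨(ht a).1 w, fun h => ⟨?_, outW_le_one hpt ht w⟩⟩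
    exact (mul_le_mul_of_nonneg_right hl.le h.le).trans
      ((le_margWX hpt ht a w).trans (margWX_le_outW hpt ht _ _))
  have tX : Tendsto (fun t => K t a w * logb 2 (condXW (P t) (K t) w a.1)) (nhds x)
      (nhds (K x a w * logb 2 (condXW (P x) (K x) w a.1))) := by
    refine tendsto_mul_logb hc (hK a w) (fun h => ⟨(hpos w ha h).2.1,
      (hMX _).div (hW w) (hpos w ha h).1.ne'⟩) k0 ?_
    filter_upwards [hch, hprob, hlow] with t ht hpt hl
    refine ⟨(ht a).1 w, fun h => ?_⟩
    have h1 := (mul_le_mul_of_nonneg_right hl.le h.le).trans (le_margWX hpt ht a w)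
    have h2 := margWX_le_outW hpt ht w a.1
    have h3 : 0 < outW (P t) (K t) w := ((mul_pos hc h).trans_le h1).trans_le h2
    refine ⟨?_, (div_le_one h3).2 h2⟩
    unfold condXW
    rw [le_div_iff₀ h3]
    exact (mul_le_of_le_one_right (mul_pos hc h).le (outW_le_one hpt ht w)).trans h1
  have tY : Tendsto (fun t => K t a w * logb 2 (condYW (P t) (K t) w a.2)) (nhds x)
      (nhds (K x a w * logb 2 (condYW (P x) (K x) w a.2))) := by
    refine tendsto_mul_logb hc (hK a w) (fun h => ⟨(hpos w ha h).2.2,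
      (hMY _).div (hW w) (hpos w ha h).1.ne'⟩) k0 ?_
    filter_upwards [hch, hprob, hlow] with t ht hpt hl
    refine ⟨(ht a).1 w, fun h => ?_⟩
    have h1 := (mul_le_mul_of_nonneg_right hl.le h.le).trans (le_margWY hpt ht a w)
    have h2 := margWY_le_outW hpt ht w a.2
    have h3 : 0 < outW (P t) (K t) w := ((mul_pos hc h).trans_le h1).trans_le h2
    refine ⟨?_, (div_le_one h3).2 h2⟩
    unfold condYW
    rw [le_div_iff₀ h3]
    exact (mul_le_of_le_one_right (mul_pos hc h).le (outW_le_one hpt ht w)).trans h1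
  have key := ((tK.sub tW).sub ((((hK a w).const_mul r1).add tX).const_mul l1)).sub
    ((((hK a w).const_mul r2).add tY).const_mul l2)
  refine Tendsto.congr (fun t => ?_) (key.trans_eq ?_)
  · ring
  · congr 1; ring

end lagrangian

/-! ### Moving along a coordinate of the parameter -/

lemma paramDist_update {α : Type*} {m : ℕ} (e : Fin (m + 1) → α) (ξ : Fin m → ℝ) (i : Fin m)
    (t : ℝ) (a : α) :
    paramDist e (Function.update ξ i t) a = paramDist e ξ a + (t - ξ i) *
      ((if e i.castSucc = a then 1 else 0) - (if e (Fin.last m) = a then 1 else 0)) := by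
  have hu : ∀ j, Function.update ξ i t j = ξ j + if j = i then t - ξ i else 0 := by
    intro j
    by_cases h : j = i
    · subst h; simp
    · simp [h]
  have h1 : ∑ j : Fin m, (if e j.castSucc = a then Function.update ξ i t j else 0) =
      (∑ j : Fin m, if e j.castSucc = a then ξ j else 0) +
        if e i.castSucc = a then t - ξ i else 0 := by
    have : ∀ j : Fin m, (if e j.castSucc = a then Function.update ξ i t j else 0) =
        (if e j.castSucc = a then ξ j else 0) +
          if j = i then (if e i.castSucc = a then t - ξ i else 0) else 0 := by
      intro j
      rw [hu]
      by_cases h : j = i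
      · subst h; by_cases h' : e j.castSucc = a <;> simp [h']
      · simp [h]
    rw [Finset.sum_congr rfl fun j _ => this j, Finset.sum_add_distrib]
    simp
  have h2 : ∑ j, Function.update ξ i t j = ∑ j, ξ j + (t - ξ i) := by
    simp only [hu, Finset.sum_add_distrib]; simp
  unfold paramDist
  rw [h1, h2]
  split_ifs <;> ring

end GWAux

open GWAux


/-! ### Derivative of the rate function in the source -/

/-- Lemma 3: derivative of `R(r1*,r2*|P_θ)` with respect to
the parameter `θ` of the source distribution. Under the regularity conditions
(a differentiable family of optimal test channels on a neighborhood `𝒩` of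
`ξ = θ(P_XY)` with the support inclusion property, constraints met with
equality at `ξ`, and the multipliers `λ_{i,θ}` existing, positive and
differentiable in `θ`), for each `i = 1,…,m−1`,
`∂R(r1*,r2*|P_θ)/∂θ_i |_{θ=ξ} = ȷ_XY(i) − ȷ_XY(m)`. -/
theorem deriv_R_wrt_source_eq_tilted_difference
    {𝒳 𝒴 : Type*} [Fintype 𝒳] [Fintype 𝒴]
    (p : 𝒳 × 𝒴 → ℝ) (hp : IsProb p)
    {m : ℕ} (e : Fin (m + 1) → 𝒳 × 𝒴) (he : Function.Injective e)
    (hsupp : ∀ a, 0 < p a ↔ ∃ i, e i = a)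
    (ξ : Fin m → ℝ) (hξ : ∀ i, ξ i = p (e i.castSucc))
    (hpd : ∀ a, p a = paramDist e ξ a)
    (r1s r2s : ℝ) (hr1 : 0 < r1s) (hr2 : 0 < r2s)
    (hR : 0 < Rgw p r1s r2s)
    (𝒩 : Set (Fin m → ℝ)) (h𝒩 : 𝒩 ∈ nhds ξ)
    {k : ℕ} (K : (Fin m → ℝ) → 𝒳 × 𝒴 → Fin k → ℝ)
    (hopt : ∀ θ ∈ 𝒩, IsOptChannel (paramDist e θ) r1s r2s (K θ))
    (hdiff : ∀ a w, DifferentiableOn ℝ (fun θ => K θ a w) 𝒩)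
    (hsuppK : ∀ θ ∈ 𝒩, ∀ a w, 0 < K ξ a w → 0 < K θ a w)
    (heq1 : condEntX p (K ξ) = r1s) (heq2 : condEntY p (K ξ) = r2s)
    (lam1 lam2 : (Fin m → ℝ) → ℝ)
    (hd1 : ∀ θ ∈ 𝒩, HasDerivAt (fun r => Rgw (paramDist e θ) r r2s) (-(lam1 θ)) r1s)
    (hd2 : ∀ θ ∈ 𝒩, HasDerivAt (fun r => Rgw (paramDist e θ) r1s r) (-(lam2 θ)) r2s)
    (hl1 : ∀ θ ∈ 𝒩, 0 < lam1 θ) (hl2 : ∀ θ ∈ 𝒩, 0 < lam2 θ)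
    (hld1 : DifferentiableOn ℝ lam1 𝒩) (hld2 : DifferentiableOn ℝ lam2 𝒩) :
    ∀ i : Fin m,
      HasDerivAt (fun t : ℝ => Rgw (paramDist e (Function.update ξ i t)) r1s r2s)
        (tiltedInfo p r1s r2s (lam1 ξ) (lam2 ξ) (K ξ)
            (e i.castSucc).1 (e i.castSucc).2
          - tiltedInfo p r1s r2s (lam1 ξ) (lam2 ξ) (K ξ)
            (e (Fin.last m)).1 (e (Fin.last m)).2)
        (ξ i) := by
  intro i
  set P : ℝ → 𝒳 × 𝒴 → ℝ := fun t => paramDist e (Function.update ξ i t) with hPdef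
  have hPx : P (ξ i) = p := by
    ext a; rw [hpd a]; simp [hPdef]
  have hPt : ∀ t a, P t a = p a + (t - ξ i) *
      ((if e i.castSucc = a then 1 else 0) - (if e (Fin.last m) = a then 1 else 0)) := by
    intro t a
    rw [hpd a]
    convert paramDist_update e ξ i t a
  -- Increments of expectations along the line only see the letters `i` and `m`.
  have hinc : ∀ t (G : 𝒳 × 𝒴 → ℝ), ∑ a, P t a * G a - ∑ a, p a * G a =
      (t - ξ i) * (G (e i.castSucc) - G (e (Fin.last m))) := by
    intro t G
    have : ∀ a, P t a * G a - p a * G a = (t - ξ i) *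
        ((if e i.castSucc = a then G a else 0) - (if e (Fin.last m) = a then G a else 0)) := by
      intro a
      rw [hPt]
      split_ifs <;> ring
    rw [← Finset.sum_sub_distrib, Finset.sum_congr rfl fun a _ => this a, ← Finset.mul_sum,
      Finset.sum_sub_distrib]
    simp
  have hPc : ∀ a, Tendsto (fun t => P t a) (nhds (ξ i)) (nhds (P (ξ i) a)) := by
    intro a
    simp only [hPt]
    exact Continuous.tendsto (by fun_prop) (ξ i)
  have hPpos : ∀ᶠ t in nhds (ξ i), ∀ a, 0 < p a → 0 < P t a := by
    rw [eventually_all]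
    intro a
    by_cases h : 0 < p a
    · have := (hPc a).eventually (lt_mem_nhds (by rw [hPx]; exact h))
      filter_upwards [this] with t ht _ using ht
    · exact Eventually.of_forall fun t h' => absurd h' h
  have hP0 : ∀ t a, ¬ 0 < p a → P t a = 0 := by
    intro t a h
    have hne : ∀ j, e j ≠ a := fun j hj => h ((hsupp a).2 ⟨j, hj⟩)
    rw [hPt, if_neg (hne _), if_neg (hne _), le_antisymm (not_lt.1 h) (hp.1 a)]
    ring
  have hPprob : ∀ᶠ t in nhds (ξ i), IsProb (P t) := by
    filter_upwards [hPpos] with t ht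
    refine ⟨fun a => ?_, ?_⟩
    · by_cases h : 0 < p a
      · exact (ht a h).le
      · exact (hP0 t a h).ge
    · have := hinc t (fun _ => 1)
      simp only [mul_one, hp.2, sub_self, mul_zero] at this
      linarith
  have hθc : Tendsto (fun t => Function.update ξ i t) (nhds (ξ i)) (nhds ξ) := by
    have : Continuous (fun t => Function.update ξ i t) := by fun_prop
    simpa using this.tendsto (ξ i)
  have hθ : ∀ᶠ t in nhds (ξ i), Function.update ξ i t ∈ 𝒩 := hθc h𝒩
  have hξ𝒩 : ξ ∈ 𝒩 := mem_of_mem_nhds h𝒩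
  set L : ℝ → 𝒳 × 𝒴 → Fin k → ℝ := fun t => K (Function.update ξ i t) with hLdef
  have hLx : L (ξ i) = K ξ := by simp [hLdef]
  have hLc : ∀ a w, Tendsto (fun t => L t a w) (nhds (ξ i)) (nhds (L (ξ i) a w)) := by
    intro a w
    rw [hLx]
    exact ((hdiff a w).differentiableAt h𝒩).continuousAt.tendsto.comp hθc
  have hl1c : Tendsto (fun t => lam1 (Function.update ξ i t)) (nhds (ξ i)) (nhds (lam1 ξ)) :=
    (hld1.differentiableAt h𝒩).continuousAt.tendsto.comp hθc
  have hl2c : Tendsto (fun t => lam2 (Function.update ξ i t)) (nhds (ξ i)) (nhds (lam2 ξ)) :=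
    (hld2.differentiableAt h𝒩).continuousAt.tendsto.comp hθc
  have hLch : ∀ᶠ t in nhds (ξ i), IsChannel (L t) := hθ.mono fun t ht => (hopt _ ht).2.1
  have hpξ : paramDist e ξ = p := funext fun a => (hpd a).symm
  obtain ⟨-, hKch, hKX, hKY, hKopt⟩ := hopt ξ hξ𝒩
  have hD1 := hd1 ξ hξ𝒩
  have hD2 := hd2 ξ hξ𝒩
  rw [hpξ] at hKX hKY hKopt hD1 hD2
  have hJ : ∀ a, 0 < p a → Jf r1s r2s (lam1 ξ) (lam2 ξ) (K ξ) (outW p (K ξ)) (condXW p (K ξ))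
      (condYW p (K ξ)) a = tiltedInfo p r1s r2s (lam1 ξ) (lam2 ξ) (K ξ) a.1 a.2 := fun a ha =>
    Jf_eq_Lam hp hKch hr1 hr2 (hl1 ξ hξ𝒩).le (hl2 ξ hξ𝒩).le hD1 hD2 hKX hKY hKopt a ha
  have hpi : 0 < p (e i.castSucc) := (hsupp _).2 ⟨_, rfl⟩
  have hpm : 0 < p (e (Fin.last m)) := (hsupp _).2 ⟨_, rfl⟩
  -- For the upper slope only the multipliers move; for the lower slope only the source and
  -- the channel do.
  have hAc : ∀ a, 0 < p a → Tendsto (fun t => Jf r1s r2s (lam1 (Function.update ξ i t))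
      (lam2 (Function.update ξ i t)) (K ξ) (outW p (K ξ)) (condXW p (K ξ)) (condYW p (K ξ)) a)
      (nhds (ξ i)) (nhds (tiltedInfo p r1s r2s (lam1 ξ) (lam2 ξ) (K ξ) a.1 a.2)) := by
    intro a ha
    rw [← hJ a ha]
    unfold Jf
    exact tendsto_finsetSum _ fun w _ =>
      ((tendsto_const_nhds.sub (hl1c.mul_const _)).sub (hl2c.mul_const _)).const_mul _
  have hBc : ∀ a, 0 < p a → Tendsto (fun t => Jf r1s r2s (lam1 ξ) (lam2 ξ) (L t)
      (outW (P t) (L t)) (condXW (P t) (L t)) (condYW (P t) (L t)) a)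
      (nhds (ξ i)) (nhds (tiltedInfo p r1s r2s (lam1 ξ) (lam2 ξ) (K ξ) a.1 a.2)) := by
    intro a ha
    have := tendsto_Jf hPc hLc hPprob hLch r1s r2s (lam1 ξ) (lam2 ξ) a (by rw [hPx]; exact ha)
    rw [hPx, hLx, hJ a ha] at this
    exact this
  refine hasDerivAt_of_squeeze ((hAc _ hpi).sub (hAc _ hpm)) ((hBc _ hpi).sub (hBc _ hpm)) ?_ ?_
  · filter_upwards [hθ, hPprob] with t ht hPr
    have hsub : ∀ a, 0 < P t a → 0 < p a := fun a h => by
      by_contra hcon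
      exact h.ne' (hP0 t a hcon)
    have h1 := dual_bound hPr hKch hr1 hr2 (hd1 _ ht) (hd2 _ ht)
    have h2 := lagrangian_le hPr hKch (r1 := r1s) (r2 := r2s) (hl1 _ ht).le (hl2 _ ht).le
      (admissible_own hp hsub hKch)
    have h3 := lagrangian_eq hp hKch r1s r2s (lam1 (Function.update ξ i t))
      (lam2 (Function.update ξ i t))
    have h4 := mul_nonneg (hl1 _ ht).le (sub_nonneg.2 hKX)
    have h5 := mul_nonneg (hl2 _ ht).le (sub_nonneg.2 hKY)
    rw [← hinc]
    rw [Function.update_eq_self, hpξ]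
    linarith
  · filter_upwards [hθ, hPprob, hPpos] with t ht hPr hsub
    obtain ⟨-, hch, hX, hY, ho⟩ := hopt _ ht
    have h1 := dual_bound hp hch hr1 hr2 hD1 hD2
    have h2 := lagrangian_le hp hch (r1 := r1s) (r2 := r2s) (hl1 _ hξ𝒩).le (hl2 _ hξ𝒩).le
      (admissible_own hPr hsub hch)
    have h3 := lagrangian_eq hPr hch r1s r2s (lam1 ξ) (lam2 ξ)
    have h4 := mul_nonneg (hl1 _ hξ𝒩).le (sub_nonneg.2 hX)
    have h5 := mul_nonneg (hl2 _ hξ𝒩).le (sub_nonneg.2 hY)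
    rw [← hinc]
    rw [Function.update_eq_self, hpξ]
    linarith
end

section
/- There is an n0 depending only on |𝒳|,|𝒴|,|𝒲| such that for all n ≥ n0, every joint type P_{X̄Ȳ} ∈ 𝒫_n(𝒳×𝒴), and every test channel P_{W|X̄Ȳ} ∈ 𝒫(𝒲|𝒳×𝒴), there exist a conditional type P_{W̄|X̄Ȳ} ∈ 𝒫_n(𝒲|𝒳×𝒴) satisfying | P_{W̄|X̄Ȳ}(w|x,y) − P_{W|X̄Ȳ}(w|x,y) | ≤ 1/( n P_{X̄Ȳ}(x,y) ) for every (x,y) ∈ supp(P_{X̄Ȳ}) and w ∈ supp(P_{W|X̄Ȳ}(·|x,y)), and a subset 𝒞_n ⊆ 𝒯ⁿ_{W̄} with |𝒞_n| ≤ exp{ n I(W̄ ∧ X̄,Ȳ) + (|𝒳||𝒴||𝒲|+4) log(n+1) } such that for every (x⃗,y⃗) ∈ 𝒯ⁿ_{X̄Ȳ} there exists w⃗ ∈ 𝒞_n with (w⃗,x⃗,y⃗) ∈ 𝒯ⁿ_{W̄X̄Ȳ}. -/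
/-!
The codebook is built by greedy covering inside the type class of the output type.

Working with integer letter counts `c` instead of frequencies, the type class `tclass n c` has
cardinality the multinomial coefficient of `c` (orbit-stabilizer for the action of the
permutations of positions, `card_tclass`). Expanding `n ^ n = (∑ a, c a) ^ n` by the multinomial
theorem, the term with exponents `c` is the largest one because `c ^ k / k!` is maximal at `k = c`,
and there are at most `(n + 1) ^ |α|` terms. Since `n ^ n = 2 ^ (n H) * ∏ c ^ c`, this gives
`2 ^ (n H) / (n + 1) ^ |α| ≤ |tclass n c| ≤ 2 ^ (n H)` (`card_tclass_le_ent`,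
`ent_le_card_tclass`).

The conditional type `V` comes from rounding each row of `K`, scaled by the number of occurrences
of the conditioning letter, to integers with the right sum (`exists_round`). By permutation
symmetry every source word of the given type has the same number `d` of jointly typical output
words, and `d` times the size of the source type class is the size of the joint type class
(`card_tclass_eq_mul`). The entropy bounds then show that `d` is at least a fraction `1 / Q` of the
output type class, where `Q = (n + 1) ^ (|𝒳||𝒴||𝒲|) * 2 ^ (n I)`. Choosing output words greedily
shrinks the uncovered part of the source type class by the factor `1 - 1 / Q` each time, and that
class has at most `|𝒳 × 𝒴| ^ n ≤ exp (n ^ 2)` elements once `n ≥ |𝒳 × 𝒴|`, so `Q n ^ 2 + 1`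
output words suffice (`exists_cover`); this is at most `Q (n + 1) ^ 4`.
-/


open Finset Filter MeasureTheory

attribute [local instance] Classical.propDecidable

namespace GW

section Covering

/-! ### Type classes with prescribed letter counts -/

/-- The number of occurrences of the letter `a` in the word `f`. -/
noncomputable def cnt {α : Type*} {n : ℕ} (f : Fin n → α) (a : α) : ℕ :=
  (Finset.univ.filter fun i => f i = a).card

/-- The type class of words of length `n` in which each letter `a` occurs exactly `c a` times.
Integer counts are used in place of frequencies. -/
noncomputable def tclass {α : Type*} [Fintype α] (n : ℕ) (c : α → ℕ) : Finset (Fin n → α) :=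
  Finset.univ.filter fun f => ∀ a, cnt f a = c a

theorem mem_tclass {α : Type*} [Fintype α] {n : ℕ} {c : α → ℕ} {f : Fin n → α} :
    f ∈ tclass n c ↔ ∀ a, cnt f a = c a := by
  simp [tclass]

theorem empDist_eq_iff {α : Type*} [Fintype α] {n : ℕ} (hn : 0 < n) (f : Fin n → α) (a : α)
    (c : ℕ) : empDist f a = (c : ℝ) / n ↔ cnt f a = c := by
  have hnR : (n : ℝ) ≠ 0 := by exact_mod_cast hn.ne'
  change (cnt f a : ℝ) / n = c / n ↔ _
  rw [div_left_inj' hnR, Nat.cast_inj]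

theorem sum_cnt {α : Type*} [Fintype α] {n : ℕ} (f : Fin n → α) : ∑ a, cnt f a = n := by
  have h := Finset.card_eq_sum_card_fiberwise (f := f) (s := Finset.univ) (t := Finset.univ)
    (fun _ _ => by simp)
  rw [Finset.card_univ, Fintype.card_fin] at h
  exact h.symm

theorem card_fiber {α : Type*} {n : ℕ} (f : Fin n → α) (a : α) :
    Fintype.card {i // f i = a} = cnt f a := by
  rw [cnt, Fintype.card_subtype]

/-- Two words with the same letter counts are permutations of one another. -/
theorem exists_perm {α : Type*} {n : ℕ} {f g : Fin n → α} (h : ∀ a, cnt f a = cnt g a) :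
    ∃ σ : Equiv.Perm (Fin n), f = g ∘ σ := by
  have e : ∀ a, Nonempty ({i // f i = a} ≃ {i // g i = a}) := fun a =>
    ⟨Fintype.equivOfCardEq (by rw [card_fiber, card_fiber, h])⟩
  replace e := fun a => (e a).some
  refine ⟨(Equiv.sigmaFiberEquiv f).symm.trans
    ((Equiv.sigmaCongrRight e).trans (Equiv.sigmaFiberEquiv g)), ?_⟩
  funext i
  exact ((e (f i)) ⟨i, rfl⟩).2.symm

theorem cnt_comp_perm {α : Type*} {n : ℕ} (f : Fin n → α) (σ : Equiv.Perm (Fin n)) (a : α) :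
    cnt (f ∘ σ) a = cnt f a := by
  rw [← card_fiber, ← card_fiber]
  exact Fintype.card_congr (σ.subtypeEquiv fun i => Iff.rfl)

theorem tclass_nonempty {α : Type*} [Fintype α] {n : ℕ} {c : α → ℕ} (hc : ∑ a, c a = n) :
    (tclass n c).Nonempty := by
  have e : Fin n ≃ Σ a, Fin (c a) := Fintype.equivOfCardEq (by simp [hc])
  refine ⟨fun i => (e i).1, mem_tclass.2 fun a => ?_⟩
  rw [← card_fiber]
  have e2 : {i // (e i).1 = a} ≃ {s : Σ a, Fin (c a) // s.1 = a} :=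
    e.subtypeEquiv fun i => Iff.rfl
  rw [Fintype.card_congr e2, Fintype.card_congr (Equiv.sigmaSubtype (β := fun a => Fin (c a)) a), Fintype.card_fin]

/-- Orbit-stabilizer count: the permutations act transitively on a type class, and the stabilizer
of a word is the product of the symmetric groups of its level sets. -/
theorem card_tclass_mul {α : Type*} [Fintype α] {n : ℕ} {c : α → ℕ} (hc : ∑ a, c a = n) :
    (∏ a, (c a).factorial) * (tclass n c).card = n.factorial := by
  obtain ⟨f₀, hf₀⟩ := tclass_nonempty hc
  rw [mem_tclass] at hf₀
  have h := Finset.card_eq_sum_card_fiberwise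
    (f := fun σ : Equiv.Perm (Fin n) => f₀ ∘ σ) (s := Finset.univ) (t := tclass n c)
    (fun σ _ => by
      simp only [Finset.mem_coe, mem_tclass]
      intro a
      rw [cnt_comp_perm, hf₀])
  rw [Finset.card_univ, Fintype.card_perm, Fintype.card_fin] at h
  rw [h, mul_comm, ← smul_eq_mul, ← Finset.sum_const]
  refine Finset.sum_congr rfl fun f hf => ?_
  rw [mem_tclass] at hf
  obtain ⟨τ, rfl⟩ := exists_perm (f := f) (g := f₀) fun a => by rw [hf, hf₀]
  have hs : Fintype.card {g : Equiv.Perm (Fin n) // f₀ ∘ g = f₀} = ∏ a, (c a).factorial := by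
    rw [DomMulAct.stabilizer_card f₀]
    refine Finset.prod_congr rfl fun a _ => ?_
    rw [← hf₀ a, ← card_fiber]
  rw [← hs, ← Fintype.card_subtype]
  refine Fintype.card_congr ((Equiv.mulRight τ).subtypeEquiv fun σ => ?_)
  constructor
  · intro h
    rw [Equiv.coe_mulRight, Equiv.Perm.coe_mul, ← Function.comp_assoc, h]
  · intro h
    rw [Equiv.coe_mulRight, Equiv.Perm.coe_mul, ← Function.comp_assoc] at h
    exact τ.surjective.injective_comp_right h

theorem card_tclass {α : Type*} [Fintype α] {n : ℕ} {c : α → ℕ} (hc : ∑ a, c a = n) :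
    (tclass n c).card = Nat.multinomial Finset.univ c := by
  have h1 := card_tclass_mul hc
  have h2 := Nat.multinomial_spec Finset.univ c
  rw [hc, ← h1] at h2
  exact (Nat.eq_of_mul_eq_mul_left (Finset.prod_pos fun a _ => Nat.factorial_pos _) h2).symm

/-- The ratio `c ^ k / k!` is largest at `k = c`. -/
theorem pow_mul_factorial_le (c k : ℕ) : c ^ k * c.factorial ≤ c ^ c * k.factorial := by
  rcases le_total c k with h | h
  · have := Nat.factorial_mul_pow_sub_le_factorial h
    calc c ^ k * c.factorial = c ^ c * (c.factorial * c ^ (k - c)) := by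
          rw [← Nat.add_sub_cancel' h, pow_add]; simp; ring
      _ ≤ _ := Nat.mul_le_mul_left _ this
  · have : c.factorial ≤ c ^ (c - k) * k.factorial := by
      obtain ⟨j, rfl⟩ := Nat.exists_eq_add_of_le h
      rw [← Nat.factorial_mul_ascFactorial, Nat.add_sub_cancel_left, mul_comm]
      exact Nat.mul_le_mul_right _ (Nat.ascFactorial_le_pow_add k j)
    calc c ^ k * c.factorial ≤ c ^ k * (c ^ (c - k) * k.factorial) := Nat.mul_le_mul_left _ this
      _ = _ := by rw [← mul_assoc, ← pow_add, Nat.add_sub_cancel' h]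

theorem card_tclass_upper {α : Type*} [Fintype α] {n : ℕ} {c : α → ℕ} (hc : ∑ a, c a = n) :
    (tclass n c).card * ∏ a, c a ^ c a ≤ n ^ n := by
  have h := Finset.sum_pow_eq_sum_piAntidiag Finset.univ c n
  rw [hc] at h
  rw [h, card_tclass hc]
  exact Finset.single_le_sum (f := fun k => Nat.multinomial Finset.univ k * ∏ i, c i ^ k i)
    (fun _ _ => Nat.zero_le _) (by simp [hc])

/-- Among all terms of the multinomial expansion of `(∑ a, c a) ^ n`, the one with exponents `c`
is the largest, and there are at most `(n + 1) ^ |α|` of them. -/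
theorem card_tclass_lower {α : Type*} [Fintype α] {n : ℕ} {c : α → ℕ} (hc : ∑ a, c a = n) :
    n ^ n ≤ (n + 1) ^ Fintype.card α * ((tclass n c).card * ∏ a, c a ^ c a) := by
  have h := Finset.sum_pow_eq_sum_piAntidiag Finset.univ c n
  rw [hc] at h
  have hcard : (Finset.piAntidiag (Finset.univ : Finset α) n).card ≤ (n + 1) ^ Fintype.card α := by
    have hsub : Finset.piAntidiag (Finset.univ : Finset α) n ⊆
        Fintype.piFinset fun _ => Finset.range (n + 1) := by
      intro k hk
      rw [Finset.mem_piAntidiag] at hk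
      rw [Fintype.mem_piFinset]
      intro a
      rw [Finset.mem_range, Nat.lt_succ_iff, ← hk.1]
      exact Finset.single_le_sum (fun _ _ => Nat.zero_le _) (Finset.mem_univ a)
    refine (Finset.card_le_card hsub).trans ?_
    simp
  rw [card_tclass hc]
  refine h.le.trans (((Finset.sum_le_card_nsmul _ _
    (Nat.multinomial Finset.univ c * ∏ a, c a ^ c a) ?_)).trans ?_)
  · intro k hk
    rw [Finset.mem_piAntidiag] at hk
    have h1 := Nat.multinomial_spec Finset.univ c
    have h2 := Nat.multinomial_spec Finset.univ k
    rw [hc] at h1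
    rw [show ∑ i, k i = n from hk.1] at h2
    have h3 : (∏ a, c a ^ k a) * ∏ a, (c a).factorial ≤
        (∏ a, c a ^ c a) * ∏ a, (k a).factorial := by
      rw [← Finset.prod_mul_distrib, ← Finset.prod_mul_distrib]
      exact Finset.prod_le_prod' fun a _ => pow_mul_factorial_le _ _
    have p1 : 0 < ∏ a, (c a).factorial := Finset.prod_pos fun a _ => Nat.factorial_pos _
    have p2 : 0 < ∏ a, (k a).factorial := Finset.prod_pos fun a _ => Nat.factorial_pos _
    refine Nat.le_of_mul_le_mul_left ?_ (Nat.mul_pos p1 p2)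
    calc (∏ a, (c a).factorial) * (∏ a, (k a).factorial) *
          (Nat.multinomial Finset.univ k * ∏ i, c i ^ k i)
        = n.factorial * ((∏ a, c a ^ k a) * ∏ a, (c a).factorial) := by rw [← h2]; ring
      _ ≤ n.factorial * ((∏ a, c a ^ c a) * ∏ a, (k a).factorial) := Nat.mul_le_mul_left _ h3
      _ = _ := by rw [← h1]; ring
  · rw [smul_eq_mul]
    exact Nat.mul_le_mul_right _ hcard

/-- The exponential of the entropy of a type, written with the letter counts. -/
theorem two_pow_ent {α : Type*} [Fintype α] {n : ℕ} (hn : 0 < n) {c : α → ℕ}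
    (hc : ∑ a, c a = n) :
    (2 : ℝ) ^ ((n : ℝ) * ent fun a => (c a : ℝ) / n) * ∏ a, (c a : ℝ) ^ c a = (n : ℝ) ^ n := by
  have hn' : (0 : ℝ) < n := by exact_mod_cast hn
  -- The conventions `0 ^ 0 = 1` and `0 * logb 2 0 = 0` make both sides agree on missing letters.
  have hpos : ∀ a, (0 : ℝ) < (c a : ℝ) ^ c a := fun a => by
    rcases Nat.eq_zero_or_pos (c a) with h | h
    · simp [h]
    · positivity
  have hP : (0 : ℝ) < ∏ a, (c a : ℝ) ^ c a := Finset.prod_pos fun a _ => hpos a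
  refine Real.logb_injOn_pos (b := 2) (by norm_num) (Set.mem_Ioi.2 (by positivity))
    (Set.mem_Ioi.2 (by positivity)) ?_
  rw [Real.logb_mul (by positivity) hP.ne', Real.logb_rpow (by norm_num) (by norm_num),
    Real.logb_prod _ _ (fun a _ => (hpos a).ne'), Real.logb_pow]
  have hterm : ∀ a, (n : ℝ) * ((c a : ℝ) / n * Real.logb 2 ((c a : ℝ) / n)) =
      Real.logb 2 ((c a : ℝ) ^ c a) - c a * Real.logb 2 n := fun a => by
    rcases Nat.eq_zero_or_pos (c a) with h | h
    · simp [h]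
    · rw [Real.logb_div (by positivity) hn'.ne', Real.logb_pow]
      field_simp
  have hcs : ∑ a, (c a : ℝ) = n := by exact_mod_cast hc
  rw [ent, mul_neg, Finset.mul_sum, Finset.sum_congr rfl fun a _ => hterm a,
    Finset.sum_sub_distrib, ← Finset.sum_mul, hcs]
  ring

theorem card_tclass_le_ent {α : Type*} [Fintype α] {n : ℕ} (hn : 0 < n) {c : α → ℕ}
    (hc : ∑ a, c a = n) :
    ((tclass n c).card : ℝ) ≤ (2 : ℝ) ^ ((n : ℝ) * ent fun a => (c a : ℝ) / n) := by
  have hP : (0 : ℝ) < ∏ a, (c a : ℝ) ^ c a := Finset.prod_pos fun a _ => by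
    rcases Nat.eq_zero_or_pos (c a) with h | h
    · simp [h]
    · positivity
  have h : ((tclass n c).card : ℝ) * ∏ a, (c a : ℝ) ^ c a ≤ (n : ℝ) ^ n := by
    exact_mod_cast card_tclass_upper hc
  rw [← two_pow_ent hn hc] at h
  exact le_of_mul_le_mul_right h hP

theorem ent_le_card_tclass {α : Type*} [Fintype α] {n : ℕ} (hn : 0 < n) {c : α → ℕ}
    (hc : ∑ a, c a = n) :
    (2 : ℝ) ^ ((n : ℝ) * ent fun a => (c a : ℝ) / n) ≤
      ((n : ℝ) + 1) ^ Fintype.card α * (tclass n c).card := by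
  have hP : (0 : ℝ) < ∏ a, (c a : ℝ) ^ c a := Finset.prod_pos fun a _ => by
    rcases Nat.eq_zero_or_pos (c a) with h | h
    · simp [h]
    · positivity
  have h : (n : ℝ) ^ n ≤ ((n : ℝ) + 1) ^ Fintype.card α *
      ((tclass n c).card * ∏ a, (c a : ℝ) ^ c a) := by
    exact_mod_cast card_tclass_lower hc
  rw [← two_pow_ent hn hc, ← mul_assoc] at h
  exact le_of_mul_le_mul_right h hP

/-! ### Greedy covering -/

/-- If every `a ∈ A` is related to at least a fraction `1 / Q` of `B`, then `M` well-chosen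
elements of `B` leave at most a fraction `(1 - 1 / Q) ^ M` of `A` uncovered: by averaging, some
element of `B` covers a fraction `1 / Q` of whatever is still uncovered. -/
theorem greedy_cover {α β : Type*} (A : Finset α) (B : Finset β) (R : α → β → Prop) (Q : ℝ)
    (hQ : 1 ≤ Q) (hB : B.Nonempty)
    (h : ∀ a ∈ A, (B.card : ℝ) ≤ Q * (B.filter fun b => R a b).card) (M : ℕ) :
    ∃ C ⊆ B, C.card ≤ M ∧
      ((A.filter fun a => ∀ b ∈ C, ¬ R a b).card : ℝ) ≤ (1 - 1 / Q) ^ M * A.card := by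
  induction M with
  | zero => exact ⟨∅, by simp, by simp, by simp⟩
  | succ M ih =>
    obtain ⟨C, hCB, hCM, hC⟩ := ih
    set U := A.filter fun a => ∀ b ∈ C, ¬ R a b with hU
    obtain ⟨b, hb, hbU⟩ : ∃ b ∈ B, (U.card : ℝ) ≤ Q * (U.filter fun a => R a b).card := by
      by_contra! hcon
      have h1 := Finset.sum_lt_sum_of_nonempty hB hcon
      have h2 : ∑ a ∈ U, (B.card : ℝ) ≤ ∑ a ∈ U, Q * ((B.filter fun b => R a b).card : ℝ) :=
        Finset.sum_le_sum fun a ha => h a (Finset.mem_filter.1 ha).1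
      have h3 : ∑ b ∈ B, ((U.filter fun a => R a b).card : ℝ) =
          ∑ a ∈ U, ((B.filter fun b => R a b).card : ℝ) := by
        exact_mod_cast (Finset.sum_card_bipartiteAbove_eq_sum_card_bipartiteBelow
          (s := U) (t := B) R).symm
      rw [← Finset.mul_sum, h3] at h1
      rw [← Finset.mul_sum] at h2
      simp only [Finset.sum_const, nsmul_eq_mul] at h1 h2
      linarith
    refine ⟨insert b C, Finset.insert_subset hb hCB, (Finset.card_insert_le _ _).trans
      (by omega), ?_⟩
    have hsplit : (A.filter fun a => ∀ b' ∈ insert b C, ¬ R a b') = U.filter fun a => ¬ R a b := by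
      ext a
      simp only [hU, Finset.mem_filter, Finset.mem_insert, forall_eq_or_imp]
      tauto
    have hadd : ((U.filter fun a => R a b).card : ℝ) + (U.filter fun a => ¬ R a b).card =
        U.card := by
      exact_mod_cast Finset.card_filter_add_card_filter_not (s := U) (fun a => R a b)
    rw [hsplit, pow_succ]
    have hQ0 : 0 < Q := by linarith
    have hq : (U.card : ℝ) / Q ≤ (U.filter fun a => R a b).card := by
      rw [div_le_iff₀ hQ0]; linarith
    have hQ1 : 0 ≤ 1 - 1 / Q := by
      rw [sub_nonneg, div_le_one hQ0]; exact hQ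
    calc ((U.filter fun a => ¬ R a b).card : ℝ) ≤ (1 - 1 / Q) * U.card := by
          rw [sub_mul, one_mul, one_div_mul_eq_div]; linarith
      _ ≤ (1 - 1 / Q) * ((1 - 1 / Q) ^ M * A.card) := mul_le_mul_of_nonneg_left hC hQ1
      _ = _ := by ring

/-- Complete covering: enough greedy steps bring the number of uncovered elements below one. -/
theorem exists_cover {α β : Type*} (A : Finset α) (B : Finset β) (R : α → β → Prop) (Q t : ℝ)
    (hQ : 1 ≤ Q) (hB : B.Nonempty)
    (h : ∀ a ∈ A, (B.card : ℝ) ≤ Q * (B.filter fun b => R a b).card)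
    (ht : 0 ≤ t) (hA : (A.card : ℝ) ≤ Real.exp t) :
    ∃ C ⊆ B, (C.card : ℝ) ≤ Q * t + 1 ∧ ∀ a ∈ A, ∃ b ∈ C, R a b := by
  obtain ⟨C, hCB, hCM, hC⟩ := greedy_cover A B R Q hQ hB h (⌊Q * t⌋₊ + 1)
  have hQ0 : 0 < Q := by linarith
  refine ⟨C, hCB, ?_, ?_⟩
  · have h1 := Nat.floor_le (mul_nonneg hQ0.le ht)
    have h2 : (C.card : ℝ) ≤ (⌊Q * t⌋₊ : ℝ) + 1 := by exact_mod_cast hCM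
    linarith
  · have hlt : ((A.filter fun a => ∀ b ∈ C, ¬ R a b).card : ℝ) < 1 := by
      refine hC.trans_lt ?_
      have h1 : (1 - 1 / Q) ^ (⌊Q * t⌋₊ + 1) ≤ Real.exp (-(1 / Q)) ^ (⌊Q * t⌋₊ + 1) :=
        pow_le_pow_left₀ (by rw [sub_nonneg, div_le_one hQ0]; exact hQ)
          (Real.one_sub_le_exp_neg _) _
      rw [← Real.exp_nat_mul] at h1
      refine (mul_le_mul h1 hA (by positivity) (by positivity)).trans_lt ?_
      rw [← Real.exp_add, Real.exp_lt_one_iff]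
      have h2 := Nat.lt_floor_add_one (Q * t)
      have h3 : t < ((⌊Q * t⌋₊ + 1 : ℕ) : ℝ) * (1 / Q) := by
        rw [mul_one_div, lt_div_iff₀ hQ0]
        push_cast
        linarith
      linarith
    have h0 : (A.filter fun a => ∀ b ∈ C, ¬ R a b).card = 0 := by
      have : (A.filter fun a => ∀ b ∈ C, ¬ R a b).card < 1 := by exact_mod_cast hlt
      omega
    intro a ha
    by_contra! hcon
    rw [Finset.card_eq_zero] at h0
    exact Finset.notMem_empty a (h0 ▸ Finset.mem_filter.2 ⟨ha, hcon⟩)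

/-! ### Rounding a distribution to integer counts -/

/-- A probability vector scaled by `m` can be rounded to integer counts of total `m`, each within
one of its target: take integer parts and hand out the missing units to distinct letters. -/
theorem exists_round {β : Type*} [Fintype β] {k : β → ℝ} (hk : IsProb k) (m : ℕ) :
    ∃ N : β → ℕ, ∑ w, N w = m ∧ ∀ w, |(N w : ℝ) - m * k w| ≤ 1 := by
  have hnn : ∀ w, 0 ≤ (m : ℝ) * k w := fun w => mul_nonneg (Nat.cast_nonneg _) (hk.1 w)
  have hsum : ∑ w, (m : ℝ) * k w = m := by rw [← Finset.mul_sum, hk.2, mul_one]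
  have hF : ∑ w, ⌊(m : ℝ) * k w⌋₊ ≤ m := by
    have : (∑ w, (⌊(m : ℝ) * k w⌋₊ : ℝ)) ≤ m := by
      exact (Finset.sum_le_sum fun w _ => Nat.floor_le (hnn w)).trans_eq hsum
    exact_mod_cast this
  have hG : m - ∑ w, ⌊(m : ℝ) * k w⌋₊ ≤ (Finset.univ : Finset β).card := by
    have : (m : ℝ) ≤ ∑ w, ((⌊(m : ℝ) * k w⌋₊ : ℝ) + 1) := by
      calc (m : ℝ) = ∑ w, (m : ℝ) * k w := hsum.symm
        _ ≤ _ := Finset.sum_le_sum fun w _ => (Nat.lt_floor_add_one _).le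
    rw [Finset.sum_add_distrib, Finset.sum_const, nsmul_eq_mul, mul_one] at this
    have h2 : m ≤ ∑ w, ⌊(m : ℝ) * k w⌋₊ + (Finset.univ : Finset β).card := by
      exact_mod_cast this
    omega
  obtain ⟨S, -, hS⟩ := Finset.exists_subset_card_eq hG
  refine ⟨fun w => ⌊(m : ℝ) * k w⌋₊ + if w ∈ S then 1 else 0, ?_, fun w => ?_⟩
  · rw [Finset.sum_add_distrib, Finset.sum_boole]
    rw [Nat.cast_id]
    have : (Finset.univ.filter fun w => w ∈ S) = S := by ext; simp
    rw [this, hS]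
    omega
  · have h1 := Nat.floor_le (hnn w)
    have h2 := Nat.lt_floor_add_one ((m : ℝ) * k w)
    rw [abs_le]
    dsimp only
    split_ifs <;> push_cast <;> constructor <;> linarith

/-! ### Joint types and conditional type classes -/

/-- The conditional type class of `f`: the words `g` such that the word of pairs `(g i, f i)` has
letter counts `J`. -/
noncomputable def condClass {α β : Type*} [Fintype α] [Fintype β] {n : ℕ} (J : β × α → ℕ)
    (f : Fin n → α) : Finset (Fin n → β) :=
  Finset.univ.filter fun g => (fun i => (g i, f i)) ∈ tclass n J

theorem cnt_snd {α β : Type*} [Fintype α] [Fintype β] {n : ℕ} (h : Fin n → β × α) (a : α) :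
    cnt (fun i => (h i).2) a = ∑ b, cnt h (b, a) := by
  unfold cnt
  rw [Finset.card_eq_sum_card_fiberwise (f := fun i => (h i).1) (t := Finset.univ)
    (fun _ _ => by simp)]
  refine Finset.sum_congr rfl fun b _ => congrArg Finset.card ?_
  ext i
  simp [Prod.ext_iff, and_comm]

theorem cnt_fst {α β : Type*} [Fintype α] [Fintype β] {n : ℕ} (h : Fin n → β × α) (b : β) :
    cnt (fun i => (h i).1) b = ∑ a, cnt h (b, a) := by
  unfold cnt
  rw [Finset.card_eq_sum_card_fiberwise (f := fun i => (h i).2) (t := Finset.univ)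
    (fun _ _ => by simp)]
  refine Finset.sum_congr rfl fun a _ => congrArg Finset.card ?_
  ext i
  simp [Prod.ext_iff]

/-- By permutation symmetry the size of the conditional type class depends only on the type of the
conditioning word. -/
theorem card_condClass_eq {α β : Type*} [Fintype α] [Fintype β] {n : ℕ} (J : β × α → ℕ)
    {f f' : Fin n → α} (h : ∀ a, cnt f a = cnt f' a) :
    (condClass J f).card = (condClass J f').card := by
  obtain ⟨σ, rfl⟩ := exists_perm h
  refine Finset.card_bij (fun g _ => g ∘ σ.symm) ?_ ?_ ?_
  · intro g hg
    simp only [condClass, Finset.mem_filter, Finset.mem_univ, true_and, mem_tclass] at hg ⊢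
    intro z
    rw [← hg z, ← cnt_comp_perm _ σ]
    congr 1
    funext i
    simp
  · intro g _ g' _ hgg
    exact σ.symm.surjective.injective_comp_right hgg
  · intro g hg
    refine ⟨g ∘ σ, ?_, by funext i; simp⟩
    simp only [condClass, Finset.mem_filter, Finset.mem_univ, true_and, mem_tclass] at hg ⊢
    intro z
    rw [← hg z, ← cnt_comp_perm (fun i => (g i, f' i)) σ]
    rfl

/-- Double counting of the joint type class along its second coordinate. -/
theorem card_tclass_eq_mul {α β : Type*} [Fintype α] [Fintype β] {n : ℕ} (J : β × α → ℕ)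
    {f : Fin n → α} (hf : ∀ a, cnt f a = ∑ b, J (b, a)) :
    (tclass n J).card = (tclass n fun a => ∑ b, J (b, a)).card * (condClass J f).card := by
  rw [Finset.card_eq_sum_card_fiberwise (f := fun h : Fin n → β × α => fun i => (h i).2)
    (t := tclass n fun a => ∑ b, J (b, a)), ← smul_eq_mul, ← Finset.sum_const]
  · refine Finset.sum_congr rfl fun f' hf' => ?_
    rw [mem_tclass] at hf'
    rw [card_condClass_eq J (f := f) (f' := f') fun a => by rw [hf, hf']]
    refine Finset.card_bij (fun h _ i => (h i).1) ?_ ?_ ?_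
    · intro h hh
      rw [Finset.mem_filter] at hh
      obtain ⟨h1, rfl⟩ := hh
      simpa [condClass] using h1
    · intro h hh h' hh' e
      rw [Finset.mem_filter] at hh hh'
      funext i
      exact Prod.ext (congrFun e i) (congrFun (hh.2.trans hh'.2.symm) i)
    · intro g hg
      simp only [condClass, Finset.mem_filter, Finset.mem_univ, true_and] at hg
      exact ⟨fun i => (g i, f' i), Finset.mem_filter.2 ⟨hg, rfl⟩, rfl⟩
  · intro h hh
    simp only [Finset.mem_coe, mem_tclass] at hh ⊢
    intro a
    rw [cnt_snd]
    exact Finset.sum_congr rfl fun b _ => hh _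

theorem condClass_subset {α β : Type*} [Fintype α] [Fintype β] {n : ℕ} (J : β × α → ℕ)
    (f : Fin n → α) : condClass J f ⊆ tclass n fun b => ∑ a, J (b, a) := by
  intro g hg
  simp only [condClass, Finset.mem_filter, Finset.mem_univ, true_and, mem_tclass] at hg ⊢
  intro b
  rw [← Finset.sum_congr rfl fun a _ => hg (b, a), ← cnt_fst]

/-- The covering lemma in terms of letter counts: with `J` the joint counts, the class of the
second marginal is covered by a codebook in the class of the first marginal whose size is the
exponential of `n` times the mutual information, up to a polynomial factor. -/
theorem covering_counts {α β : Type*} [Fintype α] [Fintype β] {n : ℕ} (hn : 0 < n)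
    (hα : Fintype.card α ≤ n) (J : β × α → ℕ) (hJ : ∑ z, J z = n) :
    ∃ C ⊆ tclass n (fun b => ∑ a, J (b, a)),
      (C.card : ℝ) ≤ ((n : ℝ) + 1) ^ (Fintype.card α * Fintype.card β + 4) *
        (2 : ℝ) ^ ((n : ℝ) * (ent (fun b => ((∑ a, J (b, a) : ℕ) : ℝ) / n) +
          ent (fun a => ((∑ b, J (b, a) : ℕ) : ℝ) / n) - ent fun z => (J z : ℝ) / n)) ∧
      ∀ f ∈ tclass n (fun a => ∑ b, J (b, a)), ∃ g ∈ C, (fun i => (g i, f i)) ∈ tclass n J := by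
  have hJ1 : ∑ b, ∑ a, J (b, a) = n := by rw [← hJ, Fintype.sum_prod_type]
  have hJ2 : ∑ a, ∑ b, J (b, a) = n := by rw [← hJ, Fintype.sum_prod_type_right]
  have uW := card_tclass_le_ent hn hJ1
  have uP := card_tclass_le_ent hn hJ2
  have lJ := ent_le_card_tclass hn hJ
  rw [mul_sub, mul_add, Real.rpow_sub (by norm_num), Real.rpow_add (by norm_num)]
  set EW := (2 : ℝ) ^ ((n : ℝ) * ent (fun b => ((∑ a, J (b, a) : ℕ) : ℝ) / n)) with hEW
  set EP := (2 : ℝ) ^ ((n : ℝ) * ent (fun a => ((∑ b, J (b, a) : ℕ) : ℝ) / n)) with hEP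
  set EJ := (2 : ℝ) ^ ((n : ℝ) * ent fun z => (J z : ℝ) / n) with hEJ
  have pW : 0 < EW := by positivity
  have pP : 0 < EP := by positivity
  have pJ : 0 < EJ := by positivity
  set L := ((n : ℝ) + 1) ^ (Fintype.card α * Fintype.card β) with hL
  rw [Fintype.card_prod, mul_comm (Fintype.card β), ← hL] at lJ
  have pL : 0 < L := by positivity
  set G := tclass n (fun b => ∑ a, J (b, a)) with hG
  set Q := L * (EW * EP / EJ) with hQdef
  have pQ : 0 < Q := by positivity
  -- Every conditional type class is at least a fraction `1 / Q` of the output type class.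
  have hdeg : ∀ f ∈ tclass n (fun a => ∑ b, J (b, a)),
      (G.card : ℝ) ≤ Q * (condClass J f).card := by
    intro f hf
    rw [mem_tclass] at hf
    have hm : ((tclass n J).card : ℝ) =
        (tclass n fun a => ∑ b, J (b, a)).card * (condClass J f).card := by
      exact_mod_cast card_tclass_eq_mul J hf
    rw [hm] at lJ
    have h1 : EJ ≤ L * (EP * (condClass J f).card) :=
      lJ.trans (mul_le_mul_of_nonneg_left (mul_le_mul_of_nonneg_right uP (by positivity)) pL.le)
    have h2 : Q * (condClass J f).card = EW * (L * (EP * (condClass J f).card)) / EJ := by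
      rw [hQdef]; field_simp
    rw [h2, le_div_iff₀ pJ]
    exact mul_le_mul uW h1 pJ.le pW.le
  have hGne : G.Nonempty := tclass_nonempty hJ1
  have hGpos : (0 : ℝ) < G.card := by exact_mod_cast hGne.card_pos
  have hQ1 : 1 ≤ Q := by
    obtain ⟨f, hf⟩ := tclass_nonempty hJ2
    have h1 : ((condClass J f).card : ℝ) ≤ G.card := by
      exact_mod_cast Finset.card_le_card (condClass_subset J f)
    have h2 := (hdeg f hf).trans (mul_le_mul_of_nonneg_left h1 pQ.le)
    by_contra! h3
    nlinarith
  have hA : ((tclass n fun a => ∑ b, J (b, a)).card : ℝ) ≤ Real.exp ((n : ℝ) * n) := by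
    calc ((tclass n fun a => ∑ b, J (b, a)).card : ℝ) ≤ (Fintype.card α : ℝ) ^ n := by
          have := Finset.card_le_univ (tclass n fun a => ∑ b, J (b, a))
          rw [Fintype.card_fun, Fintype.card_fin] at this
          exact_mod_cast this
      _ ≤ Real.exp n ^ n := by
          refine pow_le_pow_left₀ (by positivity) ?_ n
          have h1 : (Fintype.card α : ℝ) ≤ n := by exact_mod_cast hα
          linarith [Real.add_one_le_exp (n : ℝ)]
      _ = _ := by rw [← Real.exp_nat_mul]
  obtain ⟨C, hCG, hC, hcov⟩ := exists_cover (tclass n fun a => ∑ b, J (b, a)) G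
    (fun f g => (fun i => (g i, f i)) ∈ tclass n J) Q ((n : ℝ) * n) hQ1 hGne
    (fun f hf => by
      refine (hdeg f hf).trans_eq ?_
      congr 3
      ext g
      simp only [condClass, Finset.mem_filter, Finset.mem_univ, true_and]
      refine ⟨fun h => ⟨condClass_subset J f (by simpa [condClass] using h), h⟩, fun h => h.2⟩)
    (by positivity) hA
  refine ⟨C, hCG, hC.trans ?_, hcov⟩
  have hn0 : (0 : ℝ) ≤ n := Nat.cast_nonneg n
  have hpoly : (n : ℝ) * n + 1 ≤ ((n : ℝ) + 1) ^ 4 := by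
    nlinarith [mul_nonneg hn0 hn0, mul_nonneg hn0 (mul_nonneg hn0 hn0),
      mul_nonneg (mul_nonneg hn0 hn0) (mul_nonneg hn0 hn0)]
  calc Q * ((n : ℝ) * n) + 1 ≤ Q * ((n : ℝ) * n + 1) := by linarith
    _ ≤ Q * ((n : ℝ) + 1) ^ 4 := mul_le_mul_of_nonneg_left hpoly pQ.le
    _ = _ := by rw [pow_add, ← hL, hQdef]; ring

end Covering

end GW

open GW

/-- Lemma 4, type covering: for all `n` larger than a
constant depending only on `|𝒳|, |𝒴|, |𝒲|`, every joint type `P_{X̄Ȳ}` of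
length `n` and every test channel `P_{W|X̄Ȳ}` admit a conditional type
`P_{W̄|X̄Ȳ}` close to `P_{W|X̄Ȳ}` (within `1/(n P_{X̄Ȳ}(x,y))` on the support)
and a codebook `𝒞_n ⊆ 𝒯ⁿ_{W̄}` of size at most
`2^{n I(W̄ ∧ X̄,Ȳ) + (|𝒳||𝒴||𝒲|+4) log(n+1)}` covering the type class
`𝒯ⁿ_{X̄Ȳ}`. -/
theorem type_covering_lemma
    {𝒳 𝒴 𝒲 : Type*} [Fintype 𝒳] [Fintype 𝒴] [Fintype 𝒲] [Nonempty 𝒲] :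
    ∃ n0 : ℕ, ∀ n, n0 ≤ n →
      ∀ p : 𝒳 × 𝒴 → ℝ, IsJointType n p →
      ∀ K : 𝒳 × 𝒴 → 𝒲 → ℝ, IsChannel K →
      ∃ V : 𝒳 × 𝒴 → 𝒲 → ℝ, IsCondType n p V ∧
        (∀ a : 𝒳 × 𝒴, 0 < p a → ∀ w, 0 < K a w →
          |V a w - K a w| ≤ 1 / (n * p a)) ∧
        ∃ C : Finset (Fin n → 𝒲),
          (∀ g ∈ C, ∀ w, empDist g w = outW p V w) ∧
          (C.card : ℝ) ≤ (2 : ℝ) ^ ((n : ℝ) * mutInfoW p V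
            + ((Fintype.card 𝒳 * Fintype.card 𝒴 * Fintype.card 𝒲 : ℝ) + 4)
              * Real.logb 2 (n + 1)) ∧
          ∀ f : Fin n → 𝒳 × 𝒴, (∀ a, empDist f a = p a) →
            ∃ g ∈ C, ∀ z : 𝒲 × 𝒳 × 𝒴,
              empDist (fun i => (g i, f i)) z = jointW p V z := by
  refine ⟨Fintype.card (𝒳 × 𝒴) + 1, fun n hn p hp K hK => ?_⟩
  obtain ⟨f₀, hf₀⟩ := hp
  have hn0 : 0 < n := by omega
  have hnR : (0 : ℝ) < n := by exact_mod_cast hn0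
  choose N hNsum hN using fun a => exists_round (hK a) (cnt f₀ a)
  have hp' : ∀ a, p a = (cnt f₀ a : ℝ) / n := hf₀
  have hnp : ∀ a, (n : ℝ) * p a = cnt f₀ a := fun a => by rw [hp' a]; field_simp
  have hN0 : ∀ a, cnt f₀ a = 0 → ∀ w, N a w = 0 := fun a h w => by
    have := hNsum a
    rw [h, Finset.sum_eq_zero_iff] at this
    exact this w (Finset.mem_univ w)
  have hpos : ∀ a, 0 < p a → cnt f₀ a ≠ 0 := fun a ha h0 => by
    rw [hp' a, h0] at ha
    simp at ha
  -- Off the support of `p` the counts do not determine a row, and any distribution may be used.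
  set V : 𝒳 × 𝒴 → 𝒲 → ℝ := fun a w => if cnt f₀ a = 0 then K a w else (N a w : ℝ) / cnt f₀ a
    with hV
  set J : 𝒲 × 𝒳 × 𝒴 → ℕ := fun z => N z.2 z.1 with hJdef
  have hrow : ∀ a, ∑ w, J (w, a) = cnt f₀ a := hNsum
  have hJ : ∑ z, J z = n := by
    rw [Fintype.sum_prod_type_right, Finset.sum_congr rfl fun a _ => hrow a, sum_cnt]
  have hpV : ∀ a w, p a * V a w = (N a w : ℝ) / n := fun a w => by
    by_cases h : cnt f₀ a = 0
    · simp [hp' a, h, hN0 a h w]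
    · have h' : (cnt f₀ a : ℝ) ≠ 0 := by exact_mod_cast h
      simp only [hV, if_neg h, hp' a]
      field_simp
  have hjoint : jointW p V = fun z => (J z : ℝ) / n := by
    funext z
    exact hpV z.2 z.1
  have hout : outW p V = fun w => ((∑ a, J (w, a) : ℕ) : ℝ) / n := by
    funext w
    rw [outW, Finset.sum_congr rfl fun a _ => hpV a w, ← Finset.sum_div]
    push_cast
    rfl
  have hpe : p = fun a => ((∑ w, J (w, a) : ℕ) : ℝ) / n := by
    funext a
    rw [hrow, hp' a]
  refine ⟨V, ⟨fun a => ⟨fun w => ?_, ?_⟩, fun a ha w => ⟨N a w, ?_⟩⟩, fun a ha w _ => ?_, ?_⟩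
  · simp only [hV]
    split_ifs
    · exact (hK a).1 w
    · positivity
  · simp only [hV]
    split_ifs with h
    · exact (hK a).2
    · rw [← Finset.sum_div, ← Nat.cast_sum, hNsum a]
      exact div_self (by exact_mod_cast h)
  · simp only [hV, if_neg (hpos a ha), hnp a]
  · have h' : (0 : ℝ) < cnt f₀ a := by exact_mod_cast Nat.pos_of_ne_zero (hpos a ha)
    simp only [hV, if_neg (hpos a ha), hnp a]
    rw [show (N a w : ℝ) / cnt f₀ a - K a w = (N a w - cnt f₀ a * K a w) / cnt f₀ a by
      field_simp, abs_div, abs_of_pos h']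
    exact div_le_div_of_nonneg_right (hN a w) h'.le
  obtain ⟨C, hCG, hC, hcov⟩ := covering_counts hn0 (by omega) J hJ
  refine ⟨C, fun g hg w => ?_, hC.trans_eq ?_, fun f hf => ?_⟩
  · rw [hout, empDist_eq_iff hn0]
    exact mem_tclass.1 (hCG hg) w
  · rw [mutInfoW, hjoint, hout, ← hpe, Real.rpow_add (by norm_num), mul_comm]
    congr 1
    rw [mul_comm _ (Real.logb 2 _), Real.rpow_mul (by norm_num),
      Real.rpow_logb (by norm_num) (by norm_num) (by positivity), Fintype.card_prod,
      ← Real.rpow_natCast]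
    push_cast
    rfl
  · obtain ⟨g, hg, hgf⟩ := hcov f (mem_tclass.2 fun a => by
      rw [← empDist_eq_iff hn0, hf a, ← congrFun hpe a])
    refine ⟨g, hg, fun z => ?_⟩
    rw [hjoint, empDist_eq_iff hn0]
    exact mem_tclass.1 hgf z
end
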